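/- arXiv:1212.1392 — 2 statements merged into one kernel-verified Lean document; each statement's English description precedes it below -/
import Mathlib

section
/- Let p be a prime with p ≡ 1 (mod 4) and 2^{p−1} ≡ 1 (mod p^2), let q1 be a prime factor of p − 2 such that q1^{p−1} ≢ 1 (mod p^2), and let n be a composite number such that K = ℚ(√(4q1^2 − p^n)) ≠ ℚ(√(−1)). Then p splits in the imaginary quadratic field K, and for any prime ideal ℘ of the ring of integers of K lying over p, the order of the ideal class of ℘ in the ideal class group of K is exactly n. -/
/-!
Put `q = q₁` and `α = 2 q + √(4 q ^ 2 - p ^ n)`, an element of norm `p ^ n` and trace `4 q`. Since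
`p` is coprime to the trace, `(p) = (p, α) (p, conj α)` and `(p, α) ^ n = (α)`. If the class of
`(p, α)` had order less than `n`, then, the units of `K` being `±1`, `α = ± β ^ ℓ` with `ℓ` prime
and `β` of norm `N = p ^ m`, where `m ≥ 2` because `n` is composite.

The trace `β ^ ℓ + conj β ^ ℓ = ± 4 q` is a Dickson polynomial in `2 Re β`, equal to an odd
multiple of `2 Re β` and congruent to `(2 Re β) ^ ℓ` modulo `N`. Hence `|Re β|` is `2` or `2 q`.
The first is impossible modulo `p ^ 2`, as `p` is a Wieferich prime to base `2` but not to base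
`q`; in the second `p ^ (m - 1) ∣ ℓ - 1`, so that `N ≤ ℓ ^ 2` and `4 q = 2 |Re β| < 2 √N`.

It remains to show that `β ^ ℓ + conj β ^ ℓ` has absolute value larger than `2 √N`. Otherwise
`γ = - conj β / β` satisfies `γ ^ ℓ ≈ 1`, so its argument is extremely close to some `2 π i / ℓ`.
By the pigeonhole principle there is an exponential polynomial `F(ξ, θ)` with small integer
coefficients that is tiny on `θ = 2 π ξ`. At the points `ξ = (i r + ℓ t) / ℓ`, `θ = r arg γ` its
value is an algebraic number of bounded denominator that is too small to be nonzero, and a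
polynomial combination of powers of `γ` cannot vanish at so many points. The estimates need `ℓ`
and `N` to be large, which holds for `p ≥ 2 ^ 20`; the only Wieferich prime `p ≡ 1 (mod 4)` below
this bound is `1093`, for which `p - 2` is prime and `4 q ^ 2 < N` forces `m ≥ 3`.
-/

/-! ### Siegel's lemma for power series -/

theorem exists_int_coeffs_abs_sum_le {ι κ : Type*} [Fintype ι] [Fintype κ] {u : ι → κ → ℝ}
    {ε : ℝ} (hε : 0 < ε) {X : ℕ} {B : κ → ℕ} (hu : ∀ m, ∑ j, X * |u j m| ≤ B m * ε)
    (hB : ∏ m, (2 * B m + 1) < (X + 1) ^ Fintype.card ι) :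
    ∃ c : ι → ℤ, c ≠ 0 ∧ (∀ j, |c j| ≤ X) ∧ ∀ m, |∑ j, c j * u j m| ≤ ε := by
  classical
  let boxes (c : ι → Fin (X + 1)) (m : κ) : ℤ := ⌊(∑ j, (c j : ℕ) * u j m) / ε⌋
  let S : Finset (κ → ℤ) := Fintype.piFinset fun m => Finset.Icc (-(B m : ℤ)) (B m)
  have hmaps : ∀ c ∈ Finset.univ, boxes c ∈ S := fun c _ => by
    refine Fintype.mem_piFinset.mpr fun m => ?_
    have hsum : |(∑ j, (c j : ℕ) * u j m) / ε| ≤ B m := by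
      rw [abs_div, abs_of_pos hε, div_le_iff₀ hε]
      refine (Finset.abs_sum_le_sum_abs _ _).trans ((Finset.sum_le_sum fun j _ => ?_).trans (hu m))
      rw [abs_mul, Nat.abs_cast]
      gcongr
      exact Nat.lt_succ_iff.mp (c j).2
    rw [Finset.mem_Icc]
    exact ⟨Int.le_floor.mpr (mod_cast (abs_le.mp hsum).1),
      Int.floor_le_iff.mpr (by push_cast; linarith [(abs_le.mp hsum).2])⟩
  have hcard : S.card < (Finset.univ : Finset (ι → Fin (X + 1))).card := by
    rw [Fintype.card_piFinset, Finset.card_univ, Fintype.card_fun, Fintype.card_fin]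
    refine (Finset.prod_congr rfl fun m _ => ?_).trans_lt hB
    rw [Int.card_Icc]
    lia
  obtain ⟨c₁, -, c₂, -, hne, heq⟩ := Finset.exists_ne_map_eq_of_card_lt_of_maps_to hcard hmaps
  refine ⟨fun j => (c₁ j : ℤ) - c₂ j, fun h => hne (funext fun j => Fin.ext ?_), fun j => ?_,
    fun m => ?_⟩
  · have : (c₁ j : ℤ) - c₂ j = 0 := congrFun h j
    lia
  · have := (c₁ j).2
    have := (c₂ j).2
    rw [abs_le]
    lia
  · have h := Int.abs_sub_lt_one_of_floor_eq_floor (congrFun heq m)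
    rw [← sub_div, abs_div, abs_of_pos hε, div_lt_one hε, ← Finset.sum_sub_distrib] at h
    simpa [sub_mul] using h.le

theorem two_mul_sum_range_sub_add_one (n : ℕ) :
    2 * ∑ m ∈ Finset.range n, (n - m + 1) = n * (n + 3) := by
  have h : ∑ m ∈ Finset.range n, (n - m + 1) = ∑ m ∈ Finset.range n, (m + 2) := by
    rw [← Finset.sum_range_reflect]
    refine Finset.sum_congr rfl fun m hm => ?_
    have := Finset.mem_range.mp hm
    lia
  rw [h]
  clear h
  induction n with
  | zero => rfl
  | succ n ih => rw [Finset.sum_range_succ, mul_add, ih]; ring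

theorem prod_two_mul_pow_add_one_lt {E n x k : ℕ} (hE : 3 ≤ E) (hk : k ≠ 0)
    (hn : n * (n + 3) ≤ 2 * (k * x)) :
    ∏ m : Fin n, (2 * E ^ (n - (m : ℕ)) + 1) < (E ^ x + 1) ^ k := by
  calc ∏ m : Fin n, (2 * E ^ (n - (m : ℕ)) + 1)
    _ ≤ ∏ m : Fin n, E ^ (n - (m : ℕ) + 1) := by
        refine Finset.prod_le_prod' fun m _ => ?_
        have : 1 ≤ E ^ (n - (m : ℕ)) := Nat.one_le_pow _ _ (by lia)
        rw [pow_succ]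
        nlinarith
    _ = E ^ ∑ m ∈ Finset.range n, (n - m + 1) := by
        rw [Finset.prod_pow_eq_pow_sum, Fin.sum_univ_eq_sum_range (fun m => n - m + 1)]
    _ ≤ E ^ (x * k) :=
        Nat.pow_le_pow_right (by lia) (by linarith [two_mul_sum_range_sub_add_one n])
    _ = (E ^ x) ^ k := pow_mul _ _ _
    _ < (E ^ x + 1) ^ k := Nat.pow_lt_pow_left (Nat.lt_succ_self _) hk

theorem exists_int_coeffs_abs_sum_le_div_pow {ι : Type*} [Fintype ι] [Nonempty ι]
    {u : ι → ℕ → ℝ} {G : ℝ} (hG : 0 < G) {E x n : ℕ} (hE : 3 ≤ E)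
    (hu : ∀ j m, |u j m| ≤ G / E ^ m) (hn : n * (n + 3) ≤ 2 * (Fintype.card ι * x)) :
    ∃ c : ι → ℤ, c ≠ 0 ∧ (∀ j, |c j| ≤ E ^ x) ∧
      (∀ m, |∑ j, c j * u j m| ≤ Fintype.card ι * E ^ x * G / E ^ m) ∧
      ∀ m < n, |∑ j, c j * u j m| ≤ Fintype.card ι * E ^ x * G / E ^ n := by
  have hcard : 0 < Fintype.card ι := Fintype.card_pos
  set H : ℝ := Fintype.card ι * E ^ x * G with hH
  have hu' : ∀ m, ∑ j, (E : ℝ) ^ x * |u j m| ≤ H / E ^ m := fun m => by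
    refine (Finset.sum_le_card_nsmul _ _ ((E : ℝ) ^ x * (G / E ^ m)) fun j _ => ?_).trans_eq ?_
    · gcongr
      exact hu j m
    · rw [Finset.card_univ, nsmul_eq_mul, hH]
      ring
  have hbox : ∀ m : Fin n, ∑ j, (E ^ x : ℕ) * |u j m| ≤
      (E ^ (n - (m : ℕ)) : ℕ) * (H / E ^ n) := fun m => by
    have hpow : (E : ℝ) ^ n = E ^ (n - (m : ℕ)) * E ^ (m : ℕ) := by
      rw [← pow_add, Nat.sub_add_cancel m.2.le]
    rw [hpow, Nat.cast_pow, Nat.cast_pow, ← mul_div_assoc, mul_div_mul_left _ _ (by positivity)]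
    exact hu' m
  obtain ⟨c, hc0, hc, hsmall⟩ := exists_int_coeffs_abs_sum_le (by positivity) hbox
    (prod_two_mul_pow_add_one_lt hE hcard.ne' hn)
  refine ⟨c, hc0, mod_cast hc, fun m => ?_, fun m hm => hsmall ⟨m, hm⟩⟩
  refine (Finset.abs_sum_le_sum_abs _ _).trans ((Finset.sum_le_sum fun j _ => ?_).trans (hu' m))
  rw [abs_mul (c j : ℝ)]
  gcongr
  exact_mod_cast hc j

theorem norm_le_of_hasSum_of_norm_le_div_pow {F : Type*} [NormedAddCommGroup F]
    [CompleteSpace F] {v : ℕ → F} {s : F} (hs : HasSum v s) {E H : ℝ} (hE : 2 ≤ E)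
    (hv : ∀ m, ‖v m‖ ≤ H / E ^ m) {n : ℕ} (hvn : ∀ m < n, ‖v m‖ ≤ H / E ^ n) :
    ‖s‖ ≤ (n + 2) * (H / E ^ n) := by
  have hH : 0 ≤ H := by simpa using (norm_nonneg _).trans (hv 0)
  have htail : ‖∑' m, v (m + n)‖ ≤ 2 * (H / E ^ n) := by
    refine tsum_of_norm_bounded (hasSum_geometric_two' _) fun m => (hv (m + n)).trans ?_
    rw [mul_div_cancel_left₀ _ two_ne_zero, div_div, add_comm m, pow_add]
    gcongr
  have hhead : ‖∑ m ∈ Finset.range n, v m‖ ≤ n * (H / E ^ n) := by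
    simpa using norm_sum_le_of_le _ fun m hm => hvn m (Finset.mem_range.mp hm)
  rw [← hs.tsum_eq, ← hs.summable.sum_add_tsum_nat_add n]
  linarith [norm_add_le (∑ m ∈ Finset.range n, v m) (∑' m, v (m + n))]

theorem exists_int_coeffs_norm_sum_le {ι : Type*} [Fintype ι] [Nonempty ι] {u : ι → ℕ → ℝ}
    {G R : ℝ} (hG : 0 < G) (hR : 0 < R) (hu : ∀ j m, |u j m| * R ^ m ≤ G) {E x n : ℕ}
    (hE : 3 ≤ E) (hn : n * (n + 3) ≤ 2 * (Fintype.card ι * x)) :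
    ∃ c : ι → ℤ, c ≠ 0 ∧ (∀ j, |c j| ≤ E ^ x) ∧ ∀ (z : ℂ) (f : ι → ℂ), ‖z‖ * E ≤ R →
      (∀ j, HasSum (fun m => u j m * z ^ m) (f j)) →
      ‖∑ j, c j * f j‖ ≤ (n + 2) * (Fintype.card ι * E ^ x * G / E ^ n) := by
  have hE0 : (0 : ℝ) < E := by positivity
  obtain ⟨c, hc0, hc, hall, hsmall⟩ := exists_int_coeffs_abs_sum_le_div_pow
    (u := fun j m => u j m * (R / E) ^ m) hG hE (fun j m => by
      rw [abs_mul, abs_of_pos (by positivity : 0 < (R / E) ^ m), div_pow, mul_div_assoc']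
      gcongr
      exact hu j m) hn
  refine ⟨c, hc0, hc, fun z f hz hf => ?_⟩
  have hsum : HasSum (fun m => (∑ j, c j * u j m : ℝ) * z ^ m) (∑ j, c j * f j) := by
    refine (hasSum_sum fun j _ => (hf j).mul_left (c j : ℂ)).congr_fun fun m => ?_
    push_cast
    rw [Finset.sum_mul]
    simp only [mul_assoc]
  have hterm : ∀ m, ‖((∑ j, c j * u j m : ℝ) : ℂ) * z ^ m‖ ≤
      |∑ j, c j * (u j m * (R / E) ^ m)| := fun m => by
    simp only [← mul_assoc]
    rw [norm_mul, Complex.norm_real, norm_pow, ← Finset.sum_mul, abs_mul, Real.norm_eq_abs,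
      abs_of_pos (by positivity : 0 < (R / E) ^ m)]
    gcongr
    exact (le_div_iff₀ hE0).mpr hz
  exact norm_le_of_hasSum_of_norm_le_div_pow hsum (by exact_mod_cast (by lia : 2 ≤ E))
    (fun m => (hterm m).trans (hall m)) fun m hm => (hterm m).trans (hsmall m hm)

/-! ### Exponential polynomials vanishing along progressions -/

section

open Polynomial

theorem natDegree_det_le_sum {R n : Type*} [CommRing R] [Fintype n] [DecidableEq n]
    {M : Matrix n n R[X]} {d : n → ℕ} (hM : ∀ i k, (M i k).natDegree ≤ d k) :
    M.det.natDegree ≤ ∑ k, d k := by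
  rw [Matrix.det_apply]
  refine natDegree_sum_le_of_forall_le _ _ fun σ _ => (natDegree_smul_le _ _).trans ?_
  exact (natDegree_prod_le _ _).trans (Finset.sum_le_sum fun k _ => hM _ k)

theorem coeff_prod_sum_of_natDegree_le {R n : Type*} [CommRing R] {s : Finset n} {f : n → R[X]}
    {d : n → ℕ} (hf : ∀ k ∈ s, (f k).natDegree ≤ d k) :
    (∏ k ∈ s, f k).coeff (∑ k ∈ s, d k) = ∏ k ∈ s, (f k).coeff (d k) := by
  classical
  induction s using Finset.induction_on with
  | empty => simp
  | insert k s hk ih =>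
    have hs : ∀ l ∈ s, (f l).natDegree ≤ d l := fun l hl => hf l (Finset.mem_insert_of_mem hl)
    rw [Finset.prod_insert hk, Finset.sum_insert hk, Finset.prod_insert hk,
      coeff_mul_add_eq_of_natDegree_le (hf k (Finset.mem_insert_self k s))
        ((natDegree_prod_le s f).trans (Finset.sum_le_sum hs)), ih hs]

theorem coeff_det_sum {R n : Type*} [CommRing R] [Fintype n] [DecidableEq n]
    {M : Matrix n n R[X]} {d : n → ℕ} (hM : ∀ i k, (M i k).natDegree ≤ d k) :
    M.det.coeff (∑ k, d k) = (Matrix.of fun i k => (M i k).coeff (d k)).det := by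
  rw [Matrix.det_apply, Matrix.det_apply, finsetSum_coeff]
  refine Finset.sum_congr rfl fun σ _ => ?_
  rw [Units.smul_def, Units.smul_def, coeff_smul,
    coeff_prod_sum_of_natDegree_le fun k _ => hM (σ k) k]
  rfl

/-- The matrix with entries `R k (X + s i) * y k ^ i`: evaluating it at a point and multiplying
by a vector of exponentials gives the values of an exponential polynomial along a progression. -/
noncomputable def shiftedVandermonde {F : Type*} [CommRing F] {L : ℕ} (R : Fin L → F[X])
    (y s : Fin L → F) : Matrix (Fin L) (Fin L) F[X] :=
  Matrix.of fun i k => taylor (s i) (R k) * C (y k ^ (i : ℕ))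

theorem natDegree_shiftedVandermonde_le {F : Type*} [CommRing F] {L : ℕ}
    (R : Fin L → F[X]) (y s : Fin L → F) (i k : Fin L) :
    (shiftedVandermonde R y s i k).natDegree ≤ (R k).natDegree := by
  exact (natDegree_mul_C_le _ _).trans (natDegree_taylor _ _).le

theorem det_shiftedVandermonde_ne_zero {F : Type*} [CommRing F] [IsDomain F] {L : ℕ}
    {R : Fin L → F[X]} (hR : ∀ k, R k ≠ 0) {y : Fin L → F} (hy : Function.Injective y)
    (s : Fin L → F) : (shiftedVandermonde R y s).det ≠ 0 := by
  have hcoeff :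
      (Matrix.of fun i k => (shiftedVandermonde R y s i k).coeff (R k).natDegree) =
        Matrix.of fun i k => (R k).leadingCoeff * (Matrix.vandermonde y).transpose i k := by
    ext i k
    simp only [shiftedVandermonde, Matrix.of_apply, coeff_mul_C, coeff_taylor_natDegree,
      Matrix.transpose_apply, Matrix.vandermonde_apply]
  have hdet := coeff_det_sum (natDegree_shiftedVandermonde_le R y s)
  rw [hcoeff, Matrix.det_mul_row, Matrix.det_transpose] at hdet
  intro h
  rw [h, coeff_zero] at hdet
  exact mul_ne_zero (Finset.prod_ne_zero_iff.mpr fun k _ => leadingCoeff_ne_zero.mpr (hR k))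
    (Matrix.det_vandermonde_ne_zero_iff.mpr hy) hdet.symm

theorem exists_eq_zero_of_exponential_sums {F : Type*} [CommRing F] [IsDomain F] {L : ℕ}
    {R : Fin L → F[X]} {y s : Fin L → F} (hy : Function.Injective y) {D : ℕ}
    (hD : ∀ k, (R k).natDegree ≤ D) {S : Finset F} (hS : L * D < S.card)
    (h : ∀ w ∈ S, ∃ v : Fin L → F, v ≠ 0 ∧ ∀ i : Fin L,
      ∑ k, (R k).eval (w + s i) * y k ^ (i : ℕ) * v k = 0) :
    ∃ k, R k = 0 := by
  by_contra! hR
  have hdeg : (shiftedVandermonde R y s).det.natDegree < S.card := by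
    refine (natDegree_det_le_sum (natDegree_shiftedVandermonde_le R y s)).trans_lt ?_
    refine (Finset.sum_le_card_nsmul _ _ D fun k _ => hD k).trans_lt ?_
    rwa [Finset.card_univ, Fintype.card_fin, smul_eq_mul]
  refine det_shiftedVandermonde_ne_zero hR hy s
    (eq_zero_of_natDegree_lt_card_of_eval_eq_zero' _ S (fun w hw => ?_) hdeg)
  obtain ⟨v, hv0, hv⟩ := h w hw
  rw [← coe_evalRingHom, RingHom.map_det]
  refine Matrix.exists_mulVec_eq_zero_iff.mp ⟨v, hv0, funext fun i => ?_⟩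
  simpa [shiftedVandermonde, Matrix.mulVec, dotProduct, taylor_eval] using hv i

theorem eq_zero_of_exponential_sums {F ι : Type*} [CommRing F] [IsDomain F] [Fintype ι]
    {Q : ι → F[X]} {y : ι → F} (hy : Function.Injective y) (δ : F) {D : ℕ}
    (hD : ∀ b, (Q b).natDegree ≤ D) {S : Finset F} (hS : Fintype.card ι * D < S.card)
    (h : ∀ w ∈ S, ∃ v : ι → F, (∀ b, v b ≠ 0) ∧
      ∀ i < Fintype.card ι, ∑ b, (Q b).eval (w + δ * i) * y b ^ i * v b = 0) (b : ι) :
    Q b = 0 := by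
  classical
  by_contra hb
  let B := {b : ι // Q b ≠ 0}
  let e : Fin (Fintype.card B) ≃ B := (Fintype.equivFin B).symm
  have hcard : Fintype.card B ≤ Fintype.card ι := Fintype.card_subtype_le _
  have hvanish : ∀ w ∈ S, ∃ v : Fin (Fintype.card B) → F, v ≠ 0 ∧ ∀ i : Fin (Fintype.card B),
      ∑ k, (Q (e k)).eval (w + δ * (i : ℕ)) * y (e k) ^ (i : ℕ) * v k = 0 := fun w hw => by
    obtain ⟨v, hv0, hv⟩ := h w hw
    refine ⟨fun k => v (e k), fun h0 => hv0 b (by simpa using congrFun h0 (e.symm ⟨b, hb⟩)),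
      fun i => ?_⟩
    rw [← hv i (i.2.trans_le hcard)]
    refine Fintype.sum_of_injective (fun k => (e k : ι)) (Subtype.val_injective.comp e.injective)
      _ _ (fun b hb' => ?_) fun _ => rfl
    have hQb : Q b = 0 := by
      by_contra hne
      exact hb' ⟨e.symm ⟨b, hne⟩, by simp⟩
    rw [hQb, eval_zero, zero_mul, zero_mul]
  obtain ⟨k, hk⟩ := exists_eq_zero_of_exponential_sums (R := fun k => Q (e k))
    (fun k l hkl => e.injective (Subtype.ext (hy hkl))) (fun k => hD _)
    (hS.trans_le' (Nat.mul_le_mul_right D hcard)) hvanish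
  exact (e k).2 hk

end

/-! ### The auxiliary function -/

section

open Complex

/-- The Taylor coefficients at `0` of `z ↦ z ^ a * exp (ω * z)`. -/
noncomputable def powMulExpCoeff (ω : ℝ) (a m : ℕ) : ℝ :=
  if a ≤ m then ω ^ (m - a) / (m - a).factorial else 0

theorem hasSum_powMulExpCoeff (ω : ℝ) (a : ℕ) (z : ℂ) :
    HasSum (fun m => powMulExpCoeff ω a m * z ^ m) (z ^ a * exp (ω * z)) := by
  have hexp : HasSum (fun m : ℕ => (ω * z) ^ m / m.factorial) (exp (ω * z)) := by
    rw [exp_eq_exp_ℂ]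
    exact NormedSpace.expSeries_div_hasSum_exp (ω * z)
  rw [← Function.Injective.hasSum_iff (add_left_injective a)]
  · refine (hexp.mul_left (z ^ a)).congr_fun fun m => ?_
    simp only [Function.comp_apply, powMulExpCoeff, Nat.le_add_left, if_true, Nat.add_sub_cancel]
    push_cast
    ring
  · intro m hm
    have : ¬ a ≤ m := fun h => hm ⟨m - a, Nat.sub_add_cancel h⟩
    simp [powMulExpCoeff, this]

theorem abs_powMulExpCoeff_mul_pow_le (ω : ℝ) {R : ℝ} (hR : 0 ≤ R) (a m : ℕ) :
    |powMulExpCoeff ω a m| * R ^ m ≤ R ^ a * Real.exp (|ω| * R) := by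
  unfold powMulExpCoeff
  split_ifs with h
  · obtain ⟨k, rfl⟩ := Nat.exists_eq_add_of_le' h
    rw [Nat.add_sub_cancel, abs_div, abs_pow, Nat.abs_cast, pow_add, ← mul_assoc,
      div_mul_eq_mul_div, ← mul_pow, mul_comm]
    gcongr
    exact Real.pow_div_factorial_le_exp _ (by positivity) _
  · rw [abs_zero, zero_mul]
    positivity

/-- The integer `k - h`, so that `k` enumerates the frequencies `-h, …, h`. -/
def frequency (h : ℕ) (k : Fin (2 * h + 1)) : ℤ := (k : ℕ) - h

theorem abs_frequency_le (h : ℕ) (k : Fin (2 * h + 1)) : |frequency h k| ≤ h := by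
  have := k.2
  unfold frequency
  rw [abs_le]
  lia

theorem abs_frequency_cast_le (h : ℕ) (k : Fin (2 * h + 1)) : |(frequency h k : ℝ)| ≤ h := by
  exact_mod_cast abs_frequency_le h k

/-- The auxiliary function of the interpolation argument: a polynomial in `ξ * I` and
`exp (θ * I)` of degree less than `A` and frequency at most `h`. The factor `η ^ (a % 2)` makes
its coefficients lie in `ℤ[η * I]`, while its Taylor coefficients in `ξ * I` along `θ = 2 * π * ξ`
are real. -/
noncomputable def expForm {A h : ℕ} (c : Fin A × Fin (2 * h + 1) → ℤ) (η ξ θ : ℝ) : ℂ :=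
  ∑ j, c j * (η ^ ((j.1 : ℕ) % 2) * ((ξ * I) ^ (j.1 : ℕ) * exp (frequency h j.2 * (θ * I))))

theorem expForm_add_two_pi_mul {A h : ℕ} (c : Fin A × Fin (2 * h + 1) → ℤ) (η ξ θ : ℝ) (n : ℤ) :
    expForm c η ξ (θ + 2 * Real.pi * n) = expForm c η ξ θ := by
  refine Finset.sum_congr rfl fun j _ => ?_
  congr 3
  exact exp_eq_exp_iff_exists_int.mpr ⟨frequency h j.2 * n, by push_cast; ring⟩

/-- The value `8 ^ x * ‖expForm c η ξ (2 * π * ξ)‖` of the auxiliary function found by the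
pigeonhole principle is at most `Y * auxBound A h x Ξ` for `|ξ| ≤ Ξ` and `|η| ≤ Y`. -/
def auxBound (A h x Ξ : ℕ) : ℕ :=
  (2 * x + 2) * (A * (2 * h + 1)) * ((8 * Ξ) ^ A * 2 ^ (73 * (h * Ξ)))

theorem exp_sixteen_pi_mul_le (m : ℕ) : Real.exp (16 * Real.pi * m) ≤ 2 ^ (73 * m) := by
  rw [pow_mul, mul_comm, Real.exp_nat_mul]
  gcongr
  rw [← Real.le_log_iff_exp_le (by positivity), Real.log_pow]
  have := Real.log_two_gt_d9
  have := Real.pi_lt_d4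
  push_cast
  linarith

theorem pow_mod_two_le {η Y : ℝ} (hY : 1 ≤ Y) (hη : |η| ≤ Y) (a : ℕ) : |η| ^ (a % 2) ≤ Y := by
  rcases Nat.mod_two_eq_zero_or_one a with h | h <;> simpa [h]

theorem abs_pow_mul_powMulExpCoeff_mul_pow_le {η Y : ℝ} (hY : 1 ≤ Y) (hη : |η| ≤ Y) {h A Ξ : ℕ}
    (hΞ : 1 ≤ Ξ) (j : Fin A × Fin (2 * h + 1)) (m : ℕ) :
    |η ^ ((j.1 : ℕ) % 2) * powMulExpCoeff (2 * Real.pi * frequency h j.2) j.1 m| * (8 * Ξ) ^ m ≤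
      Y * ((8 * Ξ) ^ A * 2 ^ (73 * (h * Ξ))) := by
  have hΞ' : (1 : ℝ) ≤ Ξ := by exact_mod_cast hΞ
  have hexp : Real.exp (|2 * Real.pi * frequency h j.2| * (8 * Ξ)) ≤ 2 ^ (73 * (h * Ξ)) := by
    refine le_trans (Real.exp_le_exp.mpr ?_) (exp_sixteen_pi_mul_le (h * Ξ))
    rw [abs_mul, abs_of_pos Real.two_pi_pos]
    push_cast
    have := mul_le_mul_of_nonneg_left (abs_frequency_cast_le h j.2)
      (by positivity : 0 ≤ 16 * Real.pi * Ξ)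
    linarith
  rw [abs_mul, abs_pow, mul_assoc]
  refine mul_le_mul (pow_mod_two_le hY hη _) ?_ (by positivity) (by positivity)
  refine (abs_powMulExpCoeff_mul_pow_le _ (by positivity) _ m).trans
    (mul_le_mul (pow_le_pow_right₀ (by linarith) j.1.2.le) hexp (by positivity) (by positivity))

theorem exists_expForm_small {η : ℝ} {Y : ℕ} (hY : 1 ≤ Y) (hη : |η| ≤ Y) {h A x Ξ : ℕ}
    (hA : 0 < A) (hΞ : 1 ≤ Ξ) (hx : 2 * x + 3 ≤ A * (2 * h + 1)) :
    ∃ c : Fin A × Fin (2 * h + 1) → ℤ, c ≠ 0 ∧ (∀ j, |(c j : ℝ)| ≤ 8 ^ x) ∧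
      ∀ ξ : ℝ, |ξ| ≤ Ξ → ‖expForm c η ξ (2 * Real.pi * ξ)‖ * 8 ^ x ≤ Y * auxBound A h x Ξ := by
  have : Nonempty (Fin A × Fin (2 * h + 1)) := ⟨⟨⟨0, hA⟩, 0⟩⟩
  have hcard : Fintype.card (Fin A × Fin (2 * h + 1)) = A * (2 * h + 1) := by simp
  have hY' : (1 : ℝ) ≤ Y := by exact_mod_cast hY
  obtain ⟨c, hc0, hc, hsmall⟩ := exists_int_coeffs_norm_sum_le (E := 8) (x := x) (n := 2 * x)
    (by positivity) (by positivity) (abs_pow_mul_powMulExpCoeff_mul_pow_le hY' hη hΞ)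
    (by norm_num) (by rw [hcard]; nlinarith)
  refine ⟨c, hc0, fun j => by exact_mod_cast hc j, fun ξ hξ => ?_⟩
  have hbound := hsmall (ξ * I) (fun j => η ^ ((j.1 : ℕ) % 2) * ((ξ * I) ^ (j.1 : ℕ) *
    exp (frequency h j.2 * ((2 * Real.pi * ξ : ℝ) * I)))) ?_ fun j => ?_
  · rw [hcard] at hbound
    refine (mul_le_mul_of_nonneg_right hbound (by positivity)).trans_eq ?_
    simp only [auxBound]
    have h8 : (8 : ℝ) ^ (2 * x) = 8 ^ x * 8 ^ x := by rw [two_mul, pow_add]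
    push_cast
    rw [h8]
    field_simp
  · rw [norm_mul, norm_I, mul_one, norm_real, Real.norm_eq_abs, mul_comm]
    push_cast
    gcongr
  · have hangle : frequency h j.2 * ((2 * Real.pi * ξ : ℝ) * I) =
        (2 * Real.pi * frequency h j.2 : ℝ) * (ξ * I) := by
      push_cast
      ring
    rw [hangle]
    refine ((hasSum_powMulExpCoeff (2 * Real.pi * frequency h j.2) j.1 (ξ * I)).mul_left
      ((η : ℂ) ^ ((j.1 : ℕ) % 2))).congr_fun fun m => ?_
    rw [ofReal_mul, ofReal_pow, mul_assoc]

theorem norm_exp_mul_I_sub_exp_mul_I_le (s t : ℝ) : ‖exp (s * I) - exp (t * I)‖ ≤ |s - t| := by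
  have h : exp (s * I) - exp (t * I) = exp (t * I) * (exp (I * (s - t : ℝ)) - 1) := by
    rw [mul_sub, ← exp_add, mul_one]
    congr 2
    push_cast; ring
  rw [h, norm_mul, norm_exp_ofReal_mul_I, one_mul]
  exact Real.norm_exp_I_mul_ofReal_sub_one_le.trans (le_of_eq (Real.norm_eq_abs _))

theorem norm_expForm_sub_le {A h : ℕ} {c : Fin A × Fin (2 * h + 1) → ℤ} {C : ℝ}
    (hc : ∀ j, |(c j : ℝ)| ≤ C) {η Y : ℝ} (hY : 1 ≤ Y) (hη : |η| ≤ Y) {ξ Ξ : ℝ} (hΞ : 1 ≤ Ξ)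
    (hξ : |ξ| ≤ Ξ) (θ θ' : ℝ) :
    ‖expForm c η ξ θ - expForm c η ξ θ'‖ ≤
      A * (2 * h + 1) * (C * (Y * (Ξ ^ A * (h * |θ - θ'|)))) := by
  have hterm : ∀ j : Fin A × Fin (2 * h + 1),
      ‖c j * (η ^ ((j.1 : ℕ) % 2) * ((ξ * I) ^ (j.1 : ℕ) * exp (frequency h j.2 * (θ * I)))) -
        c j * (η ^ ((j.1 : ℕ) % 2) * ((ξ * I) ^ (j.1 : ℕ) * exp (frequency h j.2 * (θ' * I))))‖ ≤
      C * (Y * (Ξ ^ A * (h * |θ - θ'|))) := fun j => by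
    have hexp : ‖exp (frequency h j.2 * (θ * I)) - exp (frequency h j.2 * (θ' * I))‖ ≤
        h * |θ - θ'| := by
      have hle := norm_exp_mul_I_sub_exp_mul_I_le (frequency h j.2 * θ) (frequency h j.2 * θ')
      rw [← mul_sub, abs_mul] at hle
      push_cast at hle
      simp only [← mul_assoc]
      exact hle.trans (by gcongr; exact abs_frequency_cast_le h j.2)
    have hpow : ‖(ξ * I : ℂ) ^ (j.1 : ℕ)‖ ≤ Ξ ^ A := by
      rw [norm_pow, norm_mul, norm_I, mul_one, norm_real]
      exact (pow_le_pow_left₀ (norm_nonneg _) hξ _).trans (pow_le_pow_right₀ hΞ j.1.2.le)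
    have hη' : ‖(η : ℂ) ^ ((j.1 : ℕ) % 2)‖ ≤ Y := by
      rw [norm_pow, norm_real]
      exact pow_mod_two_le hY hη _
    have hC : 0 ≤ C := (abs_nonneg _).trans (hc j)
    rw [← mul_sub, ← mul_sub, ← mul_sub, norm_mul, norm_mul, norm_mul, norm_intCast]
    gcongr
    exact hc j
  rw [expForm, expForm, ← Finset.sum_sub_distrib]
  refine (norm_sum_le_of_le _ fun j _ => hterm j).trans_eq ?_
  simp

theorem norm_expForm_sub_le_auxBound {A h x ρ Ξ : ℕ} {c : Fin A × Fin (2 * h + 1) → ℤ}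
    (hc : ∀ j, |(c j : ℝ)| ≤ 8 ^ x) {η : ℝ} {Y : ℕ} (hY : 1 ≤ Y) (hη : |η| ≤ Y) (hΞ : 1 ≤ Ξ)
    (hρ : ρ ≤ 2 * Ξ) {ξ θ θ' ε : ℝ} (hξ : |ξ| ≤ Ξ) (hθ : |θ - θ'| ≤ ρ * ε) (hε : 0 ≤ ε) :
    ‖expForm c η ξ θ - expForm c η ξ θ'‖ ≤ Y * auxBound A h x Ξ * (8 ^ x * ε) := by
  have hhρ : (h * ρ : ℝ) ≤ 2 ^ (73 * (h * Ξ)) := by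
    have : h * ρ ≤ 2 ^ (73 * (h * Ξ)) := by
      calc h * ρ ≤ 73 * (h * Ξ) := by nlinarith [Nat.zero_le h]
        _ ≤ _ := Nat.lt_two_pow_self.le
    exact_mod_cast this
  have hΞ' : (Ξ : ℝ) ^ A ≤ (8 * Ξ) ^ A := by gcongr; linarith [(Nat.cast_nonneg Ξ : (0 : ℝ) ≤ Ξ)]
  calc ‖expForm c η ξ θ - expForm c η ξ θ'‖
    _ ≤ A * (2 * h + 1) * (8 ^ x * (Y * (Ξ ^ A * (h * (ρ * ε))))) :=
        (norm_expForm_sub_le hc (mod_cast hY) hη (mod_cast hΞ) hξ θ θ').trans (by gcongr)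
    _ = Y * (1 * (A * (2 * h + 1)) * (Ξ ^ A * (h * ρ))) * (8 ^ x * ε) := by ring
    _ ≤ Y * ((2 * x + 2) * (A * (2 * h + 1)) * ((8 * Ξ) ^ A * 2 ^ (73 * (h * Ξ)))) *
        (8 ^ x * ε) := by
        gcongr
        linarith [(Nat.cast_nonneg x : (0 : ℝ) ≤ x)]
    _ = Y * auxBound A h x Ξ * (8 ^ x * ε) := by simp only [auxBound]; push_cast; rfl

end

section

open Complex

theorem exists_add_mul_of_mem_adjoin {R A : Type*} [CommRing R] [CommRing A] [Algebra R A]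
    {x y : A} {d : R} (hy : y ^ 2 = algebraMap R A d) (hx : x ∈ Algebra.adjoin R {y}) :
    ∃ a b : R, x = algebraMap R A a + algebraMap R A b * y := by
  induction hx using Algebra.adjoin_induction with
  | mem x hx => exact ⟨0, 1, by simpa using hx⟩
  | algebraMap r => exact ⟨r, 0, by simp⟩
  | add x x' _ _ h h' =>
    obtain ⟨a, b, rfl⟩ := h
    obtain ⟨a', b', rfl⟩ := h'
    exact ⟨a + a', b + b', by simp only [map_add]; ring⟩
  | mul x x' _ _ h h' =>
    obtain ⟨a, b, rfl⟩ := h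
    obtain ⟨a', b', rfl⟩ := h'
    refine ⟨a * a' + b * b' * d, a * b' + b * a', ?_⟩
    simp only [map_add, map_mul]
    linear_combination algebraMap R A b * algebraMap R A b' * hy

theorem eq_zero_of_mem_adjoin_mul_I {η : ℝ} (hη : 1 ≤ |η|) {d : ℤ} (hd : η ^ 2 = d) {x : ℂ}
    (hx : x ∈ Algebra.adjoin ℤ {(η * I : ℂ)}) (hx1 : ‖x‖ < 1) : x = 0 := by
  have hsq : (η * I : ℂ) ^ 2 = algebraMap ℤ ℂ (-d) := by
    rw [mul_pow, I_sq, ← ofReal_pow, hd]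
    simp
  obtain ⟨g, f, rfl⟩ := exists_add_mul_of_mem_adjoin hsq hx
  have hre : |(g : ℝ)| < 1 := by simpa using (abs_re_le_norm _).trans_lt hx1
  have him : |f * η| < 1 := by simpa using (abs_im_le_norm _).trans_lt hx1
  have hf : |(f : ℝ)| < 1 := by
    rw [abs_mul] at him
    exact (le_mul_of_one_le_right (abs_nonneg _) hη).trans_lt him
  obtain rfl : g = 0 := Int.abs_lt_one_iff.mp (mod_cast hre)
  obtain rfl : f = 0 := Int.abs_lt_one_iff.mp (mod_cast hf)
  simp

theorem pow_mod_two_mul_I_pow_mem_adjoin (η : ℝ) (a : ℕ) :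
    (η : ℂ) ^ (a % 2) * I ^ a ∈ Algebra.adjoin ℤ {(η * I : ℂ)} := by
  have h : (η : ℂ) ^ (a % 2) * I ^ a = (-1) ^ (a / 2) * (η * I) ^ (a % 2) := by
    conv_lhs => rw [← Nat.mod_add_div a 2, pow_add, pow_mul, I_sq]
    rw [Nat.add_mul_mod_self_left, Nat.mod_mod, mul_pow]
    ring
  rw [h]
  exact mul_mem (pow_mem (neg_mem (one_mem _)) _)
    (pow_mem (Algebra.subset_adjoin (Set.mem_singleton _)) _)

theorem pow_mul_zpow_mem {G : Type*} [CommGroupWithZero G] {S : Submonoid G} {N γ : G} (hN : N ∈ S)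
    (hγ : N * γ ∈ S) (hγ' : N * γ⁻¹ ∈ S) {j : ℤ} {M : ℕ} (hj : |j| ≤ M) : N ^ M * γ ^ j ∈ S := by
  have hpow : ∀ {δ : G} {m : ℕ}, N * δ ∈ S → m ≤ M → N ^ M * δ ^ m ∈ S := fun {δ m} hδ hm => by
    rw [← Nat.sub_add_cancel hm, pow_add, mul_assoc, ← mul_pow]
    exact mul_mem (pow_mem hN _) (pow_mem hδ _)
  obtain ⟨m, rfl | rfl⟩ := j.eq_nat_or_neg
  · rw [zpow_natCast]
    exact hpow hγ (by simpa using hj)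
  · rw [zpow_neg, ← inv_zpow, zpow_natCast]
    exact hpow hγ' (by simpa using hj)

theorem natCast_pow_mul_expForm_mem_adjoin {A h : ℕ} (c : Fin A × Fin (2 * h + 1) → ℤ) {η τ : ℝ}
    {N ℓ : ℕ} (hℓ : 0 < ℓ)
    (hint : ∀ {j : ℤ} {M : ℕ}, |j| ≤ M →
      (N : ℂ) ^ M * exp (τ * I) ^ j ∈ Algebra.adjoin ℤ {(η * I : ℂ)})
    {r : ℤ} {ρ : ℕ} (hr : |r| ≤ ρ) (w : ℤ) :
    (N : ℂ) ^ (h * ρ) * ℓ ^ A * expForm c η (w / ℓ) (r * τ) ∈ Algebra.adjoin ℤ {(η * I : ℂ)} := by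
  rw [expForm, Finset.mul_sum]
  refine sum_mem fun j _ => ?_
  have hℓ' : (ℓ : ℂ) ≠ 0 := by exact_mod_cast hℓ.ne'
  have hexp : exp (frequency h j.2 * ((r * τ : ℝ) * I)) = exp (τ * I) ^ (frequency h j.2 * r) := by
    rw [← exp_int_mul]
    congr 1
    push_cast
    ring
  have hpow : (ℓ : ℂ) ^ A * (((w / ℓ : ℝ) : ℂ) * I) ^ (j.1 : ℕ) =
      (w ^ (j.1 : ℕ) * ℓ ^ (A - j.1 : ℕ) : ℤ) * I ^ (j.1 : ℕ) := by
    rw [← pow_sub_mul_pow (ℓ : ℂ) j.1.2.le, mul_assoc, ← mul_pow]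
    push_cast
    field_simp
    rw [mul_pow]
  have hfreq : |frequency h j.2 * r| ≤ (h * ρ : ℕ) := by
    rw [abs_mul]
    push_cast
    exact mul_le_mul (abs_frequency_le h j.2) hr (abs_nonneg _) (by positivity)
  have hterm : (N : ℂ) ^ (h * ρ) * ℓ ^ A * (c j * (η ^ ((j.1 : ℕ) % 2) *
      ((((w / ℓ : ℝ) : ℂ) * I) ^ (j.1 : ℕ) * exp (frequency h j.2 * ((r * τ : ℝ) * I))))) =
      (c j * (w ^ (j.1 : ℕ) * ℓ ^ (A - j.1 : ℕ)) : ℤ) * (η ^ ((j.1 : ℕ) % 2) * I ^ (j.1 : ℕ)) *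
        (N ^ (h * ρ) * exp (τ * I) ^ (frequency h j.2 * r)) := by
    rw [hexp]
    push_cast at hpow ⊢
    linear_combination (N ^ (h * ρ) * c j * η ^ ((j.1 : ℕ) % 2) *
      exp (τ * I) ^ (frequency h j.2 * r) : ℂ) * hpow
  rw [hterm]
  exact mul_mem (mul_mem (intCast_mem _ _) (pow_mod_two_mul_I_pow_mem_adjoin η _)) (hint hfreq)

theorem abs_mul_add_mul_div_le {i r t : ℤ} {ℓ ρ σ : ℕ} (hℓ : 0 < ℓ) (hi : 2 * |i| ≤ ℓ + 1)
    (hr : |r| ≤ ρ) (hρ : ρ ≤ ℓ) (ht : |t| ≤ σ) :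
    |((i * r + ℓ * t : ℤ) / ℓ : ℝ)| ≤ (ρ + 1) / 2 + σ := by
  have hℓ' : (0 : ℝ) < ℓ := by exact_mod_cast hℓ
  rw [abs_div, Nat.abs_cast, div_le_iff₀ hℓ', ← Int.cast_abs]
  have hi' : 2 * (|i| * |r|) ≤ (ρ + 1) * ℓ := by nlinarith [abs_nonneg r, abs_nonneg i]
  have hle : 2 * |i * r + ℓ * t| ≤ ((ρ + 1) + 2 * σ) * ℓ := by
    have hadd := abs_add_le (i * r) (ℓ * t)
    rw [abs_mul, abs_mul, Nat.abs_cast] at hadd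
    have := mul_le_mul_of_nonneg_left ht (Nat.cast_nonneg (α := ℤ) ℓ)
    linarith
  have : 2 * (|i * r + ℓ * t| : ℝ) ≤ ((ρ + 1) + 2 * σ) * ℓ := by exact_mod_cast hle
  push_cast at this ⊢
  linarith

theorem mul_norm_lt_one_of_norm_sub_le {E : Type*} [SeminormedAddCommGroup E] {u v : E}
    {D X P ε : ℝ} (hD : 0 ≤ D) (hP : 0 < P) (hε : 0 ≤ ε) (hDX : 4 * (D * X) ≤ P)
    (hv : ‖v‖ * P ≤ X) (huv : ‖u - v‖ ≤ X * (P * ε)) (hPε : P * P * ε ≤ 1) : D * ‖u‖ < 1 := by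
  have hDv : D * ‖v‖ ≤ 1 / 4 := by
    refine le_of_mul_le_mul_right ?_ hP
    linarith [mul_le_mul_of_nonneg_left hv hD]
  have hDuv : D * ‖u - v‖ ≤ 1 / 4 := by
    have := mul_le_mul_of_nonneg_right hDX (by positivity : 0 ≤ P * ε)
    linarith [mul_le_mul_of_nonneg_left huv hD]
  linarith [mul_le_mul_of_nonneg_left (norm_le_norm_sub_add u v) hD]

theorem exists_expForm_eq_zero {η τ ε : ℝ} {N ℓ : ℕ} (hN : 0 < N) (hℓ : 0 < ℓ) (hη : 1 ≤ |η|)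
    (hηℓ : |η| ≤ ℓ) {d : ℤ} (hd : η ^ 2 = d)
    (hint : ∀ {j : ℤ} {M : ℕ}, |j| ≤ M →
      (N : ℂ) ^ M * exp (τ * I) ^ j ∈ Algebra.adjoin ℤ {(η * I : ℂ)})
    {i : ℤ} (hτ : |τ - 2 * Real.pi * i / ℓ| ≤ ε) (hi : 2 * |i| ≤ ℓ + 1)
    {h ρ σ A x Ξ : ℕ} (hA : 0 < A) (hρ : ρ ≤ ℓ) (hΞ : ρ + 2 * σ + 2 ≤ 2 * Ξ)
    (hx : 2 * x + 3 ≤ A * (2 * h + 1))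
    (hx' : 4 * (N ^ (h * ρ) * ℓ ^ (A + 1) * auxBound A h x Ξ) ≤ 8 ^ x) (hε : 8 ^ (2 * x) * ε ≤ 1) :
    ∃ c : Fin A × Fin (2 * h + 1) → ℤ, c ≠ 0 ∧ ∀ r t : ℤ, |r| ≤ ρ → |t| ≤ σ →
      expForm c η ((i * r + ℓ * t : ℤ) / ℓ) (r * τ) = 0 := by
  obtain ⟨c, hc0, hc, hsmall⟩ := exists_expForm_small hℓ hηℓ hA (by lia : 1 ≤ Ξ) hx
  refine ⟨c, hc0, fun r t hr ht => ?_⟩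
  set ξ : ℝ := (i * r + ℓ * t : ℤ) / ℓ with hξ
  have hξΞ : |ξ| ≤ Ξ := by
    have : (ρ : ℝ) + 2 * σ + 2 ≤ 2 * Ξ := by exact_mod_cast hΞ
    linarith [abs_mul_add_mul_div_le hℓ hi hr hρ ht]
  have hperiod : expForm c η ξ (2 * Real.pi * ξ) =
      expForm c η ξ (r * (2 * Real.pi * i / ℓ)) := by
    rw [← expForm_add_two_pi_mul c η ξ (r * (2 * Real.pi * i / ℓ)) t, hξ]
    congr 1
    push_cast
    field_simp
  have hangle : |r * τ - r * (2 * Real.pi * i / ℓ)| ≤ ρ * ε := by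
    rw [← mul_sub, abs_mul]
    exact mul_le_mul (mod_cast hr) hτ (abs_nonneg _) (by positivity)
  have hclose := norm_expForm_sub_le_auxBound hc hℓ hηℓ (by lia : 1 ≤ Ξ)
    (by lia : ρ ≤ 2 * Ξ) hξΞ hangle ((abs_nonneg _).trans hτ)
  have hval := hsmall ξ hξΞ
  rw [hperiod] at hval
  have hbound : 4 * ((N : ℝ) ^ (h * ρ) * ℓ ^ A * (ℓ * auxBound A h x Ξ)) ≤ 8 ^ x := by
    rw [← mul_assoc _ (ℓ : ℝ), mul_assoc _ _ (ℓ : ℝ), ← pow_succ]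
    exact_mod_cast hx'
  have hlt : ‖(N : ℂ) ^ (h * ρ) * ℓ ^ A * expForm c η ξ (r * τ)‖ < 1 := by
    simpa using mul_norm_lt_one_of_norm_sub_le (by positivity) (by positivity)
      ((abs_nonneg _).trans hτ) hbound hval hclose (by rwa [← pow_add, ← two_mul])
  have hzero := eq_zero_of_mem_adjoin_mul_I hη hd
    (natCast_pow_mul_expForm_mem_adjoin c hℓ hint hr (i * r + ℓ * t)) hlt
  exact (mul_eq_zero.mp hzero).resolve_left (mod_cast (by positivity : N ^ (h * ρ) * ℓ ^ A ≠ 0))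

end

/-! ### A zero estimate for the auxiliary function -/

section

open Complex Polynomial

/-- The polynomial in `ξ` that multiplies `exp (frequency h k * (θ * I))` in `expForm c η ξ θ`. -/
noncomputable def expFormPoly {A h : ℕ} (c : Fin A × Fin (2 * h + 1) → ℤ) (η : ℝ)
    (k : Fin (2 * h + 1)) : ℂ[X] :=
  ∑ a : Fin A, C (c (a, k) * (η ^ ((a : ℕ) % 2) * I ^ (a : ℕ)) : ℂ) * X ^ (a : ℕ)

theorem expForm_eq_sum_eval {A h : ℕ} (c : Fin A × Fin (2 * h + 1) → ℤ) (η ξ θ : ℝ) :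
    expForm c η ξ θ = ∑ k, (expFormPoly c η k).eval (ξ : ℂ) * exp (θ * I) ^ frequency h k := by
  simp only [expForm, expFormPoly, Fintype.sum_prod_type_right, eval_finsetSum, eval_C_mul,
    eval_X_pow, Finset.sum_mul, exp_int_mul]
  refine Finset.sum_congr rfl fun k _ => Finset.sum_congr rfl fun a _ => ?_
  ring

theorem natDegree_expFormPoly_le {A h : ℕ} (c : Fin A × Fin (2 * h + 1) → ℤ) (η : ℝ)
    (k : Fin (2 * h + 1)) : (expFormPoly c η k).natDegree ≤ A - 1 :=
  natDegree_sum_le_of_forall_le _ _ fun a _ =>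
    (natDegree_C_mul_X_pow_le _ _).trans (Nat.le_sub_one_of_lt a.2)

theorem eq_zero_of_expFormPoly_eq_zero {A h : ℕ} {c : Fin A × Fin (2 * h + 1) → ℤ} {η : ℝ}
    (hη : η ≠ 0) (hc : ∀ k, expFormPoly c η k = 0) : c = 0 := by
  funext ⟨a, k⟩
  have hcoeff : (expFormPoly c η k).coeff a = c (a, k) * (η ^ ((a : ℕ) % 2) * I ^ (a : ℕ)) := by
    simp only [expFormPoly, finsetSum_coeff, coeff_C_mul_X_pow, Fin.val_inj, Finset.sum_ite_eq,
      Finset.mem_univ, if_true]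
  rw [hc k, coeff_zero, eq_comm, mul_eq_zero] at hcoeff
  simpa [hη, I_ne_zero] using hcoeff

theorem injOn_mul_add_mul {i m a b : ℤ} (hcop : IsCoprime i m) (hm : b - a < m) (s : Set ℤ) :
    Set.InjOn (fun z : ℤ × ℤ => i * z.1 + m * z.2) (Set.Icc a b ×ˢ s) := by
  rintro ⟨r, t⟩ ⟨⟨har, hrb⟩, -⟩ ⟨r', t'⟩ ⟨⟨har', hrb'⟩, -⟩ heq
  simp only at har hrb har' hrb' heq
  have hdvd : m ∣ r - r' :=
    hcop.symm.dvd_of_dvd_mul_left ⟨t' - t, by linear_combination heq⟩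
  have hr : r - r' = 0 := Int.eq_zero_of_abs_lt_dvd hdvd (by rw [abs_lt]; lia)
  have hm0 : m ≠ 0 := by lia
  have ht : m * t = m * t' := by linear_combination heq - i * hr
  rw [sub_eq_zero.mp hr, mul_left_cancel₀ hm0 ht]

theorem zpow_frequency_injective {G : Type*} [GroupWithZero G] {γ : G} (hγ : γ ≠ 0) {h : ℕ}
    (hroot : ∀ j : ℕ, 0 < j → j ≤ 2 * h → γ ^ j ≠ 1) :
    Function.Injective fun k => γ ^ frequency h k := by
  suffices hlt : ∀ k l : Fin (2 * h + 1), k < l → γ ^ frequency h k ≠ γ ^ frequency h l by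
    intro k l hkl
    rcases lt_trichotomy k l with hk | hk | hk
    exacts [absurd hkl (hlt k l hk), hk, absurd hkl.symm (hlt l k hk)]
  intro k l hkl heq
  refine hroot (l - k : ℕ) (Nat.sub_pos_of_lt hkl) (by lia) ?_
  have hsub : ((l - k : ℕ) : ℤ) = frequency h l - frequency h k := by
    rw [Nat.cast_sub hkl.le, frequency, frequency, sub_sub_sub_cancel_right]
  rw [← zpow_natCast, hsub, zpow_sub₀ hγ, heq, div_self (zpow_ne_zero _ hγ)]

theorem eq_zero_of_expForm_eq_zero {A h ρ σ ℓ : ℕ} {c : Fin A × Fin (2 * h + 1) → ℤ} {η τ : ℝ}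
    (hη : η ≠ 0) {i : ℤ} (hcop : IsCoprime i (ℓ : ℤ))
    (hroot : ∀ j : ℕ, 0 < j → j ≤ 2 * h → exp (τ * I) ^ j ≠ 1) (hρ : 2 * ρ < ℓ) (hA : 0 < A)
    (hcard : A * (2 * h + 1) ≤ (2 * ρ + 1) * (2 * σ + 1))
    (hc : ∀ r t : ℤ, |r| ≤ (ρ + h : ℕ) → |t| ≤ σ →
      expForm c η ((i * r + ℓ * t : ℤ) / ℓ) (r * τ) = 0) : c = 0 := by
  have hℓ : (ℓ : ℂ) ≠ 0 := by exact_mod_cast (by lia : ℓ ≠ 0)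
  let box : Finset (ℤ × ℤ) := Finset.Icc (-ρ - h : ℤ) (ρ - h) ×ˢ Finset.Icc (-σ : ℤ) σ
  let point : ℤ × ℤ → ℂ := fun z => (i * z.1 + ℓ * z.2 : ℤ) / ℓ
  have hinj : Set.InjOn point box := fun z hz z' hz' heq =>
    injOn_mul_add_mul hcop (b := ρ - h) (a := -ρ - h) (by lia) (Set.Icc (-σ : ℤ) σ)
      (by simpa [box] using hz) (by simpa [box] using hz')
      (Int.cast_injective ((div_left_inj' hℓ).mp heq))
  have hbox : box.card = (2 * ρ + 1) * (2 * σ + 1) := by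
    rw [Finset.card_product, Int.card_Icc, Int.card_Icc]
    congr 1 <;> lia
  refine eq_zero_of_expFormPoly_eq_zero hη (eq_zero_of_exponential_sums
    (zpow_frequency_injective (exp_ne_zero _) hroot) (i / ℓ) (natDegree_expFormPoly_le c η)
    (S := box.image point) ?_ fun w hw => ?_)
  · rw [Finset.card_image_of_injOn hinj, hbox, Fintype.card_fin]
    obtain ⟨B, rfl⟩ := Nat.exists_eq_add_of_le' hA
    rw [Nat.add_sub_cancel]
    nlinarith
  · obtain ⟨⟨r, t⟩, hrt, rfl⟩ := Finset.mem_image.mp hw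
    simp only [box, Finset.mem_product, Finset.mem_Icc] at hrt
    refine ⟨fun k => exp (r * τ * I) ^ frequency h k, fun k => zpow_ne_zero _ (exp_ne_zero _),
      fun m hm => ?_⟩
    rw [Fintype.card_fin] at hm
    have hzero := hc (r + m) t (by rw [abs_le]; push_cast; lia) (by rw [abs_le]; lia)
    rw [expForm_eq_sum_eval] at hzero
    rw [← hzero]
    refine Finset.sum_congr rfl fun k _ => ?_
    have hpoint : point (r, t) + i / ℓ * m = (((i * (r + m) + ℓ * t : ℤ) / ℓ : ℝ) : ℂ) := by
      simp only [point]
      push_cast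
      ring
    have hexp : exp (((r + m : ℤ) * τ : ℝ) * I) = exp (τ * I) ^ m * exp (r * τ * I) := by
      rw [← exp_nat_mul, ← exp_add]
      congr 1
      push_cast
      ring
    rw [hpoint, hexp, mul_zpow, mul_assoc, ← zpow_natCast, ← zpow_natCast, zpow_comm]

theorem exists_int_abs_sub_two_pi_le {θ ε : ℝ} (h : ‖exp (θ * I) - 1‖ ≤ 2 * ε) :
    ∃ i : ℤ, |θ - 2 * Real.pi * i| ≤ Real.pi * ε ∧ |i - θ / (2 * Real.pi)| ≤ 1 / 2 := by
  have hπ := Real.pi_pos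
  set i := round (θ / (2 * Real.pi)) with hi
  have hround : |θ / (2 * Real.pi) - i| ≤ 1 / 2 := abs_sub_round _
  refine ⟨i, ?_, abs_sub_comm (i : ℝ) _ ▸ hround⟩
  have hhalf : |(θ - 2 * Real.pi * i) / 2| ≤ Real.pi / 2 := by
    have : (θ - 2 * Real.pi * i) / 2 = Real.pi * (θ / (2 * Real.pi) - i) := by field_simp
    rw [this, abs_mul, abs_of_pos hπ]
    linarith [mul_le_mul_of_nonneg_left hround hπ.le]
  have hexp : exp (θ * I) = exp (I * (θ - 2 * Real.pi * i : ℝ)) :=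
    exp_eq_exp_iff_exists_int.mpr ⟨i, by push_cast; ring⟩
  rw [hexp, norm_exp_I_mul_ofReal_sub_one, norm_mul, Real.norm_eq_abs, Real.norm_eq_abs,
    abs_two] at h
  have hsin := (Real.mul_abs_le_abs_sin hhalf).trans (le_of_mul_le_mul_left h two_pos)
  rw [abs_div, abs_two, div_mul_div_cancel₀' two_ne_zero, div_le_iff₀ hπ] at hsin
  rwa [mul_comm Real.pi ε]

theorem exists_isCoprime_abs_sub_two_pi_mul_div_le {τ ε : ℝ} {ℓ : ℕ} (hℓ : ℓ.Prime) (hℓ5 : 5 ≤ ℓ)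
    (hτ : |τ| ≤ Real.pi) (hε : ε < |τ|) (h : ‖exp (τ * I) ^ ℓ - 1‖ ≤ 2 * ε) :
    ∃ i : ℤ, IsCoprime i (ℓ : ℤ) ∧ 2 * |i| ≤ ℓ + 1 ∧ |τ - 2 * Real.pi * i / ℓ| ≤ ε := by
  have hℓ0 : (0 : ℝ) < ℓ := by exact_mod_cast hℓ.pos
  have hℓ5' : (5 : ℝ) ≤ ℓ := by exact_mod_cast hℓ5
  have hε0 : 0 ≤ ε := by linarith [norm_nonneg (exp (τ * I) ^ ℓ - 1)]
  have hπ4 : Real.pi * ε ≤ 4 * ε := mul_le_mul_of_nonneg_right Real.pi_le_four hε0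
  have hpow : exp ((ℓ * τ : ℝ) * I) = exp (τ * I) ^ ℓ := by
    rw [← exp_nat_mul]
    push_cast
    ring_nf
  obtain ⟨i, hi, hround⟩ := exists_int_abs_sub_two_pi_le (hpow ▸ h)
  have hile : 2 * |i| ≤ ℓ + 1 := by
    have hdiv : |ℓ * τ / (2 * Real.pi)| ≤ ℓ / 2 := by
      rw [abs_div, abs_mul, Nat.abs_cast, abs_of_pos Real.two_pi_pos,
        div_le_iff₀ Real.two_pi_pos]
      linarith [mul_le_mul_of_nonneg_left hτ hℓ0.le]
    have : |(i : ℝ)| ≤ ℓ / 2 + 1 / 2 := by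
      linarith [abs_sub_abs_le_abs_sub (i : ℝ) (ℓ * τ / (2 * Real.pi))]
    have : 2 * |(i : ℝ)| ≤ ℓ + 1 := by linarith
    exact_mod_cast this
  have hi0 : i ≠ 0 := by
    rintro rfl
    rw [Int.cast_zero, mul_zero, sub_zero, abs_mul, Nat.abs_cast] at hi
    linarith [mul_le_mul_of_nonneg_right hℓ5' (abs_nonneg τ)]
  refine ⟨i, ?_, hile, ?_⟩
  · rw [isCoprime_comm, (Nat.prime_iff_prime_int.mp hℓ).coprime_iff_not_dvd]
    exact fun hdvd => hi0 (Int.eq_zero_of_abs_lt_dvd hdvd (by lia))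
  · have hdiv : τ - 2 * Real.pi * i / ℓ = (ℓ * τ - 2 * Real.pi * i) / ℓ := by field_simp
    rw [hdiv, abs_div, Nat.abs_cast, div_le_iff₀ hℓ0]
    linarith [mul_le_mul_of_nonneg_left hℓ5' hε0]

end

/-! ### A lower bound for `β ^ ℓ + conj β ^ ℓ` -/

section

open Complex ComplexConjugate

theorem norm_neg_conj_div_self_sub_one {β : ℂ} (hβ : β ≠ 0) :
    ‖-conj β / β - 1‖ = 2 * |β.re| / ‖β‖ := by
  have h : -conj β / β - 1 = -((2 * β.re : ℝ) : ℂ) / β := by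
    rw [← add_conj]
    field_simp
    ring
  rw [h, norm_div, norm_neg, norm_real, Real.norm_eq_abs, abs_mul, abs_two]

theorem norm_neg_conj_div_self_pow_sub_one {β : ℂ} (hβ : β ≠ 0) {n : ℕ} (hn : Odd n) :
    ‖(-conj β / β) ^ n - 1‖ = ‖β ^ n + conj β ^ n‖ / ‖β‖ ^ n := by
  have h : (-conj β / β) ^ n - 1 = -(β ^ n + conj β ^ n) / β ^ n := by
    rw [div_pow, hn.neg_pow]
    field_simp
    ring
  rw [h, norm_div, norm_neg, norm_pow]

theorem natCast_pow_mul_zpow_mem_adjoin_im_mul_I {β : ℂ} (hβ : β ≠ 0) {a : ℤ} {N : ℕ}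
    (hre : β.re = a) (hnorm : normSq β = N) {j : ℤ} {M : ℕ} (hj : |j| ≤ M) :
    (N : ℂ) ^ M * (-conj β / β) ^ j ∈ Algebra.adjoin ℤ {(β.im * I : ℂ)} := by
  set S := Algebra.adjoin ℤ {(β.im * I : ℂ)}
  have hN : (N : ℂ) = β * conj β := by rw [mul_conj, hnorm, ofReal_natCast]
  have hconj0 : conj β ≠ 0 := by simpa using hβ
  have him : (β.im * I : ℂ) ∈ S := Algebra.subset_adjoin (Set.mem_singleton _)
  have hβS : β ∈ S := by
    have : a + β.im * I = β := by simpa [hre] using re_add_im β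
    exact Set.mem_of_eq_of_mem this.symm (add_mem (intCast_mem S a) him)
  have hconjS : conj β ∈ S := by
    have : conj β = a - β.im * I := by apply Complex.ext <;> simp [hre]
    exact Set.mem_of_eq_of_mem this (sub_mem (intCast_mem S a) him)
  have hγS : (N : ℂ) * (-conj β / β) ∈ S := by
    convert neg_mem (pow_mem hconjS 2) using 1
    rw [hN]
    field_simp
  have hγS' : (N : ℂ) * (-conj β / β)⁻¹ ∈ S := by
    convert neg_mem (pow_mem hβS 2) using 1
    rw [hN, inv_div]
    field_simp
  exact pow_mul_zpow_mem (S := S.toSubmonoid) (natCast_mem S N) hγS hγS' hj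

theorem one_div_pow_lt_abs_arg {γ : ℂ} (hγ : ‖γ‖ = 1) {N k : ℕ} (hN : 0 < N) (hk : 1 ≤ k)
    (h : 2 / √N ≤ ‖γ - 1‖) : 1 / (N : ℝ) ^ k < |arg γ| := by
  have hN1 : (1 : ℝ) ≤ N := by exact_mod_cast hN
  have hsqrt : 0 < √(N : ℝ) := Real.sqrt_pos.mpr (by linarith)
  have harg : ‖γ - 1‖ ≤ |arg γ| := by
    have := norm_exp_mul_I_sub_exp_mul_I_le (arg γ) 0
    have hexp := norm_mul_exp_arg_mul_I γ
    rw [hγ, ofReal_one, one_mul] at hexp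
    simpa [hexp] using this
  calc 1 / (N : ℝ) ^ k ≤ 1 / √N := by
        refine one_div_le_one_div_of_le hsqrt ?_
        exact (Real.sqrt_le_self_iff.mpr (Or.inr hN1)).trans
          (le_self_pow₀ hN1 (Nat.one_le_iff_ne_zero.mp hk))
    _ < 2 / √N := by gcongr; norm_num
    _ ≤ |arg γ| := h.trans harg

theorem exists_isCoprime_abs_arg_sub_le {β : ℂ} {N ℓ : ℕ} (hN : 0 < N) (hre : 1 ≤ |β.re|)
    (hnorm : normSq β = N) (hℓ : ℓ.Prime) (hℓ5 : 5 ≤ ℓ) (h : ‖β ^ ℓ + conj β ^ ℓ‖ ≤ 2 * √N) :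
    ∃ i : ℤ, IsCoprime i (ℓ : ℤ) ∧ 2 * |i| ≤ ℓ + 1 ∧
      |arg (-conj β / β) - 2 * Real.pi * i / ℓ| ≤ 1 / N ^ ((ℓ - 1) / 2) := by
  have hN' : (0 : ℝ) < N := by exact_mod_cast hN
  have hβ : β ≠ 0 := normSq_pos.mp (hnorm ▸ hN')
  have hβnorm : ‖β‖ = √N := by rw [norm_def, hnorm]
  have hγ : ‖-conj β / β‖ = 1 := by
    rw [norm_div, norm_neg, norm_conj, div_self (norm_ne_zero_iff.mpr hβ)]
  have hodd : Odd ℓ := hℓ.odd_of_ne_two (by lia)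
  have hsqrt : √(N : ℝ) ^ ℓ = √N * N ^ ((ℓ - 1) / 2) := by
    obtain ⟨k, rfl⟩ := hodd
    have hk : (2 * k + 1 - 1) / 2 = k := by lia
    rw [hk, pow_succ', pow_mul, Real.sq_sqrt hN'.le]
  refine exists_isCoprime_abs_sub_two_pi_mul_div_le hℓ hℓ5 (abs_arg_le_pi _)
    (one_div_pow_lt_abs_arg hγ hN (by lia) ?_) ?_
  · rw [norm_neg_conj_div_self_sub_one hβ, hβnorm]
    gcongr
    exact le_mul_of_one_le_right zero_le_two hre
  · have hexp := norm_mul_exp_arg_mul_I (-conj β / β)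
    rw [hγ, ofReal_one, one_mul] at hexp
    rw [hexp, norm_neg_conj_div_self_pow_sub_one hβ hodd, hβnorm, hsqrt,
      div_le_iff₀ (by positivity)]
    refine h.trans_eq ?_
    field_simp

theorem lt_norm_pow_add_conj_pow {β : ℂ} {a : ℤ} {N ℓ : ℕ} (ha : a ≠ 0) (haN : a ^ 2 < N)
    (hre : β.re = a) (hnorm : normSq β = N) (hℓ : ℓ.Prime) (hℓ5 : 5 ≤ ℓ) (hNℓ : N ≤ ℓ ^ 2)
    {h ρ σ A x Ξ : ℕ} (hroot : ∀ j : ℕ, 0 < j → j ≤ 2 * h → (-conj β) ^ j ≠ β ^ j) (hh : 0 < h)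
    (hA : 0 < A) (hρ : 2 * ρ + h ≤ ℓ) (hΞ : ρ + h + 2 * σ + 2 ≤ 2 * Ξ)
    (hx : 2 * x + 3 ≤ A * (2 * h + 1)) (hcard : A * (2 * h + 1) ≤ (2 * ρ + 1) * (2 * σ + 1))
    (hx' : 4 * (N ^ (h * (ρ + h)) * ℓ ^ (A + 1) * auxBound A h x Ξ) ≤ 8 ^ x)
    (hxN : 8 ^ (2 * x) ≤ N ^ ((ℓ - 1) / 2)) :
    2 * √N < ‖β ^ ℓ + conj β ^ ℓ‖ := by
  by_contra! hsmall
  have hN : 0 < N := by exact_mod_cast (sq_nonneg a).trans_lt haN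
  have hβ : β ≠ 0 := normSq_pos.mp (hnorm ▸ mod_cast hN)
  have him : β.im ^ 2 = ((N - a ^ 2 : ℤ) : ℝ) := by
    rw [normSq_apply, hre] at hnorm
    push_cast
    linarith
  have him1 : 1 ≤ |β.im| := by
    rw [← one_le_sq_iff₀ (abs_nonneg _), sq_abs, him]
    exact_mod_cast (by lia : (1 : ℤ) ≤ N - a ^ 2)
  have himℓ : |β.im| ≤ ℓ := by
    refine abs_le_of_sq_le_sq (him.trans_le ?_) (by positivity)
    exact_mod_cast (by nlinarith [sq_nonneg a] : (N - a ^ 2 : ℤ) ≤ ℓ ^ 2)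
  have hexp : exp (arg (-conj β / β) * I) = -conj β / β := by
    have := norm_mul_exp_arg_mul_I (-conj β / β)
    rwa [norm_div, norm_neg, norm_conj, div_self (norm_ne_zero_iff.mpr hβ), ofReal_one,
      one_mul] at this
  have hre1 : 1 ≤ |β.re| := hre ▸ mod_cast Int.one_le_abs ha
  have hint : ∀ {j : ℤ} {M : ℕ}, |j| ≤ M → (N : ℂ) ^ M * exp (arg (-conj β / β) * I) ^ j ∈
      Algebra.adjoin ℤ {(β.im * I : ℂ)} := fun hj => by
    rw [hexp]
    exact natCast_pow_mul_zpow_mem_adjoin_im_mul_I hβ hre hnorm hj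
  have hε : 8 ^ (2 * x) * (1 / (N : ℝ) ^ ((ℓ - 1) / 2)) ≤ 1 := by
    rw [mul_one_div, div_le_one (by positivity)]
    exact_mod_cast hxN
  obtain ⟨i, hcop, hi, hτ⟩ := exists_isCoprime_abs_arg_sub_le hN hre1 hnorm hℓ hℓ5 hsmall
  obtain ⟨c, hc0, hc⟩ := exists_expForm_eq_zero hN hℓ.pos him1 himℓ him hint hτ hi hA
    (ρ := ρ + h) (by lia) hΞ hx hx' hε
  refine hc0 (eq_zero_of_expForm_eq_zero (abs_pos.mp (by linarith)) hcop (fun j hj0 hj h1 => ?_)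
    (by lia) hA hcard hc)
  rw [hexp, div_pow, div_eq_one_iff_eq (pow_ne_zero _ hβ)] at h1
  exact hroot j hj0 hj h1

end

section

open Complex ComplexConjugate

theorem sq_mul_add_le_two_pow {μ : ℕ} (hμ : 22 ≤ μ) :
    (μ * (2 * μ + 66) + 14) ^ 2 ≤ 2 ^ (μ + 2) := by
  induction μ, hμ using Nat.le_induction with
  | base => norm_num
  | succ m hm ih =>
    obtain ⟨u, rfl⟩ := Nat.exists_eq_add_of_le hm
    have hstep : 2 ^ (22 + u + 1 + 2) = 2 * 2 ^ (22 + u + 2) := by ring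
    refine le_trans ?_ ((Nat.mul_le_mul_left 2 ih).trans_eq hstep.symm)
    ring_nf
    nlinarith [Nat.zero_le u, Nat.zero_le (u ^ 2), Nat.zero_le (u ^ 3), Nat.zero_le (u ^ 4)]

theorem mul_mul_add_one_le_two_pow {μ : ℕ} (hμ : 22 ≤ μ) :
    50 * (2 * (μ * (2 * μ + 40)) + 1) * (2 * μ + 1) ≤ 2 ^ (μ + 2) := by
  induction μ, hμ using Nat.le_induction with
  | base => norm_num
  | succ m hm ih =>
    obtain ⟨u, rfl⟩ := Nat.exists_eq_add_of_le hm
    have hstep : 2 ^ (22 + u + 1 + 2) = 2 * 2 ^ (22 + u + 2) := by ring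
    refine le_trans ?_ ((Nat.mul_le_mul_left 2 ih).trans_eq hstep.symm)
    ring_nf
    nlinarith [Nat.zero_le u, Nat.zero_le (u ^ 2), Nat.zero_le (u ^ 3)]

theorem mul_mul_add_one_le_mul_two_pow {μ ν : ℕ} (hμ : 22 ≤ μ) (hν : 30 ≤ ν) :
    150 * (2 * (μ * (ν + 40)) + 1) * (2 * μ + 1) ≤ (ν - 1) * 2 ^ (μ - 2) := by
  obtain ⟨v, rfl⟩ := Nat.exists_eq_add_of_le hν
  induction μ, hμ using Nat.le_induction with
  | base =>
    norm_num
    lia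
  | succ m hm ih =>
    obtain ⟨u, rfl⟩ := Nat.exists_eq_add_of_le hm
    have hstep : 2 ^ (22 + u + 1 - 2) = 2 * 2 ^ (22 + u - 2) := by
      rw [← pow_succ']
      congr 1
      lia
    rw [hstep]
    refine le_trans ?_ ((Nat.mul_le_mul_left 2 ih).trans_eq (mul_left_comm _ _ _))
    ring_nf
    nlinarith [Nat.zero_le u, Nat.zero_le (u ^ 2), Nat.zero_le (u * v), Nat.zero_le (u ^ 2 * v)]

theorem sum_exponents_le_three_mul {μ ν σ x : ℕ} (hμ : 22 ≤ μ) (hν : 30 ≤ ν)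
    (hσ : σ = μ * (ν + 40)) (hx : x + 2 = 25 * (2 * σ + 1) * (2 * μ + 1)) :
    2 + ν * (μ * (51 * μ + 25)) + μ * (50 * (2 * σ + 1) + 1) + (2 * μ + 4) +
      (μ + 8) * (25 * (2 * σ + 1)) + 73 * (μ * (σ + 26 * μ + 14)) ≤ 3 * x := by
  suffices h : 2 + ν * (μ * (51 * μ + 25)) + μ * (50 * (2 * σ + 1) + 1) + (2 * μ + 4) +
      (μ + 8) * (25 * (2 * σ + 1)) + 73 * (μ * (σ + 26 * μ + 14)) + 6 ≤ 3 * (x + 2) by lia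
  rw [hx, hσ]
  obtain ⟨u, rfl⟩ := Nat.exists_eq_add_of_le hμ
  obtain ⟨v, rfl⟩ := Nat.exists_eq_add_of_le hν
  ring_nf
  nlinarith [Nat.zero_le u, Nat.zero_le (u ^ 2), Nat.zero_le (u * v), Nat.zero_le (u ^ 2 * v),
    Nat.zero_le v]

theorem eight_pow_le_pow {μ ν σ x N ℓ : ℕ} (hμ : 22 ≤ μ) (hν : 30 ≤ ν)
    (hσ : σ = μ * (ν + 40)) (hx : x + 2 = 25 * (2 * σ + 1) * (2 * μ + 1))
    (hN : 2 ^ (ν - 1) ≤ N) (hℓ : 2 ^ (μ - 1) < ℓ) :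
    8 ^ (2 * x) ≤ N ^ ((ℓ - 1) / 2) := by
  have hk : 2 ^ (μ - 2) ≤ (ℓ - 1) / 2 := by
    have : 2 ^ (μ - 1) = 2 * 2 ^ (μ - 2) := by
      rw [← pow_succ']
      congr 1
      lia
    lia
  have hexp : 3 * (2 * x) ≤ (ν - 1) * 2 ^ (μ - 2) := by
    have := mul_mul_add_one_le_mul_two_pow hμ hν
    rw [← hσ] at this
    lia
  calc 8 ^ (2 * x) = 2 ^ (3 * (2 * x)) := by rw [pow_mul 2 3]; norm_num
    _ ≤ 2 ^ ((ν - 1) * 2 ^ (μ - 2)) := Nat.pow_le_pow_right two_pos hexp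
    _ ≤ 2 ^ ((ν - 1) * ((ℓ - 1) / 2)) := Nat.pow_le_pow_right two_pos (Nat.mul_le_mul_left _ hk)
    _ = (2 ^ (ν - 1)) ^ ((ℓ - 1) / 2) := pow_mul _ _ _
    _ ≤ N ^ ((ℓ - 1) / 2) := Nat.pow_le_pow_left hN _

theorem auxBound_le_two_pow {μ σ x : ℕ} (hμ : 22 ≤ μ) (hσ : σ ≤ μ * (2 * μ + 40))
    (hx : x + 2 = 25 * (2 * σ + 1) * (2 * μ + 1)) :
    auxBound (50 * (2 * σ + 1)) μ x (σ + 26 * μ + 14) ≤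
      2 ^ (2 * μ + 4 + (μ + 8) * (25 * (2 * σ + 1)) + 73 * (μ * (σ + 26 * μ + 14))) := by
  have hcard : 50 * (2 * σ + 1) * (2 * μ + 1) ≤ 2 ^ (μ + 2) :=
    le_trans (by gcongr) (mul_mul_add_one_le_two_pow hμ)
  have hfst : (2 * x + 2) * (50 * (2 * σ + 1) * (2 * μ + 1)) ≤ 2 ^ (2 * μ + 4) :=
    calc (2 * x + 2) * (50 * (2 * σ + 1) * (2 * μ + 1)) ≤ 2 ^ (μ + 2) * 2 ^ (μ + 2) :=
          Nat.mul_le_mul (by lia) hcard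
      _ = 2 ^ (2 * μ + 4) := by rw [← pow_add]; congr 1; ring
  have hsq : (8 * (σ + 26 * μ + 14)) ^ 2 ≤ 2 ^ (μ + 8) :=
    calc (8 * (σ + 26 * μ + 14)) ^ 2 = 2 ^ 6 * (σ + 26 * μ + 14) ^ 2 := by ring
      _ ≤ 2 ^ 6 * (μ * (2 * μ + 66) + 14) ^ 2 := by gcongr; linarith
      _ ≤ 2 ^ 6 * 2 ^ (μ + 2) := Nat.mul_le_mul_left _ (sq_mul_add_le_two_pow hμ)
      _ = 2 ^ (μ + 8) := by rw [← pow_add]; congr 1; ring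
  have hsnd : (8 * (σ + 26 * μ + 14)) ^ (50 * (2 * σ + 1)) ≤
      2 ^ ((μ + 8) * (25 * (2 * σ + 1))) := by
    have : 50 * (2 * σ + 1) = 2 * (25 * (2 * σ + 1)) := by ring
    rw [this, pow_mul, pow_mul 2]
    exact Nat.pow_le_pow_left hsq _
  rw [auxBound, pow_add, pow_add]
  exact (Nat.mul_le_mul hfst (Nat.mul_le_mul_right _ hsnd)).trans_eq (mul_assoc _ _ _).symm

theorem four_mul_pow_mul_auxBound_le {μ ν σ x N ℓ : ℕ} (hμ : 22 ≤ μ) (hν : 30 ≤ ν)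
    (hνμ : ν ≤ 2 * μ) (hσ : σ = μ * (ν + 40)) (hx : x + 2 = 25 * (2 * σ + 1) * (2 * μ + 1))
    (hN : N ≤ 2 ^ ν) (hℓ : ℓ ≤ 2 ^ μ) :
    4 * (N ^ (μ * (50 * μ + 25 + μ)) * ℓ ^ (50 * (2 * σ + 1) + 1) *
      auxBound (50 * (2 * σ + 1)) μ x (σ + 26 * μ + 14)) ≤ 8 ^ x := by
  have hσ' : σ ≤ μ * (2 * μ + 40) := by rw [hσ]; gcongr
  calc 4 * (N ^ (μ * (50 * μ + 25 + μ)) * ℓ ^ (50 * (2 * σ + 1) + 1) *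
        auxBound (50 * (2 * σ + 1)) μ x (σ + 26 * μ + 14))
      ≤ 2 ^ 2 * ((2 ^ ν) ^ (μ * (50 * μ + 25 + μ)) * (2 ^ μ) ^ (50 * (2 * σ + 1) + 1) *
        2 ^ (2 * μ + 4 + (μ + 8) * (25 * (2 * σ + 1)) + 73 * (μ * (σ + 26 * μ + 14)))) := by
        gcongr
        · norm_num
        · exact auxBound_le_two_pow hμ hσ' hx
    _ = 2 ^ (2 + ν * (μ * (51 * μ + 25)) + μ * (50 * (2 * σ + 1) + 1) + (2 * μ + 4) +
        (μ + 8) * (25 * (2 * σ + 1)) + 73 * (μ * (σ + 26 * μ + 14))) := by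
        simp only [← pow_add, ← pow_mul]
        congr 1
        ring
    _ ≤ 2 ^ (3 * x) := Nat.pow_le_pow_right two_pos (sum_exponents_le_three_mul hμ hν hσ hx)
    _ = 8 ^ x := by rw [pow_mul]; norm_num

theorem lt_norm_pow_add_conj_pow_of_two_pow_le {β : ℂ} {a : ℤ} {N ℓ : ℕ} (ha : a ≠ 0)
    (haN : a ^ 2 < N) (hre : β.re = a) (hnorm : normSq β = N) (hℓ : ℓ.Prime)
    (hroot : ∀ j : ℕ, 0 < j → (-conj β) ^ j ≠ β ^ j) (hℓ' : 2 ^ 21 ≤ ℓ) (hN' : 2 ^ 29 ≤ N)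
    (hNℓ : N ≤ ℓ ^ 2) : 2 * √N < ‖β ^ ℓ + conj β ^ ℓ‖ := by
  -- All parameters are polynomials in the bit lengths `μ` of `ℓ` and `ν` of `N`, so that the
  -- required inequalities compare exponents of `2`.
  obtain ⟨μ, hμdef⟩ : ∃ μ, ℓ.size = μ := ⟨_, rfl⟩
  obtain ⟨ν, hνdef⟩ : ∃ ν, N.size = ν := ⟨_, rfl⟩
  have hμ : 22 ≤ μ := hμdef ▸ Nat.lt_size.mpr hℓ'
  have hν : 30 ≤ ν := hνdef ▸ Nat.lt_size.mpr hN'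
  have hℓlt : ℓ < 2 ^ μ := hμdef ▸ Nat.lt_size_self ℓ
  have hNlt : N < 2 ^ ν := hνdef ▸ Nat.lt_size_self N
  have hℓge : 2 ^ (μ - 1) ≤ ℓ := Nat.lt_size.mp (by lia)
  have hNge : 2 ^ (ν - 1) ≤ N := Nat.lt_size.mp (by lia)
  have hℓne : ℓ ≠ 2 ^ (μ - 1) := fun h =>
    Nat.Prime.not_prime_pow (by lia : 2 ≤ μ - 1) (h ▸ hℓ)
  have hνμ : ν ≤ 2 * μ := by
    rw [← hνdef, Nat.size_le]
    calc N ≤ ℓ ^ 2 := hNℓ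
      _ < (2 ^ μ) ^ 2 := Nat.pow_lt_pow_left hℓlt two_ne_zero
      _ = 2 ^ (2 * μ) := by rw [← pow_mul, mul_comm]
  obtain ⟨σ, hσ⟩ : ∃ σ, σ = μ * (ν + 40) := ⟨_, rfl⟩
  obtain ⟨x, hx⟩ : ∃ x, x + 2 = 25 * (2 * σ + 1) * (2 * μ + 1) :=
    ⟨25 * (2 * σ + 1) * (2 * μ + 1) - 2, Nat.sub_add_cancel (by nlinarith [Nat.zero_le σ])⟩
  have hρ : 2 * (50 * μ + 25) + μ ≤ ℓ := by
    have : 50 * (2 * (22 * 40) + 1) * (2 * μ + 1) ≤ 2 ^ (μ + 2) :=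
      le_trans (by gcongr; lia) (mul_mul_add_one_le_two_pow hμ)
    have : 2 ^ (μ + 2) = 8 * 2 ^ (μ - 1) := by
      obtain ⟨k, rfl⟩ := Nat.exists_eq_add_of_le' (by lia : 1 ≤ μ)
      rw [Nat.add_sub_cancel]
      ring
    lia
  refine lt_norm_pow_add_conj_pow ha haN hre hnorm hℓ (by lia) hNℓ (h := μ) (ρ := 50 * μ + 25)
    (σ := σ) (A := 50 * (2 * σ + 1)) (x := x) (Ξ := σ + 26 * μ + 14) (fun j hj _ => hroot j hj)
    (by lia) (by lia) hρ (by lia) (by lia) (by linarith)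
    (four_mul_pow_mul_auxBound_le hμ hν hνμ hσ hx hNlt.le hℓlt.le)
    (eight_pow_le_pow hμ hν hσ hx hNge (by lia))

end

/-! ### Wieferich primes below `2 ^ 20` -/

/-- The residue of `2 ^ k` modulo `n`, through intermediate powers that stay below `2 ^ 1280` for
`k < 2 ^ 20` and `n < 2 ^ 40`, so that the kernel evaluates it quickly. -/
def twoPowMod (k n : ℕ) : ℕ :=
  (((2 ^ (k / 1024) % n) ^ 32 % n) ^ 32 * 2 ^ (k % 1024)) % n

theorem twoPowMod_eq (k n : ℕ) : twoPowMod k n = 2 ^ k % n := by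
  rw [twoPowMod, ← Nat.pow_mod, ← pow_mul, Nat.mul_mod, ← Nat.pow_mod, ← pow_mul, ← Nat.mul_mod,
    ← pow_add]
  congr 2
  lia

/-- The candidate `n` for a Wieferich prime is `1093`, is eliminated by an odd prime factor at
most `61` (the numeral is the product of these primes), or is no Wieferich number. -/
def WieferichCandidate (n : ℕ) : Prop :=
  n.gcd 58644190679703485491635 = 1 → twoPowMod (n - 1) (n ^ 2) = 1 → n = 1 ∨ n = 1093

instance : DecidablePred WieferichCandidate := fun _ => inferInstanceAs (Decidable (_ → _))

set_option maxRecDepth 100000 in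
theorem all_wieferichCandidate :
    ∀ i < 512, (List.range' (2048 * i + 1) 512 4).all WieferichCandidate := by
  decide +kernel

theorem le_one_of_wieferich_of_lt : ∀ n < 64, 2 ^ (n - 1) % n ^ 2 = 1 → n ≤ 1 := by
  decide

theorem eq_1093_of_wieferich {p : ℕ} (hp : p.Prime) (hmod : p % 4 = 1)
    (hw : 2 ^ (p - 1) ≡ 1 [MOD p ^ 2]) (hlt : p < 2 ^ 20) : p = 1093 := by
  have hres : 2 ^ (p - 1) % p ^ 2 = 1 :=
    Nat.mod_eq_of_modEq hw (Nat.one_lt_pow two_ne_zero hp.one_lt)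
  have hp64 : 64 ≤ p := by
    by_contra! h
    exact hp.one_lt.not_ge (le_one_of_wieferich_of_lt p h hres)
  have hcoprime : p.Coprime 58644190679703485491635 := by
    refine hp.coprime_iff_not_dvd.mpr fun h => ?_
    have : p ∣ Nat.factorial 61 := h.trans (by decide)
    have := hp.dvd_factorial.mp this
    lia
  have hmem : p ∈ List.range' (2048 * (p / 2048) + 1) 512 4 :=
    List.mem_range'.mpr ⟨p % 2048 / 4, by lia, by lia⟩
  have htest := List.all_eq_true.mp (all_wieferichCandidate (p / 2048) (by lia)) p hmem
  exact (of_decide_eq_true htest hcoprime ((twoPowMod_eq _ _).trans hres)).resolve_left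
    hp.one_lt.ne'

/-! ### The trace of `β ^ ℓ` -/

section Dickson

open Polynomial

theorem eval_dickson_one_add_two {R : Type*} [CommRing R] (P N : R) (j : ℕ) :
    (dickson 1 N (j + 2)).eval P =
      P * (dickson 1 N (j + 1)).eval P - N * (dickson 1 N j).eval P := by
  simp only [dickson_add_two, eval_sub, eval_mul, eval_X, eval_C]

theorem pow_add_pow_eq_eval_dickson_one {R : Type*} [CommRing R] (x y : R) :
    ∀ j, x ^ j + y ^ j = (dickson 1 (x * y) j).eval (x + y)
  | 0 => by simp only [pow_zero, dickson_zero, Nat.cast_one, eval_sub, eval_ofNat, eval_one]; ring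
  | 1 => by simp only [pow_one, dickson_one, eval_X]
  | j + 2 => by
    rw [eval_dickson_one_add_two, ← pow_add_pow_eq_eval_dickson_one x y (j + 1),
      ← pow_add_pow_eq_eval_dickson_one x y j]
    ring

theorem pow_add_pow_eq_intCast_eval_dickson_one {R : Type*} [CommRing R] {x y : R} {P N : ℤ}
    (hP : x + y = P) (hN : x * y = N) (j : ℕ) :
    x ^ j + y ^ j = ((dickson 1 N j).eval P : ℤ) := by
  rw [pow_add_pow_eq_eval_dickson_one, hP, hN, ← eq_intCast (Int.castRingHom R) N, ← map_dickson,
    eval_intCast_map, eq_intCast, Int.cast_id]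

theorem eval_dickson_one_modEq (P N : ℤ) {j : ℕ} (hj : j ≠ 0) :
    (dickson 1 N j).eval P ≡ P ^ j [ZMOD N] := by
  obtain ⟨j, rfl⟩ := Nat.exists_eq_succ_of_ne_zero hj
  induction j with
  | zero => simp only [Nat.succ_eq_add_one, zero_add, dickson_one, eval_X, pow_one, Int.ModEq.refl]
  | succ j ih =>
    have hrec : (dickson 1 N (j + 2)).eval P ≡ P * (dickson 1 N (j + 1)).eval P [ZMOD N] := by
      rw [Int.modEq_iff_dvd, eval_dickson_one_add_two]
      exact ⟨(dickson 1 N j).eval P, by ring⟩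
    rw [Nat.succ_eq_add_one, pow_succ']
    exact hrec.trans ((ih j.succ_ne_zero).mul_left P)

theorem exists_odd_eval_dickson_one_eq {P N : ℤ} (hP : Even P) (hN : Odd N) (i : ℕ) :
    ∃ c, Odd c ∧ (dickson 1 N (2 * i + 1)).eval P = P * c := by
  have hP2 : Even (P ^ 2) := hP.pow_of_ne_zero two_ne_zero
  induction i using Nat.twoStepInduction with
  | zero => exact ⟨1, odd_one, by simp only [mul_zero, zero_add, dickson_one, eval_X, mul_one]⟩
  | one =>
    refine ⟨P ^ 2 - 3 * N, hP2.sub_odd (Odd.mul ⟨1, rfl⟩ hN), ?_⟩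
    rw [mul_one, eval_dickson_one_add_two, eval_dickson_one_add_two, zero_add, dickson_zero,
      dickson_one, eval_sub, eval_X, Nat.cast_one, eval_one, eval_ofNat]
    ring
  | more i h₁ h₂ =>
    obtain ⟨c₁, hc₁, h₁⟩ := h₁
    obtain ⟨c₂, -, h₂⟩ := h₂
    refine ⟨(P ^ 2 - 2 * N) * c₂ - N ^ 2 * c₁,
      ((hP2.sub (even_two_mul N)).mul_right c₂).sub_odd (hN.pow.mul hc₁), ?_⟩
    have hstep : (dickson 1 N (2 * i + 1 + 4)).eval P =
        (P ^ 2 - 2 * N) * (dickson 1 N (2 * i + 1 + 2)).eval P -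
          N ^ 2 * (dickson 1 N (2 * i + 1)).eval P := by
      simp only [eval_dickson_one_add_two]
      ring
    rw [show 2 * (i + 1) + 1 = 2 * i + 1 + 2 by ring] at h₂
    rw [show 2 * (i + 2) + 1 = 2 * i + 1 + 4 by ring, hstep, h₁, h₂]
    ring

theorem natAbs_eq_of_sq_eval_dickson_one_eq {a N : ℤ} {q ℓ : ℕ} (hN : Odd N) (hq : q.Prime)
    (hℓ : Odd ℓ) (hV : (dickson 1 N ℓ).eval (2 * a) ^ 2 = (4 * q) ^ 2) :
    a.natAbs = 2 ∨ a.natAbs = 2 * q := by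
  obtain ⟨i, rfl⟩ := hℓ
  obtain ⟨c, hc, hVc⟩ := exists_odd_eval_dickson_one_eq (even_two_mul a) hN i
  have habs : (2 * a * c).natAbs = (4 * q : ℤ).natAbs := Int.natAbs_eq_iff_sq_eq.mpr (hVc ▸ hV)
  simp only [Int.natAbs_mul, Int.natAbs_natCast, Int.reduceAbs] at habs
  have hmul : a.natAbs * c.natAbs = 2 * q := by linarith
  have hcq : c.natAbs ∣ q :=
    (Nat.coprime_two_right.mpr (Int.natAbs_odd.mpr hc)).dvd_of_dvd_mul_left
      ⟨a.natAbs, by rw [← hmul, mul_comm]⟩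
  rcases (Nat.dvd_prime hq).mp hcq with h | h <;> rw [h] at hmul
  · exact .inr (by linarith)
  · exact .inl (Nat.eq_of_mul_eq_mul_right hq.pos hmul)

theorem sq_pow_natAbs_modEq {a : ℤ} {N v ℓ : ℕ} (hℓ : ℓ ≠ 0)
    (hV : (dickson 1 (N : ℤ) ℓ).eval (2 * a) ^ 2 = (v : ℤ) ^ 2) :
    ((2 * a.natAbs) ^ 2) ^ ℓ ≡ v ^ 2 [MOD N] := by
  rw [← Int.natCast_modEq_iff]
  push_cast
  rw [mul_pow, sq_abs, ← mul_pow, ← hV, pow_right_comm]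
  exact ((eval_dickson_one_modEq (2 * a) N hℓ).pow 2).symm

theorem neg_pow_ne_pow_of_not_dvd {R : Type*} [CommRing R] [CharZero R] {x y : R} {P N : ℤ}
    {p j : ℕ} (hp : p.Prime) (hP : x + y = P) (hN : x * y = N) (hpN : (p : ℤ) ∣ N)
    (hpP : ¬ (p : ℤ) ∣ P) (hj : j ≠ 0) : (-y) ^ j ≠ x ^ j := by
  intro h
  have hpZ : Prime (p : ℤ) := Nat.prime_iff_prime_int.mp hp
  have hsq : (dickson 1 N j).eval P ^ 2 = 2 * (1 + (-1) ^ j) * N ^ j := by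
    have : (((dickson 1 N j).eval P : ℤ) : R) ^ 2 = 2 * (1 + (-1) ^ j) * (N : R) ^ j := by
      have hsign : ((-1 : R) ^ j) ^ 2 = 1 := by rw [pow_right_comm, neg_one_sq, one_pow]
      rw [← pow_add_pow_eq_intCast_eval_dickson_one hP hN, ← hN, mul_pow, ← h, neg_pow y]
      linear_combination (-(y ^ j) ^ 2) * hsign
    exact_mod_cast this
  have hdvd : (p : ℤ) ∣ (dickson 1 N j).eval P :=
    hpZ.dvd_of_dvd_pow (hsq ▸ (hpN.trans (dvd_pow_self N hj)).mul_left _)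
  exact hpP (hpZ.dvd_of_dvd_pow
    (((eval_dickson_one_modEq P N hj).of_dvd hpN).dvd_iff.mp hdvd))

end Dickson

section Congruences

variable {p q : ℕ}

theorem modEq_one_pow_of_sq_modEq_one {x k : ℕ} (hp : p.Prime) (hp2 : p ≠ 2)
    (hx : x ≡ 1 [MOD p]) (hsq : x ^ 2 ≡ 1 [MOD p ^ k]) : x ≡ 1 [MOD p ^ k] := by
  rw [← Int.natCast_modEq_iff] at hx hsq ⊢
  have hmul : ((p ^ k : ℕ) : ℤ) ∣ (x - 1) * (x + 1) := by
    rw [show ((x : ℤ) - 1) * (x + 1) = (x ^ 2 : ℕ) - (1 : ℕ) by push_cast; ring]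
    exact hsq.symm.dvd
  have hcoprime : IsCoprime ((p ^ k : ℕ) : ℤ) (x + 1) := by
    rw [Nat.cast_pow]
    refine ((Nat.prime_iff_prime_int.mp hp).coprime_iff_not_dvd.mpr fun h => hp2 ?_).pow_left
    have h2 : (p : ℤ) ∣ 2 := by
      have := dvd_sub h hx.symm.dvd
      rwa [Nat.cast_one, show (x : ℤ) + 1 - (x - 1) = 2 by ring] at this
    exact (Nat.prime_dvd_prime_iff_eq hp Nat.prime_two).mp (by exact_mod_cast h2)
  exact (Int.modEq_iff_dvd.mpr (by exact_mod_cast hcoprime.dvd_of_dvd_mul_right hmul)).symm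

theorem pow_pred_modEq_one_of_sq_four_mul (hp : p.Prime) (hp2 : p ≠ 2) (hpq : ¬ p ∣ q)
    (hw : 2 ^ (p - 1) ≡ 1 [MOD p ^ 2]) (h : ((4 * q) ^ 2) ^ (p - 1) ≡ 1 [MOD p ^ 2]) :
    q ^ (p - 1) ≡ 1 [MOD p ^ 2] := by
  refine modEq_one_pow_of_sq_modEq_one hp hp2 ?_ ?_
  · rw [← Nat.totient_prime hp]
    exact Nat.ModEq.pow_totient (hp.coprime_iff_not_dvd.mpr hpq).symm
  · have hsplit : ((4 * q) ^ 2) ^ (p - 1) = (2 ^ (p - 1)) ^ 4 * (q ^ (p - 1)) ^ 2 := by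
      rw [mul_pow, mul_pow, show 4 ^ 2 = 2 ^ 4 by norm_num, pow_right_comm 2, pow_right_comm q]
    have := (hw.pow 4).mul_right ((q ^ (p - 1)) ^ 2)
    rw [← hsplit, one_pow, one_mul] at this
    exact this.symm.trans h

theorem pow_pred_dvd_of_pow_modEq_one {m k u : ℕ} (hp : p.Prime) (hp2 : p ≠ 2)
    (hu : ¬ u ^ (p - 1) ≡ 1 [MOD p ^ 2]) (h : u ^ k ≡ 1 [MOD p ^ m]) : p ^ (m - 1) ∣ k := by
  rcases eq_or_ne k 0 with rfl | hk
  · exact dvd_zero _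
  rcases eq_or_ne m 0 with rfl | hm
  · exact one_dvd k
  have : Fact p.Prime := ⟨hp⟩
  have hpu : ¬ p ∣ u := fun hd => hp.one_lt.ne' <| Nat.dvd_one.mp <|
    ((h.of_dvd (dvd_pow_self p hm)).dvd_iff dvd_rfl).mp (dvd_pow hd hk)
  have hpos : 0 < u ^ (p - 1) := Nat.pow_pos (Nat.pos_of_ne_zero fun h0 => hpu (h0 ▸ dvd_zero p))
  have hone : 1 < u ^ (p - 1) := by
    refine lt_of_le_of_ne hpos fun h1 => hu (h1 ▸ rfl)
  have hfermat : p ∣ u ^ (p - 1) - 1 := by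
    refine (Nat.modEq_iff_dvd' hpos).mp ?_
    rw [← Nat.totient_prime hp]
    exact (Nat.ModEq.pow_totient (hp.coprime_iff_not_dvd.mpr hpu).symm).symm
  have hval : padicValNat p (u ^ (p - 1) - 1) ≤ 1 := by
    by_contra! hlt
    exact hu ((Nat.modEq_iff_dvd' hpos).mpr
      ((padicValNat_dvd_iff_le (Nat.sub_pos_of_lt hone).ne').mpr hlt)).symm
  have hdvd : p ^ m ∣ (u ^ (p - 1)) ^ k - 1 := by
    refine (Nat.modEq_iff_dvd' (Nat.one_le_pow _ _ hpos)).mp ?_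
    rw [pow_right_comm]
    simpa only [one_pow] using (h.pow (p - 1)).symm
  have hlte := padicValNat.pow_sub_pow (hp.odd_of_ne_two hp2) hone hfermat
    (fun hd => hpu (hp.dvd_of_dvd_pow hd)) hk
  rw [padicValNat_dvd_iff_le (Nat.sub_pos_of_lt (Nat.one_lt_pow hk hone)).ne'] at hdvd
  rw [one_pow] at hlte
  exact (padicValNat_dvd_iff_le hk).mpr (by lia)

end Congruences

section

open Complex ComplexConjugate Polynomial

theorem ne_two_of_sq_eval_dickson_one_eq {a N : ℤ} {q ℓ : ℕ} (hN : Odd N)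
    (hV : (dickson 1 N ℓ).eval (2 * a) ^ 2 = (4 * q) ^ 2) : ℓ ≠ 2 := by
  rintro rfl
  obtain ⟨k, rfl⟩ := hN
  rw [eval_dickson_one_add_two, zero_add, dickson_zero, dickson_one, eval_sub, eval_X,
    Nat.cast_one, eval_one, eval_ofNat] at hV
  rcases sq_eq_sq_iff_eq_or_eq_neg.mp hV with h | h <;> ring_nf at h <;> lia

theorem natAbs_eq_and_pow_pred_dvd_of_sq_eval_dickson_one_eq {p q m ℓ : ℕ} {a : ℤ} (hp : p.Prime)
    (hp2 : p ≠ 2) (hq : q.Prime) (hpq : ¬ p ∣ q) (hw : 2 ^ (p - 1) ≡ 1 [MOD p ^ 2])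
    (hqw : ¬ q ^ (p - 1) ≡ 1 [MOD p ^ 2]) (hm : 2 ≤ m) (hℓ : Odd ℓ)
    (hV : (dickson 1 ((p ^ m : ℕ) : ℤ) ℓ).eval (2 * a) ^ 2 = (4 * q) ^ 2) :
    a.natAbs = 2 * q ∧ p ^ (m - 1) ∣ ℓ - 1 := by
  have hnw : ¬ ((4 * q) ^ 2) ^ (p - 1) ≡ 1 [MOD p ^ 2] := fun h =>
    hqw (pow_pred_modEq_one_of_sq_four_mul hp hp2 hpq hw h)
  have hpow : ((2 * a.natAbs) ^ 2) ^ ℓ ≡ (4 * q) ^ 2 [MOD p ^ m] :=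
    sq_pow_natAbs_modEq hℓ.pos.ne' (by exact_mod_cast hV)
  have hodd : Odd ((p ^ m : ℕ) : ℤ) := by exact_mod_cast (hp.odd_of_ne_two hp2).pow
  rcases natAbs_eq_of_sq_eval_dickson_one_eq hodd hq hℓ hV with ha | ha <;> rw [ha] at hpow
  · refine absurd ?_ hnw
    have hsplit : (((2 * 2) ^ 2) ^ ℓ) ^ (p - 1) = (2 ^ (p - 1)) ^ (4 * ℓ) := by
      simp only [Nat.reduceMul, show 4 ^ 2 = 2 ^ 4 by norm_num, ← pow_mul]
      ring_nf
    have := (hw.pow (4 * ℓ)).symm.trans (hsplit ▸ (hpow.of_dvd (pow_dvd_pow p hm)).pow (p - 1))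
    rw [one_pow] at this
    exact this.symm
  · refine ⟨ha, pow_pred_dvd_of_pow_modEq_one hp hp2 hnw
      (Nat.ModEq.cancel_left_of_coprime (c := (4 * q) ^ 2) ?_ ?_)⟩
    · have hp4 : p.Coprime 4 := ((Nat.coprime_primes hp Nat.prime_two).mpr hp2).pow_right 2
      exact ((hp4.mul_right (hp.coprime_iff_not_dvd.mpr hpq)).pow_right 2).pow_left m
    · rw [← pow_succ', Nat.sub_add_cancel hℓ.pos, mul_one]
      rwa [show 2 * (2 * q) = 4 * q by ring] at hpow

theorem natAbs_eq_and_two_mul_pow_pred_lt_of_sq_eval_dickson_one_eq {p q m ℓ : ℕ} {a : ℤ}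
    (hp : p.Prime) (hp2 : p ≠ 2) (hq : q.Prime) (hpq : ¬ p ∣ q) (hw : 2 ^ (p - 1) ≡ 1 [MOD p ^ 2])
    (hqw : ¬ q ^ (p - 1) ≡ 1 [MOD p ^ 2]) (hm : 2 ≤ m) (hℓ : ℓ.Prime)
    (hV : (dickson 1 ((p ^ m : ℕ) : ℤ) ℓ).eval (2 * a) ^ 2 = (4 * q) ^ 2) :
    a.natAbs = 2 * q ∧ 2 * p ^ (m - 1) < ℓ := by
  have hpodd : Odd p := hp.odd_of_ne_two hp2
  have hNodd : Odd ((p ^ m : ℕ) : ℤ) := by exact_mod_cast hpodd.pow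
  have hℓodd : Odd ℓ := hℓ.odd_of_ne_two (ne_two_of_sq_eval_dickson_one_eq hNodd hV)
  obtain ⟨ha, hdvd⟩ := natAbs_eq_and_pow_pred_dvd_of_sq_eval_dickson_one_eq hp hp2 hq hpq hw hqw hm
    hℓodd hV
  refine ⟨ha, (Nat.le_of_dvd (Nat.sub_pos_of_lt hℓ.one_lt) ?_).trans_lt
    (Nat.sub_lt hℓ.pos one_pos)⟩
  exact (Nat.coprime_two_left.mpr hpodd.pow).mul_dvd_of_dvd_of_dvd
    (even_iff_two_dvd.mp (Nat.Odd.sub_odd hℓodd odd_one)) hdvd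

theorem two_pow_le_of_pow_pred_le {p q m ℓ : ℕ} (hp : p.Prime) (hmod : p % 4 = 1)
    (hw : 2 ^ (p - 1) ≡ 1 [MOD p ^ 2]) (hq : q.Prime) (hqp : q ∣ p - 2) (hm : 2 ≤ m)
    (hqm : (2 * q) ^ 2 < p ^ m) (hℓ : 2 * p ^ (m - 1) < ℓ) :
    2 ^ 21 ≤ ℓ ∧ 2 ^ 29 ≤ p ^ m := by
  rcases lt_or_ge p (2 ^ 20) with hlt | hge
  · obtain rfl := eq_1093_of_wieferich hp hmod hw hlt
    obtain rfl : q = 1091 := (Nat.prime_dvd_prime_iff_eq hq (by norm_num)).mp hqp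
    have hm3 : 3 ≤ m := by
      by_contra! hlt
      obtain rfl : m = 2 := by lia
      norm_num at hqm
    have h₁ : 1093 ^ 2 ≤ 1093 ^ (m - 1) := Nat.pow_le_pow_right (by norm_num) (by lia)
    have h₂ : 1093 ^ 3 ≤ 1093 ^ m := Nat.pow_le_pow_right (by norm_num) hm3
    lia
  · have h₁ : p ^ 1 ≤ p ^ (m - 1) := Nat.pow_le_pow_right hp.pos (by lia)
    have h₂ : p ^ 2 ≤ p ^ m := Nat.pow_le_pow_right hp.pos hm
    have h₃ : (2 ^ 20) ^ 2 ≤ p ^ 2 := Nat.pow_le_pow_left hge 2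
    lia

theorem sq_pow_add_conj_pow_ne {p q m ℓ : ℕ} {β : ℂ} {a : ℤ} (hp : p.Prime) (hmod : p % 4 = 1)
    (hw : 2 ^ (p - 1) ≡ 1 [MOD p ^ 2]) (hq : q.Prime) (hqp : q ∣ p - 2)
    (hqw : ¬ q ^ (p - 1) ≡ 1 [MOD p ^ 2]) (hm : 2 ≤ m) (hℓ : ℓ.Prime) (hre : β.re = a)
    (hnorm : normSq β = (p ^ m : ℕ)) (ham : a ^ 2 < (p ^ m : ℕ)) :
    (β ^ ℓ + conj β ^ ℓ) ^ 2 ≠ (4 * q) ^ 2 := by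
  intro h
  have hp5 : 5 ≤ p := by have := hp.two_le; lia
  have hpq : ¬ p ∣ q := fun hd => by
    have := Nat.le_of_dvd hq.pos hd
    have := Nat.le_of_dvd (by lia) hqp
    lia
  have htrace : β + conj β = ((2 * a : ℤ) : ℂ) := by rw [add_conj, hre]; push_cast; rfl
  have hprod : β * conj β = (((p ^ m : ℕ) : ℤ) : ℂ) := by rw [mul_conj, hnorm]; norm_cast
  have hV : (dickson 1 ((p ^ m : ℕ) : ℤ) ℓ).eval (2 * a) ^ 2 = (4 * q) ^ 2 := by
    rw [pow_add_pow_eq_intCast_eval_dickson_one htrace hprod] at h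
    exact_mod_cast h
  obtain ⟨ha, hℓlt⟩ := natAbs_eq_and_two_mul_pow_pred_lt_of_sq_eval_dickson_one_eq hp (by lia) hq
    hpq hw hqw hm hℓ hV
  have hqm : (2 * q) ^ 2 < p ^ m := by
    rw [← Int.natAbs_sq, ha] at ham
    exact_mod_cast ham
  have hNℓ : p ^ m ≤ ℓ ^ 2 :=
    calc p ^ m ≤ p ^ ((m - 1) * 2) := Nat.pow_le_pow_right hp.pos (by lia)
      _ = (p ^ (m - 1)) ^ 2 := pow_mul _ _ _
      _ ≤ ℓ ^ 2 := Nat.pow_le_pow_left (by lia) 2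
  obtain ⟨hℓlarge, hNlarge⟩ := two_pow_le_of_pow_pred_le hp hmod hw hq hqp hm hqm hℓlt
  have hpa : ¬ (p : ℤ) ∣ 2 * a := by
    rw [Int.natCast_dvd, Int.natAbs_mul, ha, hp.dvd_mul, hp.dvd_mul]
    simp only [Int.reduceAbs, Nat.prime_dvd_prime_iff_eq hp Nat.prime_two, hpq]
    lia
  have hlt := lt_norm_pow_add_conj_pow_of_two_pow_le (a := a) (by have := hq.pos; lia)
    (by exact_mod_cast ham) hre hnorm hℓ (fun j hj => neg_pow_ne_pow_of_not_dvd hp htrace hprod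
      (by exact_mod_cast dvd_pow_self p (by lia)) hpa hj.ne') hℓlarge hNlarge hNℓ
  have hsum : ‖β ^ ℓ + conj β ^ ℓ‖ = 2 * (2 * q) := by
    rcases sq_eq_sq_iff_eq_or_eq_neg.mp h with h | h <;> rw [h] <;> norm_num <;> ring
  have hsqrt : (2 * q : ℝ) < √(p ^ m : ℕ) := Real.lt_sqrt_of_sq_lt (by exact_mod_cast hqm)
  linarith

end

/-! ### The prime ideals over `p` -/

section

variable {R : Type*} [CommRing R] {p a b : R}

theorem isCoprime_span_pair (h : IsCoprime p (a + b)) :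
    IsCoprime (Ideal.span {p, a}) (Ideal.span {p, b}) := by
  obtain ⟨x, y, hxy⟩ := h
  refine Ideal.isCoprime_iff_exists.mpr ⟨x * p + y * a, ?_, y * b, ?_, by rw [← hxy]; ring⟩
  · exact Ideal.mem_span_pair.mpr ⟨x, y, rfl⟩
  · exact Ideal.mem_span_pair.mpr ⟨0, y, by ring⟩

theorem isCoprime_span_singleton_span_pair (h : IsCoprime p (a + b)) :
    IsCoprime (Ideal.span {a}) (Ideal.span {p, b}) := by
  obtain ⟨x, y, hxy⟩ := h
  refine Ideal.isCoprime_iff_exists.mpr ⟨y * a, ?_, x * p + y * b, ?_, by rw [← hxy]; ring⟩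
  · exact Ideal.mem_span_singleton'.mpr ⟨y, rfl⟩
  · exact Ideal.mem_span_pair.mpr ⟨x, y, rfl⟩

theorem span_pair_mul_span_pair_eq (h : IsCoprime p (a + b)) (hab : p ∣ a * b) :
    Ideal.span {p, a} * Ideal.span {p, b} = Ideal.span {p} := by
  rw [Ideal.span_pair_mul_span_pair]
  apply le_antisymm
  · rw [Ideal.span_le]
    rintro x (rfl | rfl | rfl | rfl) <;> rw [SetLike.mem_coe, Ideal.mem_span_singleton]
    exacts [dvd_mul_right _ _, dvd_mul_right _ _, dvd_mul_left _ _, hab]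
  · rw [Ideal.span_singleton_le_iff_mem]
    obtain ⟨x, y, hxy⟩ := h
    have hmem : x * (p * p) + y * (p * b) + y * (a * p) ∈
        Ideal.span {p * p, p * b, a * p, a * b} := by
      refine Ideal.add_mem _ (Ideal.add_mem _ ?_ ?_) ?_ <;>
        exact Ideal.mul_mem_left _ _ (Ideal.subset_span (by simp))
    rwa [show x * (p * p) + y * (p * b) + y * (a * p) = p by linear_combination p * hxy] at hmem

theorem span_pair_ne_span_pair (h : IsCoprime p (a + b)) (ha : Ideal.span {p, a} ≠ ⊤) :
    Ideal.span {p, a} ≠ Ideal.span {p, b} := fun heq => ha <| by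
  have hself := isCoprime_span_pair h
  rwa [← heq, isCoprime_self, Ideal.isUnit_iff] at hself

variable [IsDedekindDomain R] {n : ℕ}

theorem span_pair_pow_eq_span_singleton (h : IsCoprime p (a + b)) (hn : n ≠ 0)
    (hab : a * b = p ^ n) : Ideal.span {p, a} ^ n = Ideal.span {a} := by
  have hprod : Ideal.span {p, a} ^ n * Ideal.span {p, b} ^ n = Ideal.span {a} * Ideal.span {b} := by
    rw [← mul_pow, span_pair_mul_span_pair_eq h (hab ▸ dvd_pow_self p hn),
      Ideal.span_singleton_pow, Ideal.span_singleton_mul_span_singleton, hab]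
  have h' : IsCoprime p (b + a) := by rwa [add_comm]
  apply dvd_antisymm
  · exact (isCoprime_span_singleton_span_pair h').symm.pow_left.dvd_of_dvd_mul_right ⟨_, hprod.symm⟩
  · exact (isCoprime_span_singleton_span_pair h).pow_right.dvd_of_dvd_mul_right ⟨_, hprod⟩

theorem span_pair_ne_top_of_mul_eq_pow (h : IsCoprime p (a + b))
    (hn : n ≠ 0) (hab : a * b = p ^ n) (ha : ¬ IsUnit a) : Ideal.span {p, a} ≠ ⊤ := fun htop => by
  have hpow := span_pair_pow_eq_span_singleton h hn hab
  rw [htop, Ideal.top_pow, eq_comm, Ideal.span_singleton_eq_top] at hpow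
  exact ha hpow

theorem eq_span_pair_or_eq_span_pair_of_mem {P : Ideal R} (hP : P.IsPrime) (hp : p ≠ 0)
    (hmul : Ideal.span {p, a} * Ideal.span {p, b} = Ideal.span {p})
    (ha : (Ideal.span {p, a}).IsPrime) (hb : (Ideal.span {p, b}).IsPrime) (hpP : p ∈ P) :
    P = Ideal.span {p, a} ∨ P = Ideal.span {p, b} := by
  have eq_of_le {x : R} (hx : (Ideal.span {p, x}).IsPrime) (h : Ideal.span {p, x} ≤ P) :
      P = Ideal.span {p, x} :=
    have hne : Ideal.span {p, x} ≠ ⊥ := fun hbot =>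
      hp (Ideal.mem_bot.mp (hbot ▸ Ideal.subset_span (Set.mem_insert p {x})))
    ((hx.isMaximal hne).eq_of_le hP.ne_top h).symm
  have hle : Ideal.span {p, a} * Ideal.span {p, b} ≤ P :=
    hmul ▸ (Ideal.span_singleton_le_iff_mem P).mpr hpP
  exact (hP.mul_le.mp hle).imp (eq_of_le ha) (eq_of_le hb)

theorem exists_pow_associated_of_orderOf_mk0_ne {P : nonZeroDivisors (Ideal R)} {α : R}
    (hn : 1 < n) (hn' : ¬ n.Prime) (hP : (P : Ideal R) ^ n = Ideal.span {α})
    (hord : orderOf (ClassGroup.mk0 P) ≠ n) :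
    ∃ (β : R) (m ℓ : ℕ), 2 ≤ m ∧ ℓ.Prime ∧ n = m * ℓ ∧ Associated (β ^ ℓ) α := by
  have isPrincipal_iff (s : ℕ) :
      ClassGroup.mk0 P ^ s = 1 ↔ ((P : Ideal R) ^ s).IsPrincipal := by
    rw [← map_pow, ← SubmonoidClass.coe_pow, ← ClassGroup.mk0_eq_one_iff]
  obtain ⟨t, ht⟩ : orderOf (ClassGroup.mk0 P) ∣ n :=
    orderOf_dvd_of_pow_eq_one ((isPrincipal_iff n).mpr ⟨α, hP⟩)
  obtain ⟨γ, hγ⟩ := (isPrincipal_iff _).mp (pow_orderOf_eq_one (ClassGroup.mk0 P))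
  obtain ⟨ℓ, hℓ, r, rfl⟩ : ∃ ℓ, ℓ.Prime ∧ ℓ ∣ t :=
    Nat.exists_prime_and_dvd fun h => hord (by rw [h, mul_one] at ht; exact ht.symm)
  set s := orderOf (ClassGroup.mk0 P)
  have hnm : n = s * r * ℓ := by rw [ht]; ring
  refine ⟨γ ^ r, s * r, ℓ, ?_, hℓ, hnm, Ideal.span_singleton_eq_span_singleton.mp ?_⟩
  · by_contra! hlt
    obtain h | h : s * r = 0 ∨ s * r = 1 := by lia
    · simp [hnm, h] at hn
    · exact hn' (by rwa [hnm, h, one_mul])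
  · rw [← hP, hnm, mul_assoc, pow_mul, hγ, Ideal.submodule_span_eq, Ideal.span_singleton_pow,
      pow_mul]

end

theorem isPrime_of_mul_eq_span_natCast {K : Type*} [Field K] [NumberField K]
    (hK : Module.finrank ℚ K ≤ 2) {p : ℕ} (hp : p.Prime)
    {I J : Ideal (NumberField.RingOfIntegers K)} (hI : I ≠ ⊤) (hJ : J ≠ ⊤)
    (h : I * J = Ideal.span {(p : NumberField.RingOfIntegers K)}) : I.IsPrime := by
  have hnorm : I.absNorm * J.absNorm = p ^ Module.finrank ℚ K := by
    rw [← map_mul, h, Ideal.absNorm_span_natCast, NumberField.RingOfIntegers.rank]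
  obtain ⟨i, -, hI'⟩ := (Nat.dvd_prime_pow hp).mp ⟨_, hnorm.symm⟩
  obtain ⟨j, -, hJ'⟩ := (Nat.dvd_prime_pow hp).mp ⟨_, ((mul_comm _ _).trans hnorm).symm⟩
  have hi : i ≠ 0 := fun h => hI (Ideal.absNorm_eq_one_iff.mp (by rw [hI', h, pow_zero]))
  have hj : j ≠ 0 := fun h => hJ (Ideal.absNorm_eq_one_iff.mp (by rw [hJ', h, pow_zero]))
  rw [hI', hJ', ← pow_add] at hnorm
  have hij := Nat.pow_right_injective hp.two_le hnorm
  obtain rfl : i = 1 := by lia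
  exact Ideal.isPrime_of_irreducible_absNorm (by rwa [hI', pow_one])

section

open Complex ComplexConjugate

theorem im_pow_eq_zero {z : ℂ} (hz : z.im = 0) (n : ℕ) : (z ^ n).im = 0 := by
  rw [← conj_eq_iff_im, map_pow, conj_eq_iff_im.mpr hz]

variable {R : Type*} [CommRing R] {p q n : ℕ}

theorem not_associated_pow_of_wieferich {φ : R →+* ℂ}
    (hunit : ∀ x : R, IsUnit x → x = 1 ∨ x = -1) (hp : p.Prime) (hmod : p % 4 = 1)
    (hw : 2 ^ (p - 1) ≡ 1 [MOD p ^ 2]) (hq : q.Prime) (hqp : q ∣ p - 2)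
    (hqw : ¬ q ^ (p - 1) ≡ 1 [MOD p ^ 2]) {α β : R} {m ℓ : ℕ} {c : ℤ} (hm : 2 ≤ m)
    (hℓ : ℓ.Prime) (hβ : (φ β).re = c) (hα : (φ α).re = 2 * q) (hαim : (φ α).im ≠ 0)
    (hnorm : normSq (φ α) = (p ^ (m * ℓ) : ℕ)) : ¬ Associated (β ^ ℓ) α := by
  rintro ⟨u, hu⟩
  have hpow : φ β ^ ℓ = φ α ∨ φ β ^ ℓ = -φ α := by
    rw [← hu, ← map_pow]
    rcases hunit u u.isUnit with h | h <;> simp [h]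
  have hβnorm : normSq (φ β) = (p ^ m : ℕ) := by
    refine (pow_left_inj₀ (normSq_nonneg _) (Nat.cast_nonneg _) hℓ.ne_zero).mp ?_
    rw [← map_pow, ← Nat.cast_pow, ← pow_mul, ← hnorm]
    rcases hpow with h | h <;> rw [h]
    exact normSq_neg _
  have hβim : (φ β).im ≠ 0 := fun him => hαim <| by
    have h0 := im_pow_eq_zero him ℓ
    rcases hpow with h | h <;> rw [h] at h0
    · exact h0
    · exact neg_eq_zero.mp h0
  refine sq_pow_add_conj_pow_ne hp hmod hw hq hqp hqw hm hℓ hβ hβnorm ?_ ?_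
  · have : (c : ℝ) ^ 2 < (p ^ m : ℕ) := by
      rw [← hβ, ← hβnorm, normSq_apply]
      nlinarith [mul_self_pos.mpr hβim]
    exact_mod_cast this
  · rw [← map_pow conj, add_conj]
    rcases hpow with h | h <;> rw [h]
    · rw [hα]; push_cast; ring
    · rw [neg_re, hα]; push_cast; ring

variable [IsDedekindDomain R]

theorem orderOf_mk0_span_pair_eq {φ : R →+* ℂ} (hre : ∀ x, ∃ c : ℤ, (φ x).re = c)
    (hunit : ∀ x : R, IsUnit x → x = 1 ∨ x = -1) (hp : p.Prime) (hmod : p % 4 = 1)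
    (hw : 2 ^ (p - 1) ≡ 1 [MOD p ^ 2]) (hq : q.Prime) (hqp : q ∣ p - 2)
    (hqw : ¬ q ^ (p - 1) ≡ 1 [MOD p ^ 2]) (hn : 1 < n) (hn' : ¬ n.Prime) {a b : R}
    (hcop : IsCoprime (p : R) (a + b)) (hsum : a + b = 4 * q) (hmul : a * b = p ^ n)
    (hconj : φ b = conj (φ a)) (him : (φ a).im ≠ 0) {P : nonZeroDivisors (Ideal R)}
    (hP : (P : Ideal R) = Ideal.span {(p : R), a}) : orderOf (ClassGroup.mk0 P) = n := by
  have hare : (φ a).re = 2 * q := by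
    have h := congrArg φ hsum
    rw [map_add, hconj, add_conj, map_mul, map_ofNat, map_natCast] at h
    have h' : 2 * (φ a).re = 4 * q := by exact_mod_cast h
    linarith
  have hnorm : normSq (φ a) = (p ^ n : ℕ) := by
    have h := congrArg φ hmul
    rw [map_mul, hconj, mul_conj, map_pow, map_natCast] at h
    exact_mod_cast h
  by_contra hord
  obtain ⟨β, m, ℓ, hm, hℓ, rfl, hβ⟩ := exists_pow_associated_of_orderOf_mk0_ne hn hn'
    (hP ▸ span_pair_pow_eq_span_singleton hcop (by lia) hmul) hord
  obtain ⟨c, hc⟩ := hre β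
  exact not_associated_pow_of_wieferich hunit hp hmod hw hq hqp hqw hm hℓ hc hare him hnorm hβ

end

/-! ### Integers and units of imaginary quadratic fields -/

section

open Complex ComplexConjugate IntermediateField NumberField

theorem re_eq_zero_of_sq_eq_intCast {z : ℂ} {d : ℤ} (hd : d < 0) (hz : z ^ 2 = d) : z.re = 0 := by
  obtain ⟨hre, him⟩ := Complex.ext_iff.mp hz
  simp only [sq, mul_re, mul_im, intCast_re, intCast_im] at hre him
  obtain h | h : z.re = 0 ∨ z.im = 0 := mul_eq_zero.mp (by linarith)
  · exact h
  · have hd' : (d : ℝ) < 0 := by exact_mod_cast hd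
    rw [h] at hre
    nlinarith [mul_self_nonneg z.re]

theorem isIntegral_of_sq_eq_intCast {R : Type*} [CommRing R] {x : R} {d : ℤ} (hx : x ^ 2 = d) :
    IsIntegral ℤ x :=
  .of_pow two_pos (hx ▸ isIntegral_algebraMap (x := d))

theorem exists_rat_add_mul_of_mem_adjoin {z : ℂ} {d : ℤ} (hz : z ^ 2 = d) {x : ℂ} (hx : x ∈ ℚ⟮z⟯) :
    ∃ u v : ℚ, x = u + v * z := by
  rw [← mem_toSubalgebra, adjoin_simple_toSubalgebra_of_isAlgebraic
    (isIntegral_of_sq_eq_intCast hz).tower_top.isAlgebraic] at hx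
  exact exists_add_mul_of_mem_adjoin (R := ℚ) (d := d) (by simpa using hz) hx

theorem finrank_adjoin_le_two_of_sq_eq {z : ℂ} {d : ℤ} (hz : z ^ 2 = d) :
    Module.finrank ℚ ℚ⟮z⟯ ≤ 2 := by
  have hmonic : (Polynomial.X ^ 2 - Polynomial.C (d : ℚ)).Monic := by monicity!
  have hroot : Polynomial.aeval z (Polynomial.X ^ 2 - Polynomial.C (d : ℚ)) = 0 := by simp [hz]
  rw [adjoin.finrank ⟨_, hmonic, hroot⟩]
  refine (Polynomial.natDegree_le_of_dvd (minpoly.dvd ℚ z hroot) hmonic.ne_zero).trans ?_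
  compute_degree

theorem adjoin_eq_adjoin_I_of_mem {z : ℂ} {d : ℤ} (hz : z ^ 2 = d) (hre : z.re = 0)
    (hI : I ∈ ℚ⟮z⟯) : ℚ⟮z⟯ = ℚ⟮I⟯ := by
  refine le_antisymm ?_ (adjoin_simple_le_iff.mpr hI)
  obtain ⟨u, v, huv⟩ := exists_rat_add_mul_of_mem_adjoin hz hI
  have hu : u = 0 := by simpa [hre] using congrArg re huv.symm
  rw [hu, Rat.cast_zero, zero_add] at huv
  have hv : (v : ℂ) ≠ 0 := left_ne_zero_of_mul (huv ▸ I_ne_zero)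
  rw [adjoin_simple_le_iff, (eq_inv_mul_iff_mul_eq₀ hv).mpr huv.symm]
  exact mul_mem (inv_mem (SubfieldClass.ratCast_mem _ v)) (mem_adjoin_simple_self ℚ I)

theorem exists_int_of_isIntegral_of_eq_ratCast {x : ℂ} {r : ℚ} (hx : IsIntegral ℤ x) (h : x = r) :
    ∃ n : ℤ, r = n := by
  subst h
  have hr : IsIntegral ℤ r := (isIntegral_algebraMap_iff (algebraMap ℚ ℂ).injective).mp hx
  obtain ⟨n, hn⟩ := IsIntegrallyClosed.isIntegral_iff.mp hr
  exact ⟨n, hn.symm⟩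

theorem modEq_four_of_sq_mul_eq {w : ℚ} {d M : ℤ} (hd : Odd d) (hM : Odd M) (h : w ^ 2 * d = M) :
    d ≡ M [ZMOD 4] := by
  have hnd : w.num ^ 2 * d = (w.den : ℤ) ^ 2 * M := by
    have : (w.num : ℚ) ^ 2 * d = w.den ^ 2 * M := by
      rw [← h, ← mul_assoc, ← mul_pow, Rat.den_mul_eq_num]
    exact_mod_cast this
  have hparity : Odd w.num ↔ Odd (w.den : ℤ) := by
    have := congrArg Odd hnd
    simpa only [Int.odd_mul, Int.odd_pow, hd, hM, and_true, two_ne_zero, or_false, eq_iff_iff]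
      using this
  have hden : Odd (w.den : ℤ) := by
    by_contra hden
    have hnum := Int.not_odd_iff_even.mp (hparity.not.mpr hden)
    rw [Int.not_odd_iff_even] at hden
    have hgcd := Nat.dvd_gcd (Int.natAbs_even.mpr hnum).two_dvd (by exact_mod_cast hden.two_dvd)
    rw [w.reduced] at hgcd
    exact absurd hgcd (by norm_num)
  have hmod := congrArg (· % 4) hnd
  simpa only [Int.ModEq, Int.mul_emod _ d, Int.mul_emod _ M, Int.sq_mod_four_eq_one_of_odd hden,
    Int.sq_mod_four_eq_one_of_odd (hparity.mpr hden), one_mul, Int.emod_emod] using hmod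

theorem even_of_sq_sub_sq_mul_eq {t N d : ℤ} {w : ℚ} (hd : d % 4 = 3)
    (h : (t : ℚ) ^ 2 - w ^ 2 * d = 4 * N) : Even t := by
  by_contra ht
  rw [Int.not_even_iff_odd] at ht
  have hM : Odd (t ^ 2 - 4 * N) := ht.pow.sub_even ⟨2 * N, by ring⟩
  have hdM : d ≡ t ^ 2 - 4 * N [ZMOD 4] :=
    modEq_four_of_sq_mul_eq (w := w) (Int.odd_iff.mpr (by lia)) hM (by push_cast; linarith)
  have ht2 := Int.sq_mod_four_eq_one_of_odd ht
  rw [Int.ModEq] at hdM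
  lia

theorem exists_int_re_and_normSq {z : ℂ} {d : ℤ} (hd4 : d % 4 = 3) (hz : z ^ 2 = d)
    (hre : z.re = 0) {x : ℂ} (hx : x ∈ ℚ⟮z⟯) (hint : IsIntegral ℤ x) :
    ∃ a N : ℤ, x.re = a ∧ normSq x = N := by
  obtain ⟨u, v, rfl⟩ := exists_rat_add_mul_of_mem_adjoin hz hx
  set x : ℂ := u + v * z with hxuv
  have hzconj : conj z = -z := by apply Complex.ext <;> simp [hre]
  have hconj : conj x = u - v * z := by
    rw [hxuv, map_add, map_mul, map_ratCast, map_ratCast, hzconj]; ring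
  have hconjint : IsIntegral ℤ (conj x) := hint.map (conjAe.toAlgHom.restrictScalars ℤ)
  have hnorm : x * conj x = (u ^ 2 - v ^ 2 * d : ℚ) := by
    rw [hconj, hxuv]
    push_cast
    linear_combination (-v ^ 2 : ℂ) * hz
  obtain ⟨t, ht⟩ := exists_int_of_isIntegral_of_eq_ratCast (r := 2 * u) (hint.add hconjint)
    (by rw [hconj, hxuv]; push_cast; ring)
  obtain ⟨N, hN⟩ := exists_int_of_isIntegral_of_eq_ratCast (hint.mul hconjint) hnorm
  obtain ⟨a, rfl⟩ : Even t :=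
    even_of_sq_sub_sq_mul_eq (w := 2 * v) (N := N) hd4 (by rw [← ht, ← hN]; ring)
  refine ⟨a, N, ?_, ?_⟩
  · have hu : u = a := by push_cast at ht; linarith
    simp [hxuv, hre, hu]
  · rw [mul_conj, hN] at hnorm
    exact_mod_cast hnorm

theorem eq_pm_one_or_eq_pm_I_of_normSq_eq_one {x : ℂ} {a : ℤ} (hre : x.re = a)
    (hx : normSq x = 1) : (x = 1 ∨ x = -1) ∨ x = I ∨ x = -I := by
  rw [normSq_apply, hre] at hx
  have ha : a ^ 2 ≤ 1 := by
    have : (a : ℝ) ^ 2 ≤ 1 := by nlinarith [mul_self_nonneg x.im]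
    exact_mod_cast this
  have ha' : -1 ≤ a ∧ a ≤ 1 := abs_le.mp ((sq_le_one_iff_abs_le_one a).mp ha)
  obtain h | h : a ^ 2 = 1 ∨ a = 0 := by
    obtain rfl | rfl | rfl : a = -1 ∨ a = 0 ∨ a = 1 := by lia
    all_goals simp
  · have hsq : (a : ℝ) ^ 2 = 1 := by exact_mod_cast h
    have him : x.im = 0 := mul_self_eq_zero.mp (by linarith)
    refine .inl ((sq_eq_one_iff.mp hsq).imp (fun h => ?_) fun h => ?_) <;>
      apply Complex.ext <;> simp [hre, him, h]
  · rw [h, Int.cast_zero, zero_mul, zero_add] at hx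
    refine .inr ((mul_self_eq_one_iff.mp hx).imp (fun him => ?_) fun him => ?_) <;>
      apply Complex.ext <;> simp [hre, him, h]

theorem eq_one_or_eq_neg_one_of_mul_eq_one {z : ℂ} {d : ℤ} (hd4 : d % 4 = 3)
    (hz : z ^ 2 = d) (hre : z.re = 0) (hI : ℚ⟮z⟯ ≠ ℚ⟮I⟯) {x y : ℂ} (hx : x ∈ ℚ⟮z⟯)
    (hy : y ∈ ℚ⟮z⟯) (hxint : IsIntegral ℤ x) (hyint : IsIntegral ℤ y) (hxy : x * y = 1) :
    x = 1 ∨ x = -1 := by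
  obtain ⟨a, N, hxa, hxN⟩ := exists_int_re_and_normSq hd4 hz hre hx hxint
  obtain ⟨-, M, -, hyM⟩ := exists_int_re_and_normSq hd4 hz hre hy hyint
  have hNM : N * M = 1 := by
    have h := congrArg normSq hxy
    rw [map_mul, hxN, hyM, map_one] at h
    exact_mod_cast h
  have hN : 0 ≤ N := by exact_mod_cast hxN ▸ normSq_nonneg x
  have hx1 : normSq x = 1 := by rw [hxN, Int.eq_one_of_mul_eq_one_right hN hNM, Int.cast_one]
  refine (eq_pm_one_or_eq_pm_I_of_normSq_eq_one hxa hx1).resolve_right fun hxI => hI ?_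
  refine adjoin_eq_adjoin_I_of_mem hz hre ?_
  rcases hxI with rfl | rfl
  · exact hx
  · simpa using neg_mem hx

theorem exists_int_re_algebraMap_ringOfIntegers {z : ℂ} {d : ℤ} (hd : d < 0) (hd4 : d % 4 = 3)
    (hz : z ^ 2 = d) (x : 𝓞 ℚ⟮z⟯) :
    ∃ a : ℤ, (algebraMap (𝓞 ℚ⟮z⟯) ℂ x).re = a :=
  have ⟨a, _, ha, _⟩ := exists_int_re_and_normSq hd4 hz (re_eq_zero_of_sq_eq_intCast hd hz)
    (x : ℚ⟮z⟯).2 x.isIntegral.algebraMap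
  ⟨a, ha⟩

theorem eq_one_or_eq_neg_one_of_isUnit_ringOfIntegers {z : ℂ} {d : ℤ} (hd : d < 0) (hd4 : d % 4 = 3)
    (hz : z ^ 2 = d) (hI : ℚ⟮z⟯ ≠ ℚ⟮I⟯) {x : 𝓞 ℚ⟮z⟯}
    (hx : IsUnit x) : x = 1 ∨ x = -1 := by
  obtain ⟨y, hxy⟩ := hx.exists_right_inv
  have hxy' := congrArg (algebraMap (𝓞 ℚ⟮z⟯) ℂ) hxy
  rw [map_mul, map_one] at hxy'
  have hinj := FaithfulSMul.algebraMap_injective (𝓞 ℚ⟮z⟯) ℂ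
  refine (eq_one_or_eq_neg_one_of_mul_eq_one hd4 hz (re_eq_zero_of_sq_eq_intCast hd hz)
    hI (x : ℚ⟮z⟯).2 (y : ℚ⟮z⟯).2 x.isIntegral.algebraMap
    y.isIntegral.algebraMap hxy').imp (fun h => hinj ?_)
    fun h => hinj ?_
  · rw [map_one]; exact h
  · rw [map_neg, map_one]; exact h

end

/-! ### The classes of the prime ideals over `p` -/

section

open Complex ComplexConjugate IntermediateField NumberField

theorem sq_sub_pow_neg {p q n : ℕ} (hp : 4 ≤ p) (hqp : q < p) (hn : 3 ≤ n) :
    ((2 * q : ℕ) : ℤ) ^ 2 - (p ^ n : ℕ) < 0 := by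
  have hlt : (2 * q) ^ 2 < p ^ n :=
    calc (2 * q) ^ 2 = 4 * q ^ 2 := by ring
      _ < 4 * p ^ 2 := by gcongr
      _ ≤ p * p ^ 2 := by gcongr
      _ = p ^ 3 := (pow_succ' p 2).symm
      _ ≤ p ^ n := Nat.pow_le_pow_right (by lia) hn
  exact sub_neg.mpr (by exact_mod_cast hlt)

theorem sq_sub_pow_emod_four {c p n : ℕ} (hc : Even c) (hp : p % 4 = 1) :
    ((c : ℤ) ^ 2 - (p ^ n : ℕ)) % 4 = 3 := by
  obtain ⟨k, rfl⟩ := hc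
  have hpn : p ^ n % 4 = 1 := by rw [Nat.pow_mod, hp, one_pow, Nat.one_mod]
  have hk : ((k + k : ℕ) : ℤ) ^ 2 = 4 * k ^ 2 := by push_cast; ring
  rw [hk]
  lia

theorem isCoprime_natCast_four_mul (R : Type*) [CommRing R] {p q : ℕ} (hp : p.Prime) (hp2 : p ≠ 2)
    (hpq : ¬ p ∣ q) : IsCoprime (p : R) (4 * q) := by
  have h4 : p.Coprime 4 := ((Nat.coprime_primes hp Nat.prime_two).mpr hp2).pow_right 2
  have h := h4.mul_right ((Nat.Prime.coprime_iff_not_dvd hp).mpr hpq)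
  exact_mod_cast h.cast (R := R)

theorem exists_ringOfIntegers_algebraMap_eq {z : ℂ} {d : ℤ} (hz : z ^ 2 = d) :
    ∃ ζ : 𝓞 ℚ⟮z⟯, algebraMap (𝓞 ℚ⟮z⟯) ℂ ζ = z := by
  have hint : IsIntegral ℤ (AdjoinSimple.gen ℚ z) :=
    isIntegral_of_sq_eq_intCast (d := d) (Subtype.ext (by simpa using hz))
  obtain ⟨ζ, hζ⟩ := (IsIntegralClosure.isIntegral_iff (A := 𝓞 ℚ⟮z⟯)).mp hint
  exact ⟨ζ, by rw [IsScalarTower.algebraMap_apply (𝓞 ℚ⟮z⟯) ℚ⟮z⟯ ℂ, hζ]; rfl⟩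

theorem exists_ringOfIntegers_add_eq_and_mul_eq {z : ℂ} {c N : ℕ}
    (hz : z ^ 2 = ((c : ℤ) ^ 2 - N : ℤ)) (hd : (c : ℤ) ^ 2 - N < 0) :
    ∃ a b : 𝓞 ℚ⟮z⟯, a + b = 2 * c ∧ a * b = N ∧
      algebraMap (𝓞 ℚ⟮z⟯) ℂ b = conj (algebraMap (𝓞 ℚ⟮z⟯) ℂ a) ∧
      (algebraMap (𝓞 ℚ⟮z⟯) ℂ a).im ≠ 0 := by
  obtain ⟨ζ, hζ⟩ := exists_ringOfIntegers_algebraMap_eq hz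
  have hre := re_eq_zero_of_sq_eq_intCast hd hz
  have hz0 : z ≠ 0 := by
    rintro rfl
    rw [zero_pow two_ne_zero] at hz
    exact hd.ne (by exact_mod_cast hz.symm)
  have hzconj : conj z = -z := by apply Complex.ext <;> simp [hre]
  have hζ2 : ζ ^ 2 = c ^ 2 - N := by
    apply FaithfulSMul.algebraMap_injective (𝓞 ℚ⟮z⟯) ℂ
    rw [map_pow, hζ, hz]
    push_cast
    simp
  refine ⟨c + ζ, c - ζ, by ring, by linear_combination -hζ2, ?_, ?_⟩
  · simp [hζ, hzconj, sub_eq_add_neg]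
  · simpa [hζ] using fun him => hz0 (Complex.ext hre him)

theorem isPrime_span_pair_and_orderOf_mk0_eq {K : Type*} [Field K] [NumberField K]
    (hK : Module.finrank ℚ K ≤ 2) {φ : 𝓞 K →+* ℂ} (hre : ∀ x, ∃ c : ℤ, (φ x).re = c)
    (hunit : ∀ x : 𝓞 K, IsUnit x → x = 1 ∨ x = -1) {p q n : ℕ} (hp : p.Prime) (hmod : p % 4 = 1)
    (hw : 2 ^ (p - 1) ≡ 1 [MOD p ^ 2]) (hq : q.Prime) (hqp : q ∣ p - 2)
    (hqw : ¬ q ^ (p - 1) ≡ 1 [MOD p ^ 2]) (hn : 1 < n) (hn' : ¬ n.Prime) {a b : 𝓞 K}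
    (hcop : IsCoprime (p : 𝓞 K) (a + b)) (hsum : a + b = 4 * q) (hmul : a * b = p ^ n)
    (hconj : φ b = conj (φ a)) (him : (φ a).im ≠ 0) :
    (∃ P Q : Ideal (𝓞 K), P ≠ Q ∧ P.IsPrime ∧ Q.IsPrime ∧ P * Q = Ideal.span {(p : 𝓞 K)}) ∧
    ∀ P : Ideal (𝓞 K), P.IsPrime → (p : 𝓞 K) ∈ P → ∀ hP0 : P ≠ 0,
      orderOf (ClassGroup.mk0 ⟨P, mem_nonZeroDivisors_of_ne_zero hP0⟩) = n := by
  have hn0 : n ≠ 0 := by lia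
  have hcop' : IsCoprime (p : 𝓞 K) (b + a) := add_comm a b ▸ hcop
  have hmul' : b * a = p ^ n := by rw [mul_comm, hmul]
  have hsum' : b + a = 4 * q := by rw [add_comm, hsum]
  have hconj' : φ a = conj (φ b) := by rw [hconj, conj_conj]
  have him' : (φ b).im ≠ 0 := by rwa [hconj, conj_im, neg_ne_zero]
  have not_isUnit {x : 𝓞 K} (hx : (φ x).im ≠ 0) : ¬ IsUnit x := fun h => hx <| by
    rcases hunit x h with rfl | rfl <;> simp
  have ha := span_pair_ne_top_of_mul_eq_pow hcop hn0 hmul (not_isUnit him)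
  have hb := span_pair_ne_top_of_mul_eq_pow hcop' hn0 hmul' (not_isUnit him')
  have hspan := span_pair_mul_span_pair_eq hcop (hmul ▸ dvd_pow_self _ hn0)
  have haP := isPrime_of_mul_eq_span_natCast hK hp ha hb hspan
  have hbP := isPrime_of_mul_eq_span_natCast hK hp hb ha ((mul_comm _ _).trans hspan)
  refine ⟨⟨_, _, span_pair_ne_span_pair hcop ha, haP, hbP, hspan⟩, fun P hP hpP hP0 => ?_⟩
  have hp0 : (p : 𝓞 K) ≠ 0 := Nat.cast_ne_zero.mpr hp.ne_zero
  rcases eq_span_pair_or_eq_span_pair_of_mem hP hp0 hspan haP hbP hpP with h | h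
  · exact orderOf_mk0_span_pair_eq hre hunit hp hmod hw hq hqp hqw hn hn' hcop hsum hmul hconj him h
  · exact orderOf_mk0_span_pair_eq hre hunit hp hmod hw hq hqp hqw hn hn' hcop' hsum' hmul' hconj'
      him' h

end

/-- Let `p` be a prime with `p ≡ 1 (mod 4)` and `2^(p−1) ≡ 1 (mod p^2)`, let `q1` be a prime
factor of `p − 2` such that `q1^(p−1) ≢ 1 (mod p^2)`, and let `n` be a composite number such
that `K = ℚ(√(4q1^2 − p^n)) ≠ ℚ(i)`. Then `p` splits in the imaginary quadratic field `K`,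
and for any prime ideal `℘` of the ring of integers of `K` lying over `p`, the order of the
ideal class of `℘` in the ideal class group of `K` is exactly `n`. -/
theorem stmt_10 (p : ℕ) (hp : p.Prime) (hmod : p % 4 = 1)
    (hw : 2 ^ (p - 1) ≡ 1 [MOD p ^ 2])
    (q1 : ℕ) (hq1 : q1.Prime) (hq1dvd : q1 ∣ p - 2)
    (hq1nw : ¬ (q1 ^ (p - 1) ≡ 1 [MOD p ^ 2]))
    (n : ℕ) (hcomp : 1 < n ∧ ¬ n.Prime)
    (z : ℂ) (hz : z ^ 2 = 4 * (q1 : ℂ) ^ 2 - (p : ℂ) ^ n)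
    (K : IntermediateField ℚ ℂ) (hK : K = IntermediateField.adjoin ℚ {z})
    (hKi : K ≠ IntermediateField.adjoin ℚ {Complex.I})
    [NumberField K] :
    (∃ P Q : Ideal (NumberField.RingOfIntegers K), P ≠ Q ∧ P.IsPrime ∧ Q.IsPrime ∧
        P * Q = Ideal.span {(p : NumberField.RingOfIntegers K)}) ∧
    ∀ (P : Ideal (NumberField.RingOfIntegers K)), P.IsPrime →
      (p : NumberField.RingOfIntegers K) ∈ P → ∀ (hP0 : P ≠ 0),
      orderOf (ClassGroup.mk0 ⟨P, mem_nonZeroDivisors_of_ne_zero hP0⟩) = n := by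
  subst hK
  obtain ⟨hn, hn'⟩ := hcomp
  have hn3 : 3 ≤ n := by
    have : n ≠ 2 := fun h => hn' (h ▸ Nat.prime_two)
    lia
  have hp5 : 5 ≤ p := by have := hp.two_le; lia
  have hqp : q1 < p := by have := Nat.le_of_dvd (by lia) hq1dvd; lia
  have hpq : ¬ p ∣ q1 := Nat.not_dvd_of_pos_of_lt hq1.pos hqp
  have hz' : z ^ 2 = (((2 * q1 : ℕ) : ℤ) ^ 2 - (p ^ n : ℕ) : ℤ) := by rw [hz]; push_cast; ring
  have hd := sq_sub_pow_neg (by lia) hqp hn3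
  have hd4 := sq_sub_pow_emod_four (n := n) (even_two_mul q1) hmod
  have hre := exists_int_re_algebraMap_ringOfIntegers hd hd4 hz'
  have hunit (x) := eq_one_or_eq_neg_one_of_isUnit_ringOfIntegers hd hd4 hz' hKi (x := x)
  obtain ⟨a, b, hsum, hmul, hconj, him⟩ := exists_ringOfIntegers_add_eq_and_mul_eq hz' hd
  have hsum' : a + b = 4 * q1 := by rw [hsum]; push_cast; ring
  exact isPrime_span_pair_and_orderOf_mk0_eq (finrank_adjoin_le_two_of_sq_eq hz') hre hunit hp hmod
    hw hq1 hq1dvd hq1nw hn hn' (hsum' ▸ isCoprime_natCast_four_mul _ hp (by lia) hpq) hsum'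
    (by exact_mod_cast hmul) hconj him
end

section
/- Let p be a prime with p ≡ 3 (mod 4) and 2^{p−1} ≡ 1 (mod p^2), let q1 be a prime factor of p − 2 such that q1^{p−1} ≢ 1 (mod p^2), let n be an odd composite number, let d0 be the squarefree part of q1^2 − p^n and c the positive integer with q1^2 − p^n = c^2·d0. Then for any prime p4 dividing n, there are no integers u, v and sign ε ∈ {+1, −1} such that (u + v·√d0)^{p4} = ε·(q1 + c·√d0) in ℤ[√d0]. -/
/-!
Suppose `x ^ r = ± (q1 + c √d0)` in `ℤ[√d0]`, with `n = r m`. Comparing norms gives `N(x) = p ^ m`,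
and `a = re x` divides `re (x ^ r) = ± q1` because `r` is odd, so `a = ± 1` or `a = ± q1`. Writing
`t = x + x̄ = 2 a`, one has `t ^ r ≡ x ^ r + x̄ ^ r = ± 2 q1` modulo `N(x)`.

If `a = ± 1`, raising `2 ^ r ≡ ± 2 q1` to the power `p - 1` modulo `p ^ 2` makes `q1` satisfy the
Wieferich congruence, a contradiction.

If `a = ± q1`, then `t ^ (r - 1) ≡ ± 1` modulo `p ^ m`. As `-1` is not a square modulo `p`, the sign
is `+`, a computation modulo `4` gives `r = 4 l + 1`, and `t ^ l ≡ e = ± 1` modulo `p ^ m`. Now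
`x ^ r + x̄ ^ r = x + x̄` says that `b = e x ^ l` satisfies `b ^ 4 ≡ (x + x̄) / x` modulo
`x̄ ^ (4 l + 1)` and `b ≡ 1` modulo `x̄`: a very good `x̄`-adic approximation to a fourth root.
Substituting it into the Padé approximants of `z ^ (1 / 4)` at `z = 1`, two consecutive of which
cannot give the same approximation, yields a nonzero element of `ℤ[√d0]` divisible by a high power
of `x̄`, and comparing norms gives `N(x) ≤ 2 ^ 26`. But a Wieferich prime `p ≡ 3 (mod 4)` is at
least `500`, and `m ≥ 3`.
-/

open Finset

section ChuVandermonde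

variable {R : Type*} [CommRing R] [BinomialRing R]

theorem ring_choose_mul_choose_sub_comm (r : R) (m n : ℕ) :
    Ring.choose r m * Ring.choose (r - m) n = Ring.choose r n * Ring.choose (r - n) m := by
  have h (m n : ℕ) : Ring.choose r m * Ring.choose (r - m) n =
      (m + n).choose m • Ring.choose r (m + n) := by
    rw [Ring.choose_smul_choose r (Nat.le_add_right m n), Nat.add_sub_cancel_left]
  rw [h, h, add_comm n m, Nat.choose_symm_add]

theorem ring_choose_mul_natChoose (r : R) (m n : ℕ) :
    Ring.choose r (m + n) * ((m + n).choose n : R) = Ring.choose r n * Ring.choose (r - n) m := by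
  rw [mul_comm, ← nsmul_eq_mul, Ring.choose_smul_choose r (Nat.le_add_left n m),
    Nat.add_sub_cancel]

theorem sum_choose_mul_choose_mul_natChoose (r s : R) (k n : ℕ) :
    ∑ ij ∈ antidiagonal (k + n), Ring.choose r ij.1 * Ring.choose s ij.2 * (ij.1.choose n : R) =
      Ring.choose r n * Ring.choose (r + s - n) k := by
  rw [Nat.sum_antidiagonal_eq_sum_range_succ_mk, show (k + n).succ = n + k.succ by omega,
    sum_range_add, sum_eq_zero, zero_add, add_sub_right_comm,
    Ring.add_choose_eq k (Commute.all _ _), Nat.sum_antidiagonal_eq_sum_range_succ_mk, mul_sum]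
  · refine sum_congr rfl fun i _ ↦ ?_
    rw [mul_right_comm, add_comm n i, ring_choose_mul_natChoose, Nat.add_sub_add_right, mul_assoc]
  · intro i hi
    rw [Nat.choose_eq_zero_of_lt (mem_range.1 hi), Nat.cast_zero, mul_zero]

theorem sum_choose_mul_choose_mul_choose_sub (r s : R) (k n : ℕ) :
    ∑ ij ∈ antidiagonal k, Ring.choose r ij.1 * Ring.choose s ij.2 * Ring.choose (s - ij.2) n =
      Ring.choose s n * Ring.choose (r + s - n) k := by
  rw [add_sub_assoc, Ring.add_choose_eq k (Commute.all _ _), mul_sum]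
  refine sum_congr rfl fun ij _ ↦ ?_
  rw [mul_assoc, ring_choose_mul_choose_sub_comm, mul_left_comm]

theorem factorial_mul_ring_choose (r : R) (n : ℕ) :
    (n.factorial : R) * Ring.choose r n = ∏ i ∈ range n, (r - i) := by
  induction n with
  | zero => simp
  | succ n ih =>
    have h := Ring.choose_smul_choose r n.le_succ
    rw [nsmul_eq_mul, Nat.choose_succ_self_right, Nat.succ_sub (le_refl n), Nat.sub_self,
      Ring.choose_one_right] at h
    rw [Nat.factorial_succ, prod_range_succ, ← ih, Nat.cast_mul]
    linear_combination (n.factorial : R) * h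

end ChuVandermonde

theorem ring_choose_ne_zero {K : Type*} [Field K] [CharZero K] {r : K} {n : ℕ}
    (hr : ∀ i < n, r ≠ i) : Ring.choose r n ≠ 0 := by
  refine right_ne_zero_of_mul (a := (n.factorial : K)) ?_
  rw [factorial_mul_ring_choose, prod_ne_zero_iff]
  exact fun i hi ↦ sub_ne_zero.2 (hr i (mem_range.1 hi))

section PadeApproximants

open Polynomial

/-- The numerator of the diagonal Padé approximant of degree `k` at `z = 1` to `z ^ ν`; the
denominator is `padePoly (-ν) k`. -/
noncomputable def padePoly (ν : ℚ) (k : ℕ) : ℚ[X] :=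
  ∑ ij ∈ antidiagonal k, monomial ij.1 (Ring.choose (k + ν) ij.1 * Ring.choose (k - ν) ij.2)

theorem coeff_aeval_padePoly (ν : ℚ) (k n : ℕ) :
    PowerSeries.coeff n (aeval (1 + PowerSeries.X : PowerSeries ℚ) (padePoly ν k)) =
      ∑ ij ∈ antidiagonal k,
        Ring.choose (k + ν) ij.1 * Ring.choose (k - ν) ij.2 * (ij.1.choose n : ℚ) := by
  simp only [padePoly, map_sum, aeval_monomial, ← PowerSeries.binomialSeries_nat (R := ℚ),
    ← Algebra.smul_def, PowerSeries.coeff_smul, PowerSeries.binomialSeries_coeff,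
    Ring.choose_natCast, smul_eq_mul, mul_one]

theorem coeff_binomialSeries_mul_aeval_padePoly (ν : ℚ) (k n : ℕ) :
    PowerSeries.coeff n (PowerSeries.binomialSeries ℚ ν *
        aeval (1 + PowerSeries.X : PowerSeries ℚ) (padePoly (-ν) k)) =
      ∑ ij ∈ antidiagonal k, Ring.choose (k - ν) ij.1 * Ring.choose (k + ν) ij.2 *
        Ring.choose (k + ν - ij.2) n := by
  simp only [padePoly, map_sum, mul_sum, aeval_monomial,
    ← PowerSeries.binomialSeries_nat (R := ℚ), ← Algebra.smul_def, mul_smul_comm,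
    ← PowerSeries.binomialSeries_add, sub_neg_eq_add, ← sub_eq_add_neg]
  refine sum_congr rfl fun ij h ↦ ?_
  rw [PowerSeries.coeff_smul, PowerSeries.binomialSeries_coeff, smul_eq_mul, smul_eq_mul, mul_one,
    show (k : ℚ) + ν - ij.2 = ν + ij.1 by rw [← mem_antidiagonal.1 h]; push_cast; ring]

theorem X_pow_dvd_aeval_padePoly_sub (ν : ℚ) (k : ℕ) :
    PowerSeries.X ^ (2 * k + 1) ∣
      aeval (1 + PowerSeries.X : PowerSeries ℚ) (padePoly ν k) -
        PowerSeries.binomialSeries ℚ ν *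
          aeval (1 + PowerSeries.X : PowerSeries ℚ) (padePoly (-ν) k) := by
  refine PowerSeries.X_pow_dvd_iff.2 fun n hn ↦ ?_
  rw [map_sub, coeff_aeval_padePoly, coeff_binomialSeries_mul_aeval_padePoly, sub_eq_zero,
    sum_choose_mul_choose_mul_choose_sub, sub_add_add_cancel, ← Nat.cast_add,
    ← Nat.cast_sub (by omega), Ring.choose_natCast]
  rcases le_or_gt n k with h | h
  · obtain ⟨l, rfl⟩ := Nat.exists_eq_add_of_le' h
    rw [sum_choose_mul_choose_mul_natChoose, add_add_sub_cancel, ← Nat.cast_add,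
      ← Nat.cast_sub (by omega), Ring.choose_natCast,
      Nat.choose_symm_of_eq_add (b := l + n) (by omega)]
  · rw [Nat.choose_eq_zero_of_lt (by omega), Nat.cast_zero, mul_zero]
    refine sum_eq_zero fun ij hij ↦ ?_
    rw [Nat.choose_eq_zero_of_lt (by have := mem_antidiagonal.1 hij; omega), Nat.cast_zero,
      mul_zero]

theorem X_sub_C_pow_dvd_of_X_pow_dvd_aeval {K : Type*} [Field K] {f : PowerSeries K}
    (hf : PowerSeries.coeff 1 f ≠ 0) {P : K[X]} {n : ℕ} (h : PowerSeries.X ^ n ∣ aeval f P) :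
    (X - C (PowerSeries.constantCoeff f)) ^ n ∣ P := by
  set a := PowerSeries.constantCoeff f with ha
  rcases eq_or_ne P 0 with rfl | hP
  · exact dvd_zero _
  obtain ⟨Q, hQ, hQa⟩ := exists_eq_pow_rootMultiplicity_mul_and_not_dvd P hP a
  set m := rootMultiplicity a P
  rcases le_or_gt n m with hnm | hmn
  · exact hQ ▸ (pow_dvd_pow _ hnm).mul_right Q
  obtain ⟨g, hg⟩ : PowerSeries.X ∣ f - PowerSeries.C a := by
    rw [PowerSeries.X_dvd_iff, map_sub, PowerSeries.constantCoeff_C, sub_self]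
  have hg0 : PowerSeries.constantCoeff g ≠ 0 := by
    have := congrArg (PowerSeries.coeff 1) hg
    rw [map_sub, PowerSeries.coeff_C, if_neg one_ne_zero, sub_zero, ← zero_add 1,
      PowerSeries.coeff_succ_X_mul, PowerSeries.coeff_zero_eq_constantCoeff_apply] at this
    rwa [← this]
  have hdvd : PowerSeries.X ∣ g ^ m * aeval f Q := by
    have := (pow_dvd_pow _ hmn).trans h
    rw [hQ, map_mul, map_pow, map_sub, aeval_X, aeval_C, ← PowerSeries.C_eq_algebraMap, hg,
      mul_pow, mul_assoc, pow_succ] at this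
    exact (mul_dvd_mul_iff_left (pow_ne_zero _ PowerSeries.X_ne_zero)).1 this
  rw [PowerSeries.X_dvd_iff, map_mul, map_pow, mul_eq_zero_iff_left (pow_ne_zero _ hg0),
    aeval_def, hom_eval₂, ← ha] at hdvd
  refine absurd (dvd_iff_isRoot.2 ?_) hQa
  rw [IsRoot.def, ← hdvd, eval]
  congr 1

theorem binomialSeries_nat_mul {R A : Type*} [CommRing R] [BinomialRing R] [Ring A] [Algebra R A]
    (n : ℕ) (r : R) :
    PowerSeries.binomialSeries A (n * r) = PowerSeries.binomialSeries A r ^ n := by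
  induction n with
  | zero => simp
  | succ n ih => rw [Nat.cast_succ, add_one_mul, PowerSeries.binomialSeries_add, ih, pow_succ]

theorem X_sub_one_pow_dvd_expand_padePoly_sub {s : ℕ} (hs : s ≠ 0) (k : ℕ) :
    (X - 1) ^ (2 * k + 1) ∣
      expand ℚ s (padePoly (1 / s) k) - X * expand ℚ s (padePoly (-(1 / s)) k) := by
  set F := PowerSeries.binomialSeries ℚ (1 / s : ℚ)
  have hF : F ^ s = 1 + PowerSeries.X := by
    rw [← binomialSeries_nat_mul, mul_one_div_cancel (by exact_mod_cast hs), ← Nat.cast_one,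
      PowerSeries.binomialSeries_nat, pow_one]
  have hF1 : PowerSeries.coeff 1 F ≠ 0 := by simpa [F] using hs
  suffices h : PowerSeries.X ^ (2 * k + 1) ∣ aeval F
      (expand ℚ s (padePoly (1 / s) k) - X * expand ℚ s (padePoly (-(1 / s)) k)) by
    simpa [F] using X_sub_C_pow_dvd_of_X_pow_dvd_aeval hF1 h
  rw [map_sub, map_mul, expand_aeval, expand_aeval, aeval_X, hF]
  exact X_pow_dvd_aeval_padePoly_sub _ _

theorem natDegree_padePoly_le (ν : ℚ) (k : ℕ) : (padePoly ν k).natDegree ≤ k :=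
  natDegree_sum_le_of_forall_le _ _ fun _ h ↦
    (natDegree_monomial_le _).trans (HasAntidiagonal.antidiagonal.fst_le h)

theorem coeff_padePoly (ν : ℚ) {i j k : ℕ} (h : i + j = k) :
    (padePoly ν k).coeff i = Ring.choose (k + ν) i * Ring.choose (k - ν) j := by
  rw [padePoly, finsetSum_coeff, sum_eq_single_of_mem (i, j) (mem_antidiagonal.2 h),
    coeff_monomial_same]
  intro ij hij hne
  refine coeff_monomial_of_ne _ fun hi ↦ hne ?_
  exact (HasAntidiagonal.antidiagonal_congr hij (mem_antidiagonal.2 h)).2 hi.symm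

theorem coeff_zero_padePoly_mul_sub_ne_zero {ν : ℚ} (hν : ∀ n : ℤ, ν ≠ n) (k : ℕ) :
    (padePoly ν k * padePoly (-ν) (k + 1) - padePoly ν (k + 1) * padePoly (-ν) k).coeff 0 ≠ 0 := by
  have hne {r : ℚ} (hr : ∀ n : ℤ, r ≠ n) : Ring.choose (k + r) k ≠ 0 :=
    ring_choose_ne_zero fun i _ h ↦ hr (i - k) (by push_cast; linarith)
  have hν0 : ν ≠ 0 := by simpa using hν 0
  have hν' (n : ℤ) : -ν ≠ n := fun h ↦ hν (-n) (by push_cast; linarith)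
  have hsucc (r : ℚ) : (k + 1) * Ring.choose ((k + 1 : ℕ) + r) (k + 1) =
      (k + 1 + r) * Ring.choose (k + r) k := by
    have := Ring.choose_smul_choose ((k + 1 : ℕ) + r) (Nat.le_add_left 1 k)
    rw [nsmul_eq_mul, Nat.choose_one_right, Ring.choose_one_right, Nat.add_sub_cancel] at this
    convert this using 2 <;> push_cast <;> ring_nf
  have h : (k + 1) * (padePoly ν k * padePoly (-ν) (k + 1) -
      padePoly ν (k + 1) * padePoly (-ν) k).coeff 0 =
        2 * ν * (Ring.choose (k + ν) k * Ring.choose (k + -ν) k) := by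
    rw [coeff_sub, mul_coeff_zero, mul_coeff_zero]
    simp only [coeff_padePoly _ (zero_add _), Ring.choose_zero_right, one_mul, sub_neg_eq_add,
      sub_eq_add_neg _ ν]
    linear_combination Ring.choose (k + -ν) k * hsucc ν - Ring.choose (k + ν) k * hsucc (-ν)
  refine right_ne_zero_of_mul (a := (k + 1 : ℚ)) (h ▸ ?_)
  exact mul_ne_zero (mul_ne_zero two_ne_zero hν0) (mul_ne_zero (hne hν) (hne hν'))

theorem X_sub_one_pow_dvd_padePoly_mul_sub (ν : ℚ) (k : ℕ) :
    (X - 1) ^ (2 * k + 1) ∣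
      padePoly ν k * padePoly (-ν) (k + 1) - padePoly ν (k + 1) * padePoly (-ν) k := by
  suffices h : PowerSeries.X ^ (2 * k + 1) ∣ aeval (1 + PowerSeries.X : PowerSeries ℚ)
      (padePoly ν k * padePoly (-ν) (k + 1) - padePoly ν (k + 1) * padePoly (-ν) k) by
    simpa using X_sub_C_pow_dvd_of_X_pow_dvd_aeval (by simp) h
  have h₁ := (X_pow_dvd_aeval_padePoly_sub ν k).mul_right
    (aeval (1 + PowerSeries.X) (padePoly (-ν) (k + 1)))
  have h₂ := ((pow_dvd_pow _ (by omega : 2 * k + 1 ≤ 2 * (k + 1) + 1)).trans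
    (X_pow_dvd_aeval_padePoly_sub ν (k + 1))).mul_right
      (aeval (1 + PowerSeries.X) (padePoly (-ν) k))
  convert dvd_sub h₁ h₂ using 1
  simp only [map_sub, map_mul]
  ring

theorem exists_padePoly_mul_sub_eq {ν : ℚ} (hν : ∀ n : ℤ, ν ≠ n) (k : ℕ) :
    ∃ c : ℚ, c ≠ 0 ∧
      padePoly ν k * padePoly (-ν) (k + 1) - padePoly ν (k + 1) * padePoly (-ν) k =
        C c * (X - 1) ^ (2 * k + 1) := by
  obtain ⟨Q, hQ⟩ := X_sub_one_pow_dvd_padePoly_mul_sub ν k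
  have hcoeff := coeff_zero_padePoly_mul_sub_ne_zero hν k
  have hQ0 : Q ≠ 0 := by
    rintro rfl
    rw [hQ, mul_zero, coeff_zero] at hcoeff
    exact hcoeff rfl
  have hdeg : (padePoly ν k * padePoly (-ν) (k + 1) -
      padePoly ν (k + 1) * padePoly (-ν) k).natDegree ≤ 2 * k + 1 := by
    have h {i j : ℕ} (hij : i + j = 2 * k + 1) :
        (padePoly ν i * padePoly (-ν) j).natDegree ≤ 2 * k + 1 :=
      hij ▸ natDegree_mul_le_of_le (natDegree_padePoly_le ν i) (natDegree_padePoly_le (-ν) j)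
    exact (natDegree_sub_le_of_le (h (i := k) (j := k + 1) (by omega))
      (h (i := k + 1) (j := k) (by omega))).trans_eq (max_self _)
  have hmonic : ((X - 1 : ℚ[X]) ^ (2 * k + 1)).Monic := (monic_X_sub_C 1).pow _
  have hX : ((X - 1 : ℚ[X]) ^ (2 * k + 1)).natDegree = 2 * k + 1 := by
    rw [natDegree_pow, ← C_1, natDegree_X_sub_C, mul_one]
  rw [hQ, hmonic.natDegree_mul' hQ0, hX] at hdeg
  obtain ⟨c, rfl⟩ := natDegree_eq_zero.1 (by omega : Q.natDegree = 0)
  exact ⟨c, by simpa using hQ0, by rw [hQ, mul_comm]⟩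
end PadeApproximants

section Integrality

theorem pow_dvd_prod_of_not_dvd {q n v : ℕ} (hq : q.Prime) (hv : q ^ v ∣ n.factorial) {s : ℤ}
    (hs : ¬ (q : ℤ) ∣ s) (a : ℤ) : (q ^ v : ℤ) ∣ ∏ i ∈ range n, (a - s * i) := by
  obtain ⟨t, u, htu⟩ : IsCoprime s (q ^ v) :=
    ((Nat.prime_iff_prime_int.1 hq).coprime_iff_not_dvd.2 hs).symm.pow_right
  -- Modulo `q ^ v` the product is `s ^ n * n ! * choose (t * a) n`, with `t` the inverse of `s`.
  have hdvd : (q ^ v : ℤ) ∣ ∏ i ∈ range n, (s * (t * a - i)) := by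
    rw [prod_mul_distrib, ← factorial_mul_ring_choose]
    exact (mod_cast hv : (q ^ v : ℤ) ∣ n.factorial).trans ⟨_, mul_left_comm ..⟩
  refine (Int.ModEq.dvd_iff (Int.ModEq.prod fun i _ ↦ ?_)).1 hdvd
  exact Int.modEq_iff_dvd.2 ⟨u * a, by linear_combination -a * htu⟩

theorem factorial_dvd_pow_mul_prod (s a : ℤ) (n : ℕ) :
    (n.factorial : ℤ) ∣ s ^ n * ∏ i ∈ range n, (a - s * i) := by
  rw [Int.natCast_dvd, Nat.dvd_iff_prime_pow_dvd_dvd]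
  intro q v hq hv
  rw [← Int.natCast_dvd, Nat.cast_pow]
  by_cases hs : (q : ℤ) ∣ s
  · have : Fact q.Prime := ⟨hq⟩
    have hvn : v ≤ n :=
      ((padicValNat_dvd_iff_le n.factorial_ne_zero).1 hv).trans (padicValNat_factorial_le q n)
    exact ((pow_dvd_pow _ hvn).trans (pow_dvd_pow_of_dvd hs n)).mul_right _
  · exact (pow_dvd_prod_of_not_dvd hq hv hs a).mul_left _

/-- The integer `s ^ (2 * n) * Ring.choose (a / s) n`, written as a quotient that is exact by
`factorial_dvd_pow_mul_prod`. -/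
def rootChoose (s a : ℤ) (n : ℕ) : ℤ :=
  s ^ n * (∏ i ∈ range n, (a - s * i)) / n.factorial

theorem cast_rootChoose {s : ℤ} (hs : s ≠ 0) (a : ℤ) (n : ℕ) :
    (rootChoose s a n : ℚ) = s ^ (2 * n) * Ring.choose (a / s : ℚ) n := by
  have hs' : (s : ℚ) ≠ 0 := by exact_mod_cast hs
  rw [rootChoose, Int.cast_div (factorial_dvd_pow_mul_prod s a n) (by positivity),
    div_eq_iff (by positivity), mul_assoc]
  push_cast
  rw [mul_comm (Ring.choose _ _), factorial_mul_ring_choose, two_mul, pow_add, mul_assoc]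
  congr 1
  rw [← card_range n, ← prod_const, card_range, ← prod_mul_distrib]
  refine prod_congr rfl fun i _ ↦ ?_
  field_simp

theorem rootChoose_nonneg {s a : ℤ} (hs : 0 ≤ s) {n : ℕ} (h : s * (n - 1) ≤ a) :
    0 ≤ rootChoose s a n := by
  refine Int.ediv_nonneg (mul_nonneg (pow_nonneg hs _) (prod_nonneg fun i hi ↦ ?_)) (by positivity)
  have hin : (i : ℤ) + 1 ≤ n := by exact_mod_cast mem_range.1 hi
  have := mul_le_mul_of_nonneg_left (le_sub_iff_add_le.2 hin) hs
  linarith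
end Integrality

section HomogeneousEvaluation

open Polynomial

variable {R : Type*} [CommRing R]

/-- The value at `(x, y)` of the binary form of degree `k` obtained by homogenizing `P`, with `y`
in the place of the variable; coefficients of `P` of degree greater than `k` are dropped. -/
def homogEval (k : ℕ) (P : ℤ[X]) (x y : R) : R :=
  ∑ i ∈ range (k + 1), P.coeff i * (x ^ (k - i) * y ^ i)

theorem map_homogEval {S : Type*} [CommRing S] (f : R →+* S) (k : ℕ) (P : ℤ[X]) (x y : R) :
    f (homogEval k P x y) = homogEval k P (f x) (f y) := by
  simp only [homogEval, map_sum, map_mul, map_intCast, map_pow]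

theorem homogEval_self_mul {k : ℕ} {P : ℤ[X]} (hP : P.natDegree ≤ k) (x t : R) :
    homogEval k P x (x * t) = x ^ k * aeval t P := by
  rw [aeval_eq_sum_range' (Nat.lt_succ_of_le hP), mul_sum]
  refine sum_congr rfl fun i hi ↦ ?_
  rw [mul_pow, ← mul_assoc (x ^ _), ← pow_add, Nat.sub_add_cancel (mem_range_succ_iff.1 hi),
    zsmul_eq_mul, mul_left_comm]

theorem sub_dvd_homogEval_sub (k : ℕ) (P : ℤ[X]) (x y z : R) :
    y - z ∣ homogEval k P x y - homogEval k P x z := by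
  rw [homogEval, homogEval, ← sum_sub_distrib]
  refine dvd_sum fun i _ ↦ ?_
  rw [← mul_sub, ← mul_sub]
  exact ((sub_dvd_pow_sub_pow y z i).mul_left _).mul_left _

theorem norm_homogEval_le {k : ℕ} {P : ℤ[X]} (hdeg : P.natDegree ≤ k)
    (hP : ∀ i, 0 ≤ P.coeff i) {x y : ℂ} {M : ℝ} (hx : ‖x‖ ≤ M) (hy : ‖y‖ ≤ M) :
    ‖homogEval k P x y‖ ≤ P.eval 1 * M ^ k := by
  rw [eval_eq_sum_range' (Nat.lt_succ_of_le hdeg), Int.cast_sum, sum_mul]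
  refine norm_sum_le_of_le _ fun i hi ↦ ?_
  rw [norm_mul, norm_mul, norm_pow, norm_pow, Complex.norm_intCast, one_pow, mul_one,
    abs_of_nonneg (by exact_mod_cast hP i),
    ← pow_sub_mul_pow M (mem_range_succ_iff.1 hi)]
  have hM := (norm_nonneg x).trans hx
  have := hP i
  gcongr

end HomogeneousEvaluation

section IntegralPade

open Polynomial

/-- The integral form `s ^ (2 * k) * padePoly (c / s) k` of `padePoly`, with the denominators of
the binomial coefficients cleared by `rootChoose`. -/
noncomputable def intPadePoly (s : ℕ) (c : ℤ) (k : ℕ) : ℤ[X] :=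
  ∑ ij ∈ antidiagonal k,
    monomial ij.1 (rootChoose s (s * k + c) ij.1 * rootChoose s (s * k - c) ij.2)

theorem natDegree_intPadePoly_le (s : ℕ) (c : ℤ) (k : ℕ) : (intPadePoly s c k).natDegree ≤ k :=
  natDegree_sum_le_of_forall_le _ _ fun _ h ↦
    (natDegree_monomial_le _).trans (HasAntidiagonal.antidiagonal.fst_le h)

theorem map_intPadePoly {s : ℕ} (hs : s ≠ 0) (c : ℤ) (k : ℕ) :
    (intPadePoly s c k).map (algebraMap ℤ ℚ) = C (s ^ (2 * k) : ℚ) * padePoly (c / s) k := by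
  have hs' : (s : ℚ) ≠ 0 := by exact_mod_cast hs
  rw [intPadePoly, padePoly, Polynomial.map_sum, mul_sum]
  refine sum_congr rfl fun ij h ↦ ?_
  rw [map_monomial, C_mul_monomial, ← mem_antidiagonal.1 h, algebraMap_int_eq, eq_intCast,
    Int.cast_mul, cast_rootChoose (by exact_mod_cast hs), cast_rootChoose (by exact_mod_cast hs)]
  congr 1
  push_cast
  rw [add_div, sub_div, mul_div_cancel_left₀ _ hs']
  ring

theorem coeff_intPadePoly_nonneg {s : ℕ} {c : ℤ} (hc : |c| ≤ s) (k i : ℕ) :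
    0 ≤ (intPadePoly s c k).coeff i := by
  rw [intPadePoly, finsetSum_coeff]
  refine sum_nonneg fun ij h ↦ ?_
  rw [coeff_monomial]
  have hle {j : ℕ} (hj : j ≤ k) : (s : ℤ) * (j - 1) ≤ s * k - |c| := by
    have : (s : ℤ) * j ≤ s * k := by gcongr
    linarith
  split_ifs
  · refine mul_nonneg (rootChoose_nonneg (by positivity) ?_) (rootChoose_nonneg (by positivity) ?_)
    · linarith [hle (HasAntidiagonal.antidiagonal.fst_le h), neg_abs_le c]
    · linarith [hle (HasAntidiagonal.antidiagonal.snd_le h), le_abs_self c]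
  · rfl

theorem eval_one_padePoly (ν : ℚ) (k : ℕ) : (padePoly ν k).eval 1 = (2 * k).choose k := by
  simp only [padePoly, eval_finsetSum, eval_monomial, one_pow, mul_one]
  rw [← Ring.add_choose_eq k (Commute.all _ _), add_add_sub_cancel, ← Nat.cast_add, ← two_mul,
    Ring.choose_natCast]

theorem eval_one_intPadePoly {s : ℕ} (hs : s ≠ 0) (c : ℤ) (k : ℕ) :
    (intPadePoly s c k).eval 1 = s ^ (2 * k) * (2 * k).choose k := by
  have h := congrArg (eval 1) (map_intPadePoly hs c k)
  rw [eval_one_map, eval_mul, eval_C, eval_one_padePoly, eq_intCast] at h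
  exact_mod_cast h

theorem X_sub_one_pow_dvd_expand_intPadePoly_sub {s : ℕ} (hs : s ≠ 0) (k : ℕ) :
    (X - 1) ^ (2 * k + 1) ∣
      expand ℤ s (intPadePoly s 1 k) - X * expand ℤ s (intPadePoly s (-1) k) := by
  have hmonic : ((X - 1 : ℤ[X]) ^ (2 * k + 1)).Monic := (monic_X_sub_C 1).pow _
  refine (map_dvd_map (algebraMap ℤ ℚ) (RingHom.injective_int _) hmonic).1 ?_
  have h := (X_sub_one_pow_dvd_expand_padePoly_sub hs k).mul_left (C (s ^ (2 * k) : ℚ))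
  rw [mul_sub, mul_left_comm, ← expand_C s, ← map_mul, ← map_mul] at h
  simpa only [Polynomial.map_pow, Polynomial.map_sub, Polynomial.map_mul, map_X, Polynomial.map_one,
    map_expand, map_intPadePoly hs, Int.cast_one, Int.cast_neg, neg_div] using h

theorem aeval_intPadePoly_mul_sub_ne_zero {K : Type*} [Field K] [CharZero K] {s : ℕ} (hs : 2 ≤ s)
    (k : ℕ) {t : K} (ht : t ≠ 1) :
    aeval t (intPadePoly s 1 k) * aeval t (intPadePoly s (-1) (k + 1)) -
      aeval t (intPadePoly s 1 (k + 1)) * aeval t (intPadePoly s (-1) k) ≠ 0 := by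
  have hs0 : s ≠ 0 := by omega
  have hν (n : ℤ) : (1 / s : ℚ) ≠ n := by
    intro h
    rw [div_eq_iff (by exact_mod_cast hs0)] at h
    have : (s : ℤ) ∣ 1 := ⟨n, by rw [mul_comm]; exact_mod_cast h⟩
    have := Int.le_of_dvd one_pos this
    omega
  obtain ⟨a, ha, h⟩ := exists_padePoly_mul_sub_eq hν k
  have hdet := congrArg (aeval t) h
  simp only [map_sub, map_mul, map_pow, aeval_X, aeval_C, map_one] at hdet
  have haeval (c : ℤ) (j : ℕ) : aeval t (intPadePoly s c j) =
      s ^ (2 * j) * aeval t (padePoly (c / s) j) := by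
    rw [← aeval_map_algebraMap ℚ, map_intPadePoly hs0, map_mul, aeval_C, map_pow, map_natCast]
  rw [haeval, haeval, haeval, haeval, Int.cast_neg, Int.cast_one, neg_div]
  have hs' : (s : K) ≠ 0 := by exact_mod_cast hs0
  have ha' : algebraMap ℚ K a ≠ 0 := by simpa using ha
  convert mul_ne_zero (pow_ne_zero (2 * k + 2 * (k + 1)) hs')
    (mul_ne_zero ha' (pow_ne_zero (2 * k + 1) (sub_ne_zero.2 ht))) using 1
  rw [← hdet]
  ring

theorem pow_dvd_homogEval_intPadePoly_sub {R : Type*} [CommRing R] {s k : ℕ} (hs : s ≠ 0)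
    {x y w b : R} (hb : w ∣ b - 1) (h : w ^ (2 * k + 1) ∣ x * b ^ s - y) :
    w ^ (2 * k + 1) ∣ homogEval k (intPadePoly s 1 k) x y -
      homogEval k (intPadePoly s (-1) k) x y * b := by
  have hpade := _root_.map_dvd (aeval b) (X_sub_one_pow_dvd_expand_intPadePoly_sub hs k)
  simp only [map_pow, map_sub, map_mul, aeval_X, map_one, expand_aeval] at hpade
  have hform := ((pow_dvd_pow_of_dvd hb _).trans hpade).mul_left (x ^ k)
  rw [mul_sub, mul_left_comm, ← homogEval_self_mul (natDegree_intPadePoly_le s 1 k),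
    ← homogEval_self_mul (natDegree_intPadePoly_le s (-1) k), mul_comm b] at hform
  have hcongr (P : ℤ[X]) := h.trans (sub_dvd_homogEval_sub k P x (x * b ^ s) y)
  convert dvd_add (dvd_sub hform (hcongr (intPadePoly s 1 k)))
    ((hcongr (intPadePoly s (-1) k)).mul_right b) using 1
  ring

theorem homogEval_intPadePoly_mul_sub_ne_zero {K : Type*} [Field K] [CharZero K] {s : ℕ}
    (hs : 2 ≤ s) (k : ℕ) {x y : K} (hx : x ≠ 0) (hxy : x ≠ y) :
    homogEval k (intPadePoly s 1 k) x y * homogEval (k + 1) (intPadePoly s (-1) (k + 1)) x y -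
      homogEval (k + 1) (intPadePoly s 1 (k + 1)) x y * homogEval k (intPadePoly s (-1) k) x y
        ≠ 0 := by
  obtain ⟨t, rfl⟩ : ∃ t, y = x * t := ⟨y / x, (mul_div_cancel₀ y hx).symm⟩
  have ht : t ≠ 1 := by
    rintro rfl
    exact hxy (mul_one x).symm
  simp only [homogEval_self_mul (natDegree_intPadePoly_le _ _ _)]
  convert mul_ne_zero (pow_ne_zero (2 * k + 1) hx) (aeval_intPadePoly_mul_sub_ne_zero hs k ht)
    using 1
  ring

theorem norm_homogEval_intPadePoly_le {s : ℕ} (hs : s ≠ 0) {c : ℤ} (hc : |c| ≤ s) (k : ℕ)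
    {x y : ℂ} {M : ℝ} (hx : ‖x‖ ≤ M) (hy : ‖y‖ ≤ M) :
    ‖homogEval k (intPadePoly s c k) x y‖ ≤ (4 * s ^ 2 * M) ^ k := by
  have hM := (norm_nonneg x).trans hx
  refine (norm_homogEval_le (natDegree_intPadePoly_le s c k) (coeff_intPadePoly_nonneg hc k)
    hx hy).trans ?_
  have hchoose : ((2 * k).choose k : ℝ) ≤ 4 ^ k := by
    have := Nat.choose_le_two_pow (2 * k) k
    rw [pow_mul] at this
    exact_mod_cast this
  rw [eval_one_intPadePoly hs]
  push_cast
  calc (s : ℝ) ^ (2 * k) * (2 * k).choose k * M ^ k ≤ s ^ (2 * k) * 4 ^ k * M ^ k := by gcongr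
    _ = (4 * s ^ 2 * M) ^ k := by ring

end IntegralPade

section ImaginaryQuadratic

variable {d : ℤ}

theorem exists_ringHom_complex_norm_sq (hd : d < 0) :
    ∃ f : ℤ√d →+* ℂ, ∀ z, ‖f z‖ ^ 2 = z.norm := by
  have hd' : (0 : ℝ) ≤ -d := by exact_mod_cast (neg_pos.2 hd).le
  have hsq := Real.mul_self_sqrt hd'
  refine ⟨Zsqrtd.lift ⟨√(-d : ℝ) * Complex.I, ?_⟩, fun z ↦ ?_⟩
  · rw [mul_mul_mul_comm, Complex.I_mul_I, ← Complex.ofReal_mul, hsq]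
    simp
  · rw [← Complex.normSq_eq_norm_sq, Complex.normSq_apply]
    simp only [Zsqrtd.lift_apply_apply, Complex.add_re, Complex.add_im, Complex.intCast_re,
      Complex.intCast_im, Complex.mul_re, Complex.mul_im, Complex.ofReal_re, Complex.ofReal_im,
      Complex.I_re, Complex.I_im, Zsqrtd.norm_def]
    push_cast
    linear_combination (z.im : ℝ) ^ 2 * hsq

theorem zsqrtd_norm_pow (z : ℤ√d) (n : ℕ) : (z ^ n).norm = z.norm ^ n :=
  map_pow Zsqrtd.normMonoidHom z n

theorem zsqrtd_norm_le_norm_of_dvd (hd : d < 0) {w z : ℤ√d} (h : w ∣ z) (hz : z ≠ 0) :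
    w.norm ≤ z.norm := by
  have hpos : 0 < z.norm :=
    (Zsqrtd.norm_nonneg hd.le z).lt_of_ne' (mt (Zsqrtd.norm_eq_zero_iff hd z).1 hz)
  exact Int.le_of_dvd hpos (_root_.map_dvd Zsqrtd.normMonoidHom h)

theorem norm_pow_le_of_homogEval_sub_ne_zero (hd : d < 0) {s k : ℕ} (hs : s ≠ 0) {x y w b : ℤ√d}
    (hyx : y.norm ≤ x.norm) (hb0 : b ≠ 0) (hb : w ∣ b - 1) (hw : w ^ (2 * k + 1) ∣ x * b ^ s - y)
    (hne : homogEval k (intPadePoly s 1 k) x y - homogEval k (intPadePoly s (-1) k) x y * b ≠ 0) :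
    w.norm ^ (2 * k + 1) ≤ 4 * (4 * s ^ 2) ^ (2 * k) * x.norm ^ k * b.norm := by
  obtain ⟨f, hf⟩ := exists_ringHom_complex_norm_sq hd
  have hs1 : (1 : ℤ) ≤ s := by exact_mod_cast Nat.one_le_iff_ne_zero.2 hs
  have hfyx : ‖f y‖ ≤ ‖f x‖ := by
    refine (pow_le_pow_iff_left₀ (norm_nonneg _) (norm_nonneg _) two_ne_zero).1 ?_
    rw [hf, hf]
    exact_mod_cast hyx
  have hfb : 1 ≤ ‖f b‖ := by
    refine (one_le_sq_iff₀ (norm_nonneg _)).1 ?_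
    rw [hf]
    exact_mod_cast Zsqrtd.norm_one (d := d) ▸ zsqrtd_norm_le_norm_of_dvd hd (one_dvd b) hb0
  set K := (4 * s ^ 2 * ‖f x‖) ^ k with hK
  have hbound {c : ℤ} (hc : |c| ≤ s) : ‖f (homogEval k (intPadePoly s c k) x y)‖ ≤ K := by
    rw [map_homogEval]
    exact norm_homogEval_intPadePoly_le hs hc k le_rfl hfyx
  have hle := zsqrtd_norm_le_norm_of_dvd hd (pow_dvd_homogEval_intPadePoly_sub hs hb hw) hne
  rw [zsqrtd_norm_pow] at hle
  suffices h : ((w.norm ^ (2 * k + 1) : ℤ) : ℝ) ≤ 4 * (4 * s ^ 2) ^ (2 * k) * x.norm ^ k * b.norm by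
    exact_mod_cast h
  calc ((w.norm ^ (2 * k + 1) : ℤ) : ℝ)
      ≤ ‖f (homogEval k (intPadePoly s 1 k) x y -
          homogEval k (intPadePoly s (-1) k) x y * b)‖ ^ 2 := by
        rw [hf]
        exact_mod_cast hle
    _ ≤ (K * ‖f b‖ + K * ‖f b‖) ^ 2 := by
        gcongr
        rw [map_sub, map_mul]
        refine (norm_sub_le _ _).trans (add_le_add ?_ ?_)
        · exact (hbound (by simpa using hs1)).trans (le_mul_of_one_le_right (by positivity) hfb)
        · rw [norm_mul]
          gcongr
          exact hbound (by simpa using hs1)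
    _ = 4 * (4 * s ^ 2) ^ (2 * k) * (‖f x‖ ^ 2) ^ k * ‖f b‖ ^ 2 := by
        rw [hK]
        ring
    _ = _ := by rw [hf, hf]

theorem homogEval_sub_ne_zero_or (hd : d < 0) {s : ℕ} (hs : 2 ≤ s) (k : ℕ) {x y : ℤ√d}
    (hx : x ≠ 0) (hxy : x ≠ y) (b : ℤ√d) :
    homogEval k (intPadePoly s 1 k) x y - homogEval k (intPadePoly s (-1) k) x y * b ≠ 0 ∨
      homogEval (k + 1) (intPadePoly s 1 (k + 1)) x y -
        homogEval (k + 1) (intPadePoly s (-1) (k + 1)) x y * b ≠ 0 := by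
  obtain ⟨f, hf⟩ := exists_ringHom_complex_norm_sq hd
  have hinj : Function.Injective f := by
    refine (injective_iff_map_eq_zero f).2 fun z hz ↦ (Zsqrtd.norm_eq_zero_iff hd z).1 ?_
    have := hf z
    rw [hz, norm_zero, zero_pow two_ne_zero] at this
    exact_mod_cast this.symm
  by_contra! ⟨h₀, h₁⟩
  refine homogEval_intPadePoly_mul_sub_ne_zero hs k ((map_ne_zero_iff f hinj).2 hx)
    (hinj.ne hxy) ?_
  simp only [← map_homogEval, ← map_mul, ← map_sub]
  rw [sub_eq_zero.1 h₀, sub_eq_zero.1 h₁]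
  convert map_zero f using 2
  ring

theorem exists_norm_pow_le (hd : d < 0) {s : ℕ} (hs : 2 ≤ s) {k : ℕ} {x y w b : ℤ√d}
    (hx : x ≠ 0) (hxy : x ≠ y) (hyx : y.norm ≤ x.norm) (hb0 : b ≠ 0) (hb : w ∣ b - 1)
    (hw : w ^ (2 * k + 3) ∣ x * b ^ s - y) :
    ∃ j, (j = k ∨ j = k + 1) ∧
      w.norm ^ (2 * j + 1) ≤ 4 * (4 * s ^ 2) ^ (2 * j) * x.norm ^ j * b.norm := by
  have hs0 : s ≠ 0 := by omega
  rcases homogEval_sub_ne_zero_or hd hs k hx hxy b with hne | hne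
  · exact ⟨k, Or.inl rfl, norm_pow_le_of_homogEval_sub_ne_zero hd hs0 hyx hb0 hb
      ((pow_dvd_pow w (by omega)).trans hw) hne⟩
  · exact ⟨k + 1, Or.inr rfl, norm_pow_le_of_homogEval_sub_ne_zero hd hs0 hyx hb0 hb hw hne⟩

theorem norm_le_of_star_pow_dvd (hd : d < 0) {l : ℕ} (hl : l ≠ 0) {x y b : ℤ√d} (hxy : x ≠ y)
    (hyx : y.norm ≤ x.norm) (hbx : b.norm = x.norm ^ l) (hb : star x ∣ b - 1)
    (h : star x ^ (4 * l + 1) ∣ x * b ^ 4 - y) : x.norm ≤ 2 ^ 26 := by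
  rcases eq_or_ne x 0 with rfl | hx
  · simp
  have hx1 : 1 ≤ x.norm := Zsqrtd.norm_one (d := d) ▸ zsqrtd_norm_le_norm_of_dvd hd (one_dvd x) hx
  have hb0 : b ≠ 0 := by
    rintro rfl
    rw [Zsqrtd.norm_zero] at hbx
    exact (pow_pos hx1 l).ne hbx
  obtain ⟨j, hj, hle⟩ := exists_norm_pow_le hd (s := 4) (by norm_num) (k := 2 * l - 1) hx hxy hyx
    hb0 hb (by rwa [show 2 * (2 * l - 1) + 3 = 4 * l + 1 by omega])
  have hjl : 2 * l ≤ j + 1 ∧ j ≤ 2 * l := by omega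
  rw [Zsqrtd.norm_conj, hbx] at hle
  have hpow : x.norm ^ l ≤ (2 ^ 26) ^ l := by
    refine le_of_mul_le_mul_left ?_ (pow_pos hx1 (j + l))
    calc x.norm ^ (j + l) * x.norm ^ l ≤ x.norm ^ (2 * j + 1) := by
          rw [← pow_add]
          exact pow_le_pow_right₀ hx1 (by omega)
      _ ≤ 4 * 64 ^ (2 * j) * x.norm ^ j * x.norm ^ l := hle
      _ ≤ 4 ^ l * 64 ^ (2 * (2 * l)) * x.norm ^ j * x.norm ^ l := by
          gcongr
          · exact le_self_pow₀ (by norm_num) hl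
          · norm_num
          · exact hjl.2
      _ = x.norm ^ (j + l) * (2 ^ 26) ^ l := by
          rw [← mul_assoc 2, pow_mul, ← mul_pow]
          norm_num
          ring
  exact (pow_le_pow_iff_left₀ (by omega) (by norm_num) hl).1 hpow

end ImaginaryQuadratic

section TraceOfPowers

theorem mul_dvd_add_pow_sub_add_pow {R : Type*} [CommRing R] (x y : R) {n : ℕ} (hn : n ≠ 0) :
    x * y ∣ (x + y) ^ n - (x ^ n + y ^ n) := by
  induction n with
  | zero => contradiction
  | succ n ih =>
    rcases eq_or_ne n 0 with rfl | hn0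
    · simp
    obtain ⟨z, hz⟩ := ih hn0
    obtain ⟨k, rfl⟩ := Nat.exists_eq_add_one_of_ne_zero hn0
    exact ⟨(x + y) * z + y ^ k + x ^ k, by linear_combination (x + y) * hz⟩

variable {d : ℤ}

theorem add_star_eq_two_mul_re (x : ℤ√d) : x + star x = ((2 * x.re : ℤ) : ℤ√d) := by
  ext
  · rw [Zsqrtd.re_add, Zsqrtd.re_star, Zsqrtd.re_intCast, two_mul]
  · rw [Zsqrtd.im_add, Zsqrtd.im_star, Zsqrtd.im_intCast, add_neg_cancel]

theorem norm_dvd_two_mul_re_pow_sub (x : ℤ√d) {n : ℕ} (hn : n ≠ 0) :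
    x.norm ∣ (2 * x.re) ^ n - 2 * (x ^ n).re := by
  have h := mul_dvd_add_pow_sub_add_pow x (star x) hn
  rw [← Zsqrtd.norm_eq_mul_conj, ← star_pow, add_star_eq_two_mul_re, add_star_eq_two_mul_re] at h
  exact_mod_cast h

theorem norm_dvd_two_mul_re_pow_pred_sub {x : ℤ√d} (hx : IsCoprime x.norm (2 * x.re)) {n : ℕ}
    (hn : n ≠ 0) {e : ℤ} (he : (x ^ n).re = e * x.re) :
    x.norm ∣ (2 * x.re) ^ (n - 1) - e := by
  have h := norm_dvd_two_mul_re_pow_sub x hn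
  rw [he, mul_left_comm, ← pow_sub_one_mul hn, ← sub_mul] at h
  exact hx.dvd_of_dvd_mul_right h

theorem re_dvd_re_pow (x : ℤ√d) {n : ℕ} (hn : Odd n) : x.re ∣ (x ^ n).re := by
  have h := hn.add_dvd_pow_add_pow x (star x)
  rw [← star_pow, add_star_eq_two_mul_re, add_star_eq_two_mul_re, Zsqrtd.intCast_dvd_intCast] at h
  exact (mul_dvd_mul_iff_left two_ne_zero).1 h

theorem re_pow_three (x : ℤ√d) : (x ^ 3).re = 4 * x.re ^ 3 - 3 * x.re * x.norm := by
  simp only [pow_succ, pow_zero, one_mul, Zsqrtd.re_mul, Zsqrtd.im_mul, Zsqrtd.norm_def]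
  ring

theorem four_dvd_pow_four_sub_one {x : ℤ√d} (hx : 4 ∣ x.norm + 1) :
    ((4 : ℤ) : ℤ√d) ∣ x ^ 4 - 1 := by
  have hsq : x ^ 2 = 2 * x.re * x - x.norm := by
    have h := add_star_eq_two_mul_re x
    push_cast at h
    rw [← h, Zsqrtd.norm_eq_mul_conj]
    ring
  obtain ⟨w, hw⟩ := hx
  rw [eq_sub_of_add_eq hw] at hsq
  refine ⟨x.re ^ 2 * x ^ 2 - x.re * x * (4 * w - 1) + 4 * w ^ 2 - 2 * w, ?_⟩
  push_cast at hsq ⊢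
  linear_combination (x ^ 2 + 2 * (x.re : ℤ√d) * x - (4 * w - 1)) * hsq

theorem mod_four_eq_one_of_re_pow_eq {x : ℤ√d} {n : ℕ} (hn : Odd n) (hre : Odd x.re)
    (hnorm : 4 ∣ x.norm + 1) (hx : (x ^ n).re = x.re) : n % 4 = 1 := by
  by_contra hne
  obtain ⟨t, rfl⟩ : ∃ t, n = 4 * t + 3 := ⟨n / 4, by have := Nat.odd_iff.1 hn; omega⟩
  have hpow : ((4 : ℤ) : ℤ√d) ∣ x ^ (4 * t + 3) - x ^ 3 := by
    have h := (four_dvd_pow_four_sub_one hnorm).trans (sub_one_dvd_pow_sub_one (x ^ 4) t)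
    convert h.mul_right (x ^ 3) using 1
    ring
  have hmod := ((Zsqrtd.intCast_dvd _ _).1 hpow).1
  rw [Zsqrtd.re_sub, hx, re_pow_three] at hmod
  have hcube : 4 ∣ 4 * x.re ^ 3 - 3 * x.re * (x.norm + 1) :=
    dvd_sub (dvd_mul_right ..) (hnorm.mul_left _)
  have htwo : 4 ∣ 2 * x.re := by
    rw [← dvd_neg]
    convert dvd_add hmod hcube using 1
    ring
  obtain ⟨a, ha⟩ := hre
  omega

theorem star_dvd_intCast_mul_pow_sub_one {x : ℤ√d} {l : ℕ} {e : ℤ} (he : e * e = 1)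
    (h : x.norm ∣ (2 * x.re) ^ l - e) : star x ∣ e * x ^ l - 1 := by
  have hx : star x ∣ x ^ l - (((2 * x.re) ^ l : ℤ) : ℤ√d) := by
    rw [Int.cast_pow, ← add_star_eq_two_mul_re, dvd_sub_comm]
    simpa using sub_dvd_pow_sub_pow (x + star x) x l
  have hnorm : star x ∣ (((2 * x.re) ^ l - e : ℤ) : ℤ√d) := by
    rw [← Zsqrtd.intCast_dvd_intCast (d := d), Zsqrtd.norm_eq_mul_conj] at h
    exact (dvd_mul_left _ _).trans h
  have he' : (e * e : ℤ√d) = 1 := by exact_mod_cast he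
  convert (dvd_add hx hnorm).mul_left (e : ℤ√d) using 1
  push_cast
  linear_combination he'

theorem norm_le_of_re_pow_eq (hd : d < 0) {l : ℕ} (hl : l ≠ 0) {x : ℤ√d}
    (hx : (x ^ (4 * l + 1)).re = x.re) {e : ℤ} (he : e = 1 ∨ e = -1)
    (hdvd : x.norm ∣ (2 * x.re) ^ l - e) (hre : (2 * x.re) ^ 2 ≤ x.norm) :
    x.norm ≤ 2 ^ 26 := by
  rcases eq_or_ne x 0 with rfl | hx0
  · simp
  have he2 : e * e = 1 := by rcases he with rfl | rfl <;> rfl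
  have he4 : (e : ℤ√d) ^ 4 = 1 := by rcases he with rfl | rfl <;> norm_num
  refine norm_le_of_star_pow_dvd hd hl (y := x + star x) (b := e * x ^ l) ?_ ?_ ?_
    (star_dvd_intCast_mul_pow_sub_one he2 hdvd) ?_
  · rw [Ne, left_eq_add, star_eq_zero]
    exact hx0
  · rwa [add_star_eq_two_mul_re, Zsqrtd.norm_intCast, ← sq]
  · rw [Zsqrtd.norm_mul, Zsqrtd.norm_intCast, he2, one_mul, zsqrtd_norm_pow]
  · have htrace : x ^ (4 * l + 1) + star x ^ (4 * l + 1) = x + star x := by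
      rw [← star_pow, add_star_eq_two_mul_re, add_star_eq_two_mul_re, hx]
    rw [mul_pow, he4, one_mul, ← pow_mul, ← pow_succ', mul_comm l, ← htrace, sub_add_cancel_left]
    exact (dvd_refl _).neg_right

end TraceOfPowers

section PrimesThreeModFour

variable {p : ℕ}

theorem not_dvd_sq_add_one (hp : p.Prime) (hmod : p % 4 = 3) (a : ℤ) : ¬ (p : ℤ) ∣ a ^ 2 + 1 := by
  have := Fact.mk hp
  rw [← ZMod.intCast_zmod_eq_zero_iff_dvd, Int.cast_add, Int.cast_pow, Int.cast_one,
    add_eq_zero_iff_eq_neg]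
  exact fun h ↦ ZMod.mod_four_ne_three_of_sq_eq_neg_one h hmod

theorem pow_dvd_sub_one_or_add_one (hp : p.Prime) (hmod : p % 4 = 3) {m : ℕ} {a : ℤ}
    (h : (p ^ m : ℤ) ∣ a ^ 4 - 1) : (p ^ m : ℤ) ∣ a - 1 ∨ (p ^ m : ℤ) ∣ a + 1 := by
  have hp' := Nat.prime_iff_prime_int.1 hp
  have dvd_of_mul {b c : ℤ} (hc : ¬ (p : ℤ) ∣ c) (hbc : (p ^ m : ℤ) ∣ b * c) :
      (p ^ m : ℤ) ∣ b :=
    ((hp'.coprime_iff_not_dvd).2 hc).pow_left.dvd_of_dvd_mul_right hbc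
  have hsq : (p ^ m : ℤ) ∣ (a - 1) * (a + 1) :=
    dvd_of_mul (not_dvd_sq_add_one hp hmod a) (by convert h using 1; ring)
  by_cases hadd : (p : ℤ) ∣ a + 1
  · refine Or.inr (dvd_of_mul (c := a - 1) (fun hsub ↦ ?_) (by rwa [mul_comm]))
    have htwo : (p : ℤ) ∣ 2 := by simpa [one_add_one_eq_two] using dvd_sub hadd hsub
    have := Int.le_of_dvd two_pos htwo
    omega
  · exact Or.inl (dvd_of_mul hadd hsq)

theorem natAbs_pow_sub_one_modEq_one (hp : Odd p) (hw : 2 ^ (p - 1) ≡ 1 [MOD p ^ 2]) {r : ℕ}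
    {a b : ℤ} (ha : a.natAbs = 1) (h : (p ^ 2 : ℤ) ∣ (2 * a) ^ r - 2 * b) :
    b.natAbs ^ (p - 1) ≡ 1 [MOD p ^ 2] := by
  have heven : Even (p - 1) := hp.tsub_odd odd_one
  have ha' : a ^ (p - 1) = 1 := by
    rw [← heven.pow_abs, ← Int.natCast_natAbs, ha, Nat.cast_one, one_pow]
  have hw' : (2 ^ (p - 1) : ℤ) ≡ 1 [ZMOD p ^ 2] := by exact_mod_cast Int.natCast_modEq_iff.2 hw
  rw [← Int.natCast_modEq_iff]
  push_cast
  rw [heven.pow_abs]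
  calc
    b ^ (p - 1) ≡ 2 ^ (p - 1) * b ^ (p - 1) [ZMOD p ^ 2] := by
      simpa using (hw'.mul_right (b ^ (p - 1))).symm
    _ = (2 * b) ^ (p - 1) := (mul_pow ..).symm
    _ ≡ ((2 * a) ^ r) ^ (p - 1) [ZMOD p ^ 2] := (Int.modEq_iff_dvd.2 h).pow _
    _ = (2 ^ (p - 1)) ^ r := by rw [pow_right_comm, mul_pow, ha', mul_one]
    _ ≡ 1 [ZMOD p ^ 2] := by simpa using hw'.pow r

/-- The constant is chosen so that `500 ^ 3` exceeds the bound of `norm_le_of_star_pow_dvd`. -/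
theorem five_hundred_le_of_two_pow_modEq_one (hmod : p % 4 = 3)
    (hw : 2 ^ (p - 1) ≡ 1 [MOD p ^ 2]) : 500 ≤ p := by
  have h : ∀ p < 500, p % 4 = 3 → 2 ^ (p - 1) % p ^ 2 ≠ 1 % p ^ 2 := by decide +kernel
  by_contra! hlt
  exact h p hlt hmod hw

theorem exists_norm_dvd_two_mul_re_pow_sub (hp : p.Prime) (hmod : p % 4 = 3) {m : ℕ} (hm : Odd m)
    {d : ℤ} {x : ℤ√d} (hnorm : x.norm = p ^ m) (hodd : Odd x.re) (hpx : ¬ (p : ℤ) ∣ x.re) {r : ℕ}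
    (hr : Odd r) (habs : (x ^ r).re.natAbs = x.re.natAbs) :
    (x ^ r).re = x.re ∧
      ∃ l, r = 4 * l + 1 ∧ ∃ e : ℤ, (e = 1 ∨ e = -1) ∧ x.norm ∣ (2 * x.re) ^ l - e := by
  have hp' := Nat.prime_iff_prime_int.1 hp
  have hcop : IsCoprime x.norm (2 * x.re) := by
    rw [hnorm]
    refine (hp'.coprime_iff_not_dvd.2 fun h ↦ (hp'.dvd_or_dvd h).elim (fun h2 ↦ ?_) hpx).pow_left
    have := Int.le_of_dvd two_pos h2
    omega
  have hre : (x ^ r).re = x.re := by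
    refine (Int.natAbs_eq_natAbs_iff.1 habs).resolve_right fun hneg ↦ ?_
    have htrace := norm_dvd_two_mul_re_pow_pred_sub hcop hr.pos.ne'
      (hneg.trans (neg_one_mul _).symm)
    obtain ⟨t, rfl⟩ := hr
    refine not_dvd_sq_add_one hp hmod ((2 * x.re) ^ t) ?_
    rw [hnorm, Nat.add_sub_cancel, mul_comm 2 t, pow_mul, sub_neg_eq_add] at htrace
    exact (dvd_pow_self _ hm.pos.ne').trans htrace
  have hnorm4 : 4 ∣ x.norm + 1 := by
    have h := hm.add_dvd_pow_add_pow (p : ℤ) 1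
    rw [one_pow, ← hnorm] at h
    exact Dvd.dvd.trans (by omega) h
  obtain ⟨l, rfl⟩ : ∃ l, r = 4 * l + 1 :=
    ⟨r / 4, by have := mod_four_eq_one_of_re_pow_eq hr hodd hnorm4 hre; omega⟩
  have htrace := norm_dvd_two_mul_re_pow_pred_sub hcop hr.pos.ne' (hre.trans (one_mul _).symm)
  rw [hnorm, Nat.add_sub_cancel, mul_comm 4 l, pow_mul] at htrace
  rw [hnorm]
  refine ⟨hre, l, rfl, ?_⟩
  rcases pow_dvd_sub_one_or_add_one hp hmod htrace with h | h
  · exact ⟨1, Or.inl rfl, h⟩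
  · exact ⟨-1, Or.inr rfl, by rwa [sub_neg_eq_add]⟩

theorem natAbs_re_pow_ne (hp : p.Prime) (hmod : p % 4 = 3) (hp500 : 500 ≤ p) {m : ℕ} (hm : Odd m)
    (hm3 : 3 ≤ m) {d : ℤ} (hd : d < 0) {x : ℤ√d} (hnorm : x.norm = p ^ m) (hodd : Odd x.re)
    (hlt : x.re.natAbs < p) {r : ℕ} (hr : Odd r) (hr1 : r ≠ 1) :
    (x ^ r).re.natAbs ≠ x.re.natAbs := by
  intro habs
  have hp3 : p ^ 3 ≤ p ^ m := Nat.pow_le_pow_right hp.pos hm3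
  have hpx : ¬ (p : ℤ) ∣ x.re := by
    rw [Int.natCast_dvd]
    exact Nat.not_dvd_of_pos_of_lt (Int.natAbs_odd.2 hodd).pos hlt
  have hsq : (2 * x.re.natAbs) ^ 2 ≤ p ^ m := calc
    (2 * x.re.natAbs) ^ 2 ≤ (2 * p) ^ 2 := by gcongr
    _ = 4 * p ^ 2 := mul_pow ..
    _ ≤ p * p ^ 2 := by gcongr; omega
    _ = p ^ 3 := (pow_succ' p 2).symm
    _ ≤ p ^ m := hp3
  obtain ⟨hre, l, rfl, e, he, hdvd⟩ :=
    exists_norm_dvd_two_mul_re_pow_sub hp hmod hm hnorm hodd hpx hr habs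
  have hle : x.norm ≤ 2 ^ 26 := by
    refine norm_le_of_re_pow_eq hd (by omega) hre he hdvd ?_
    rw [hnorm, ← Int.natAbs_pow_two, Int.natAbs_mul]
    exact_mod_cast hsq
  have hlarge : 2 ^ 26 < p ^ m := calc
    2 ^ 26 < 500 ^ 3 := by norm_num
    _ ≤ p ^ 3 := by gcongr
    _ ≤ p ^ m := hp3
  rw [hnorm] at hle
  exact hle.not_gt (by exact_mod_cast hlarge)

end PrimesThreeModFour

theorem norm_eq_of_pow_eq {d a c N ε : ℤ} {r : ℕ} (hr : Odd r) (hfac : a ^ 2 - N ^ r = c ^ 2 * d)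
    (hε : ε.natAbs = 1) {x : ℤ√d} (hx : x ^ r = ε * ⟨a, c⟩) : x.norm = N := by
  refine hr.strictMono_pow.injective ?_
  have hε2 : ε * ε = 1 := Int.isUnit_mul_self (Int.isUnit_iff_natAbs_eq.2 hε)
  change x.norm ^ r = N ^ r
  rw [← zsqrtd_norm_pow, hx, Zsqrtd.norm_mul, Zsqrtd.norm_intCast, hε2, one_mul, Zsqrtd.norm_def]
  linear_combination hfac

theorem stmt_15_general {p q r n : ℕ} (hp : p.Prime) (hmod : p % 4 = 3)
    (hw : 2 ^ (p - 1) ≡ 1 [MOD p ^ 2]) (hq : q.Prime) (hqp : q < p)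
    (hqw : ¬ q ^ (p - 1) ≡ 1 [MOD p ^ 2]) (hn : Odd n) (hrn : r ∣ n) (hr1 : r ≠ 1) (hrn1 : r ≠ n)
    {d c : ℤ} (hfac : (q : ℤ) ^ 2 - p ^ n = c ^ 2 * d) {ε : ℤ} (hε : ε.natAbs = 1)
    (x : ℤ√d) : x ^ r ≠ ε * ⟨q, c⟩ := by
  intro hx
  obtain ⟨m, rfl⟩ := hrn
  obtain ⟨hr, hm⟩ := Nat.odd_mul.1 hn
  have hm3 : 3 ≤ m := by
    have hm1 : m ≠ 1 := by
      rintro rfl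
      exact hrn1 (mul_one r).symm
    have := Nat.odd_iff.1 hm
    omega
  have hp500 := five_hundred_le_of_two_pow_modEq_one hmod hw
  have hqodd : Odd q := hq.odd_of_ne_two fun h ↦ hqw (h ▸ hw)
  have hd : d < 0 := by
    have hqn : q ^ 2 < p ^ (r * m) := calc
      q ^ 2 < p ^ 2 := Nat.pow_lt_pow_left hqp two_ne_zero
      _ ≤ p ^ (r * m) := Nat.pow_le_pow_right hp.pos (by nlinarith [hr.pos])
    refine neg_of_mul_neg_right (hfac ▸ sub_neg.2 ?_) (sq_nonneg c)
    exact_mod_cast hqn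
  have hnorm : x.norm = p ^ m := norm_eq_of_pow_eq hr (by rw [← pow_mul', hfac]) hε hx
  have hre : (x ^ r).re.natAbs = q := by
    rw [hx, Zsqrtd.re_smul, Int.natAbs_mul, hε, one_mul, Int.natAbs_natCast]
  have hxre : x.re.natAbs ∣ q := hre ▸ Int.natAbs_dvd_natAbs.2 (re_dvd_re_pow x hr)
  rcases (Nat.dvd_prime hq).1 hxre with hre1 | hreq
  · have hdvd : (p ^ 2 : ℤ) ∣ (2 * x.re) ^ r - 2 * (x ^ r).re :=
      ((pow_dvd_pow _ (by omega : 2 ≤ m)).trans hnorm.symm.dvd).trans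
        (norm_dvd_two_mul_re_pow_sub x hr.pos.ne')
    exact hqw (hre ▸ natAbs_pow_sub_one_modEq_one (hp.odd_of_ne_two (by omega)) hw hre1 hdvd)
  · refine natAbs_re_pow_ne hp hmod hp500 hm hm3 hd hnorm ?_ (hreq.trans_lt hqp) hr hr1
      (hre.trans hreq.symm)
    rwa [← Int.natAbs_odd, hreq]

/-- Let `p` be a prime with `p ≡ 3 (mod 4)` and `2^(p−1) ≡ 1 (mod p^2)`, let `q1` be a prime
factor of `p − 2` such that `q1^(p−1) ≢ 1 (mod p^2)`, let `n` be an odd composite number,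
let `d0` be the squarefree part of `q1^2 − p^n` and `c` the positive integer with
`q1^2 − p^n = c^2·d0`. Then for any prime `p4` dividing `n`, there are no integers `u`, `v`
and sign `ε ∈ {1, −1}` such that `(u + v·√d0)^p4 = ε·(q1 + c·√d0)` in `ℤ[√d0]`. -/
theorem stmt_15 (p : ℕ) (hp : p.Prime) (hmod : p % 4 = 3)
    (hw : 2 ^ (p - 1) ≡ 1 [MOD p ^ 2])
    (q1 : ℕ) (hq1 : q1.Prime) (hq1dvd : q1 ∣ p - 2)
    (hq1nw : ¬ (q1 ^ (p - 1) ≡ 1 [MOD p ^ 2]))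
    (n : ℕ) (hodd : Odd n) (hcomp : 1 < n ∧ ¬ n.Prime)
    (d0 : ℤ) (hd0 : Squarefree d0) (c : ℤ) (hc : 0 < c)
    (hfac : (q1 : ℤ) ^ 2 - (p : ℤ) ^ n = c ^ 2 * d0)
    (p4 : ℕ) (hp4 : p4.Prime) (hdvd : p4 ∣ n) :
    ¬ ∃ (u v ε : ℤ), (ε = 1 ∨ ε = -1) ∧
      (⟨u, v⟩ : ℤ√d0) ^ p4 = (ε : ℤ√d0) * ⟨(q1 : ℤ), c⟩ := by
  have hq1p : q1 < p := (Nat.le_of_dvd (by omega) hq1dvd).trans_lt (by omega)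
  rintro ⟨u, v, ε, hε, hx⟩
  exact stmt_15_general hp hmod hw hq1 hq1p hq1nw hodd hdvd hp4.ne_one
    (fun h ↦ hcomp.2 (h ▸ hp4)) hfac (Int.natAbs_eq_iff.2 hε) ⟨u, v⟩ hx
end
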